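/- arXiv:1603.02863 — 2 statements merged into one kernel-verified Lean document; each statement's English description precedes it below -/
import Mathlib

section
/- (Construction-A lattice codes achieve AWGN capacity under MMSE lattice decoding, error-probability form.) Fix SNR > 1, a rational R ∈ (1/2, 1), γ ∈ (0,1), and λ > 1/(1+R). Let p : ℕ → ℕ be a sequence of primes with p(n)/n^λ → 1; restrict to n with n(1−R) ∈ ℕ and set m(n) = n(1−R). Let ℓ : ℕ → ℕ satisfy 0 < ℓ(n) < m(n) and (ℓ(n)·ln p(n))/n → (γ/2)·ln(1+SNR) (so the code rate (1/n)log₂ p^{ℓ(n)} converges to γ times the capacity ½log₂(1+SNR)). Set P(n) = p(n)^{2(1−R)}/(2πe), σ(n)² = P(n)/SNR, and α = SNR/(1+SNR). For each n, let H be a random m(n) × n matrix with independent entries uniform on 𝔽_{p(n)}, write H = (H'; H_f) with H' its first ℓ(n) rows and H_f its remaining rows, and let w be an independent random vector in ℝⁿ with i.i.d. N(0, σ(n)²) coordinates. For a syndrome s ∈ 𝔽_{p(n)}^{ℓ(n)}, let x_s be a (measurably chosen) minimum-norm element of {x ∈ ℤⁿ : H'x ≡ s and H_f x ≡ 0 (mod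 p(n))}, and define the decoding-failure event F(s) = {∃ z ∈ ℤⁿ : H_f z ≡ 0 (mod p(n)), z ≢ x_s (mod p(n)), and ‖α(x_s + w) − z‖ ≤ ‖α(x_s + w) − x_s‖}. Then for every sequence of syndromes s(n) ∈ 𝔽_{p(n)}^{ℓ(n)}, P(F(s(n))) → 0 as n → ∞. -/
/-!
Write `a = SNR`, `β = 1 / (1 + a) = 1 - α`. The error probability is averaged over the uniform
parity-check matrix `H`, and `p ^ m = √(2πeP) ^ n` is the exponential growth of the volume of the
ball of radius `√(nP)`. With a slack parameter `θ < 1` close to `1`, four contributions are bounded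
(`union_bound`, `finite_bound`).

* *No short code point.* The ball of radius `√(nP/θ)` meets exponentially more than `p ^ m` residue
  classes modulo `p`: its lattice points are counted from below by covering with unit cubes
  (`card_ball_ge`), and the number of points in a single class is bounded by a theta function
  (`tsum_ball_residue_le`). Syndromes of distinct classes are pairwise independent or mutually
  exclusive, so by the second moment method (`card_bad_mul_le`) almost every `H` gives some point of
  the ball the prescribed nonzero syndrome. The minimum-norm representative then lies in the ball.
* *Long effective noise.* `αw - βx` has squared length below `nPβ/θ²` up to probability `O(1/n)`, by
  Chebyshev (`effective_noise_tail`).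
* *Competitors linearly independent of `x` modulo `p`.* For a fixed pair, `H` sends `x` to the
  syndrome and `z` into the fine lattice with probability `p ^ (-m) p ^ (-(m - ℓ))`. The number of
  code points and the number of `z` near the channel output are bounded by theta functions
  (`tsum_ball_le`, `tsum_close_le`). In total this is an `n`-th power whose base tends to
  `(1 + a) ^ ((γ - 1) / 2) * θ ^ (-3 / 2)`, which is less than `1` for `θ` close to `1`.
* *Competitors proportional to `x` modulo `p`.* Membership of `z` in the fine lattice then
  follows from that of `x`, so only the factor `p ^ (-m)` is available. The Chernoff bound
  for the pair (`pair_error_le`), together with an exponential majorant of the indicator of the ball,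
  factorizes over the coordinates. For `z - x ≡ b x` with `b ≠ 0`, each factor is the theta series of
  a positive form `q / P` on the planar lattice `{(x, d) : d ≡ b x}`. Lattice vectors of squared
  length below `p` are multiples of a single vector, both of whose coordinates are nonzero
  (`short_vectors_collinear`), and `q ≥ μ₀ > 1/2` at such vectors (`form_int`); here `β < 1/2`,
  that is `SNR > 1`, is needed. The short vectors hence contribute at most `1 + √(πP/μ₀)`, less
  than `√(2πP)` by a constant factor, and the long ones are negligible because `P / p → 0`, that is
  `R > 1/2`. Geometric decay absorbs the sum over the `p - 1` values of `b`.

The zero syndrome is encoded by the origin, for which all nonzero residue classes of competitors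
are treated like the independent ones.
-/

open MeasureTheory ProbabilityTheory Filter

/-- Euclidean norm of an integer vector. -/
noncomputable def intNorm {n : ℕ} (x : Fin n → ℤ) : ℝ :=
  Real.sqrt (∑ i, ((x i : ℝ)) ^ 2)

/-- `x ∈ ℤⁿ` has syndrome `s` for the upper `ℓ` rows of `Hm` (`H'x ≡ s (mod p)`) and
syndrome `0` for the remaining rows (`H_f x ≡ 0 (mod p)`). -/
def hasSyndrome (p mdim ℓ n : ℕ) (s : Fin ℓ → ZMod p)
    (Hm : Matrix (Fin mdim) (Fin n) (ZMod p)) (x : Fin n → ℤ) : Prop :=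
  (∀ i : Fin mdim, ∀ hi : (i : ℕ) < ℓ,
      Hm.mulVec (fun j => ((x j : ℤ) : ZMod p)) i = s ⟨(i : ℕ), hi⟩) ∧
  (∀ i : Fin mdim, ℓ ≤ (i : ℕ) → Hm.mulVec (fun j => ((x j : ℤ) : ZMod p)) i = 0)

/-- `z ∈ ℤⁿ` belongs to the fine lattice `Λ_f = {z : H_f z ≡ 0 (mod p)}`, where `H_f`
consists of the rows of `Hm` of index `≥ ℓ`. -/
def inFineLattice (p mdim ℓ n : ℕ)
    (Hm : Matrix (Fin mdim) (Fin n) (ZMod p)) (z : Fin n → ℤ) : Prop :=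
  ∀ i : Fin mdim, ℓ ≤ (i : ℕ) → Hm.mulVec (fun j => ((z j : ℤ) : ZMod p)) i = 0

/-! ### Theta functions on the integers and on residue classes -/

lemma tsum_pi_prod {β : Type*} : ∀ {n : ℕ} (f : Fin n → β → ENNReal),
    ∑' x : Fin n → β, ∏ i, f i (x i) = ∏ i, ∑' k, f i k := by
  intro n
  induction n with
  | zero => intro f; simp
  | succ n ih =>
    intro f
    rw [← (Fin.consEquiv (fun _ : Fin (n + 1) => β)).tsum_eq, ENNReal.tsum_prod']
    simp only [Fin.consEquiv_apply, Fin.prod_univ_succ, Fin.cons_zero, Fin.cons_succ]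
    simp_rw [ENNReal.tsum_mul_left]
    rw [ih (fun i => f i.succ), ENNReal.tsum_mul_right]

lemma tsum_int_split (f : ℤ → ENNReal) :
    ∑' k : ℤ, f k = (f 0 + ∑' k : ℕ, f (k + 1)) + (f (-1) + ∑' k : ℕ, f (-(k + 1 + 1))) := by
  have h := HasSum.of_nat_of_neg_add_one (f := f)
    (ENNReal.summable (f := fun k : ℕ => f k)).hasSum
    (ENNReal.summable (f := fun k : ℕ => f (-(k + 1)))).hasSum
  rw [h.tsum_eq, tsum_eq_zero_add' (ENNReal.summable), tsum_eq_zero_add' (f := fun k : ℕ => f (-(k + 1))) (ENNReal.summable)]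
  simp

/-- A sequence of values of a unimodal function at unit spacing is, up to its largest term,
dominated by the minima over consecutive pairs. -/
lemma tsum_le_one_add_min (a : ℤ → ENNReal) (h1 : ∀ k, a k ≤ 1)
    (hr : ∀ k : ℤ, 0 ≤ k → a (k + 1) ≤ a k) (hl : ∀ k : ℤ, k + 1 < 0 → a k ≤ a (k + 1)) :
    ∑' k, a k ≤ 1 + ∑' k, min (a k) (a (k + 1)) := by
  have e1 : ∑' k : ℤ, min (a k) (a (k + 1)) =
      (∑' k : ℕ, a (k + 1)) + (min (a (-1)) (a 0) + ∑' k : ℕ, a (-(k + 1 + 1))) := by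
    have h := HasSum.of_nat_of_neg_add_one (f := fun k : ℤ => min (a k) (a (k + 1)))
      (ENNReal.summable (f := fun k : ℕ => _)).hasSum
      (ENNReal.summable (f := fun k : ℕ => _)).hasSum
    rw [h.tsum_eq, tsum_eq_zero_add' (f := fun k : ℕ => min (a (-(k + 1))) (a (-(k + 1) + 1)))
      (ENNReal.summable)]
    congr 1
    · refine tsum_congr fun k => min_eq_right (hr k (by positivity))
    · congr 1
      refine tsum_congr fun k => ?_
      rw [min_eq_left]
      · push_cast; rfl
      · have := hl (-(k + 1 + 1)) (by omega)
        push_cast; exact this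
  rw [tsum_int_split, e1]
  have : a 0 + a (-1) ≤ 1 + min (a (-1)) (a 0) := by
    rcases le_total (a 0) (a (-1)) with h | h
    · rw [min_eq_right h, add_comm]; gcongr; exact h1 _
    · rw [min_eq_left h]; gcongr; exact h1 _
  calc _ = (a 0 + a (-1)) + (∑' k : ℕ, a (k + 1) + ∑' k : ℕ, a (-(k + 1 + 1))) := by ring
    _ ≤ (1 + min (a (-1)) (a 0)) + (∑' k : ℕ, a (k + 1) + ∑' k : ℕ, a (-(k + 1 + 1))) := by gcongr
    _ = _ := by ring

/-- The periodized Gaussian is at most its peak plus its integral. -/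
lemma theta_le (t : ℝ) (ht : 0 < t) (y : ℝ) :
    ∑' k : ℤ, ENNReal.ofReal (Real.exp (-t * (y + k) ^ 2)) ≤
      ENNReal.ofReal (1 + √(Real.pi / t)) := by
  wlog hy : 0 ≤ y ∧ y < 1 generalizing y
  · have h := this (Int.fract y) ⟨Int.fract_nonneg y, Int.fract_lt_one y⟩
    refine le_trans (le_of_eq ?_) h
    rw [← (Equiv.subRight ⌊y⌋).tsum_eq]
    refine tsum_congr fun k => ?_
    rw [Int.fract]
    simp only [Equiv.subRight_apply]
    push_cast
    congr 4
    ring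
  obtain ⟨hy0, hy1⟩ := hy
  set f : ℝ → ENNReal := fun x => ENNReal.ofReal (Real.exp (-t * x ^ 2)) with hf
  have mono : ∀ a b : ℝ, a ^ 2 ≤ b ^ 2 → f b ≤ f a := fun a b hab =>
    ENNReal.ofReal_le_ofReal (Real.exp_le_exp.2 (by nlinarith))
  have hint : ∫⁻ x, f x = ENNReal.ofReal (√(Real.pi / t)) := by
    rw [← integral_gaussian, ofReal_integral_eq_lintegral_ofReal (integrable_exp_neg_mul_sq ht)
      (ae_of_all _ fun x => (Real.exp_pos _).le)]
  have hmin : ∑' k : ℤ, min (f (y + k)) (f (y + (k + 1 : ℤ))) ≤ ∫⁻ x, f x := by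
    rw [← setLIntegral_univ, ← iUnion_Ioc_add_intCast y,
      lintegral_iUnion (fun _ => measurableSet_Ioc) (Set.pairwise_disjoint_Ioc_add_intCast y)]
    refine ENNReal.tsum_le_tsum fun k => ?_
    calc min (f (y + k)) (f (y + (k + 1 : ℤ)))
        = ∫⁻ x in Set.Ioc (y + k) (y + k + 1), min (f (y + k)) (f (y + (k + 1 : ℤ))) := by
          simp
      _ ≤ _ := by
          refine setLIntegral_mono' measurableSet_Ioc fun x hx => ?_
          have h1 := hx.1
          have h2 := hx.2
          rcases le_total 0 x with h | h
          · refine (min_le_right _ _).trans (mono _ _ ?_)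
            push_cast
            nlinarith
          · refine (min_le_left _ _).trans (mono _ _ ?_)
            nlinarith
  rw [ENNReal.ofReal_add zero_le_one (Real.sqrt_nonneg _), ENNReal.ofReal_one, ← hint]
  refine (tsum_le_one_add_min (fun k : ℤ => f (y + k)) ?_ ?_ ?_).trans (add_le_add le_rfl hmin)
  · intro k
    rw [hf, ← ENNReal.ofReal_one]
    refine ENNReal.ofReal_le_ofReal (Real.exp_le_one_iff.2 ?_)
    nlinarith [sq_nonneg (y + k)]
  · intro k hk
    have hk' : (0 : ℝ) ≤ k := by exact_mod_cast hk
    refine mono _ _ ?_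
    push_cast
    nlinarith
  · intro k hk
    have hk' : (k : ℝ) + 1 ≤ -1 := by
      have : k + 1 ≤ -1 := by omega
      exact_mod_cast this
    refine mono _ _ ?_
    push_cast
    nlinarith

/-- The same bound along a residue class modulo `p`: the integral part shrinks by `p`. -/
lemma theta_residue_le (t : ℝ) (ht : 0 < t) (p : ℕ) (hp : 0 < p) (y : ZMod p) :
    ∑' j : ℤ, (if (j : ZMod p) = y then ENNReal.ofReal (Real.exp (-t * (j : ℝ) ^ 2)) else 0) ≤
      ENNReal.ofReal (1 + √(Real.pi / t) / p) := by
  have : NeZero p := ⟨hp.ne'⟩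
  have hp' : (0 : ℝ) < p := by exact_mod_cast hp
  obtain ⟨y0, rfl⟩ := ZMod.intCast_surjective y
  have hinj : Function.Injective (fun k : ℤ => y0 + p * k) := by
    intro a b hab
    have : (p : ℤ) * a = p * b := by simpa using hab
    exact mul_left_cancel₀ (by exact_mod_cast hp.ne') this
  rw [← hinj.tsum_eq]
  · have := theta_le (t * p ^ 2) (by positivity) (y0 / p)
    have e : √(Real.pi / (t * p ^ 2)) = √(Real.pi / t) / p := by
      rw [← div_div, Real.sqrt_div (by positivity), Real.sqrt_sq hp'.le]
    rw [e] at this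
    refine le_trans (le_of_eq (tsum_congr fun k => ?_)) this
    simp only [Int.cast_add, Int.cast_mul, Int.cast_natCast, CharP.cast_eq_zero, zero_mul, add_zero,
      if_true]
    congr 2
    field_simp
  · intro j hj
    have : (j : ZMod p) = y0 := by
      by_contra h
      simp [h] at hj
    have h2 := (ZMod.intCast_eq_intCast_iff_dvd_sub y0 j p).1 this.symm
    obtain ⟨k, hk⟩ := h2
    exact ⟨k, by simp only; omega⟩

/-! ### Counting parity-check matrices -/

lemma card_fiber_mul {G M : Type*} [AddGroup G] [Fintype G] [AddGroup M] [Fintype M]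
    [DecidableEq M] (f : G →+ M) (hf : Function.Surjective f) (a : M) :
    (Finset.univ.filter fun g => f g = a).card * Fintype.card M = Fintype.card G := by
  have h := Finset.card_eq_sum_card_fiberwise (f := f) (s := Finset.univ) (t := Finset.univ)
    (fun _ _ => Finset.mem_coe.2 (Finset.mem_univ _))
  rw [← Finset.card_univ (α := G), h, Finset.sum_congr rfl fun b _ =>
    AddMonoidHom.card_fiber_eq_of_mem_range f (hf b) (hf a)]
  simp [mul_comm]

section
variable {p n m : ℕ} [Fact p.Prime]

lemma card_row_one (x : Fin n → ZMod p) (hx : x ≠ 0) (a : ZMod p) :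
    (Finset.univ.filter fun r : Fin n → ZMod p => r ⬝ᵥ x = a).card * p = p ^ n := by
  obtain ⟨i, hi⟩ := Function.ne_iff.1 hx
  have h := card_fiber_mul (G := Fin n → ZMod p) (M := ZMod p)
    ⟨⟨fun r => r ⬝ᵥ x, by simp⟩, fun r s => by simp [add_dotProduct]⟩ ?_ a
  · simpa [ZMod.card] using h
  · intro b
    exact ⟨Pi.single i (b / x i), by simp [div_mul_cancel₀ b hi]⟩

/-- Two linear equations with linearly independent coefficient vectors `x`, `y` are solved by a
`p⁻²` fraction of the rows. -/
lemma card_row_two (x y : Fin n → ZMod p) (hx : x ≠ 0) (hxy : ∀ c : ZMod p, y ≠ c • x)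
    (a b : ZMod p) :
    (Finset.univ.filter fun r : Fin n → ZMod p => r ⬝ᵥ x = a ∧ r ⬝ᵥ y = b).card * (p * p)
      = p ^ n := by
  obtain ⟨i, hi⟩ := Function.ne_iff.1 hx
  obtain ⟨j, hj⟩ := Function.ne_iff.1 (hxy (y i / x i))
  simp only [Pi.zero_apply] at hi
  simp only [Pi.smul_apply, smul_eq_mul] at hj
  -- the 2 × 2 minor on columns `i`, `j` does not vanish
  have hd : y j * x i - y i * x j ≠ 0 := by
    intro h
    apply hj
    field_simp
    linear_combination h
  have h := card_fiber_mul (G := Fin n → ZMod p) (M := ZMod p × ZMod p)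
    ⟨⟨fun r => (r ⬝ᵥ x, r ⬝ᵥ y), by simp⟩, fun r s => by simp [add_dotProduct]⟩ ?_ (a, b)
  · simpa [ZMod.card] using h
  · rintro ⟨u, v⟩
    refine ⟨Pi.single i ((u * y j - v * x j) / (y j * x i - y i * x j)) +
      Pi.single j ((v * x i - u * y i) / (y j * x i - y i * x j)), ?_⟩
    simp only [AddMonoidHom.coe_mk, ZeroHom.coe_mk, add_dotProduct, single_dotProduct,
      Prod.mk.injEq]
    set d := y j * x i - y i * x j with hdd
    constructor
    · rw [div_mul_eq_mul_div, div_mul_eq_mul_div, ← add_div, div_eq_iff hd, hdd]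
      ring
    · rw [div_mul_eq_mul_div, div_mul_eq_mul_div, ← add_div, div_eq_iff hd, hdd]
      ring

open Classical in
/-- The rows of a uniform matrix are independent, so row-wise constraints multiply. -/
lemma card_matrix_rows (S : Fin m → Finset (Fin n → ZMod p)) (w : Fin m → ℕ)
    (h : ∀ i, (S i).card * w i = p ^ n) :
    (Finset.univ.filter fun H : Matrix (Fin m) (Fin n) (ZMod p) => ∀ i, H i ∈ S i).card
      * ∏ i, w i = p ^ (m * n) := by
  have e : (Finset.univ.filter fun H : Matrix (Fin m) (Fin n) (ZMod p) => ∀ i, H i ∈ S i).card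
      = (Fintype.piFinset S).card := by
    refine Finset.card_bij (fun H _ i => H i) ?_ ?_ ?_
    · intro H hH
      exact Fintype.mem_piFinset.2 (by simpa using hH)
    · intro H _ H' _ h
      exact h
    · intro f hf
      rw [Fintype.mem_piFinset] at hf
      exact ⟨Matrix.of f, Finset.mem_filter.2 ⟨Finset.mem_univ _, fun i => hf i⟩, rfl⟩
  rw [e, Fintype.card_piFinset, ← Finset.prod_mul_distrib, Finset.prod_congr rfl fun i _ => h i]
  simp [mul_comm m n, pow_mul]

lemma prod_rows (ℓ : ℕ) (q : ℕ) :
    ∏ i : Fin m, (if ℓ ≤ (i : ℕ) then q else 1) = q ^ (m - ℓ) := by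
  rw [Fin.prod_univ_eq_prod_range (fun i => if ℓ ≤ i then q else 1) m, Finset.prod_ite]
  simp only [Finset.prod_const, one_pow, mul_one]
  congr 1
  have : (Finset.range m).filter (fun i => ℓ ≤ i) = Finset.Ico ℓ m := by
    ext i; simp; tauto
  rw [this, Nat.card_Ico]

lemma mulVec_row (H : Matrix (Fin m) (Fin n) (ZMod p)) (y : Fin n → ZMod p) (i : Fin m) :
    H.mulVec y i = H i ⬝ᵥ y := rfl

lemma card_syndrome (x : Fin n → ZMod p) (hx : x ≠ 0) (a : Fin m → ZMod p) :
    (Finset.univ.filter fun H : Matrix (Fin m) (Fin n) (ZMod p) => H.mulVec x = a).card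
      * p ^ m = p ^ (m * n) := by
  have h := card_matrix_rows (fun i => Finset.univ.filter fun r => r ⬝ᵥ x = a i) (fun _ => p)
    (fun i => card_row_one x hx (a i))
  simpa [funext_iff, Matrix.mulVec] using h

lemma card_syndrome_two (x y : Fin n → ZMod p) (hx : x ≠ 0) (hxy : ∀ c : ZMod p, y ≠ c • x)
    (a b : Fin m → ZMod p) :
    (Finset.univ.filter fun H : Matrix (Fin m) (Fin n) (ZMod p) =>
      H.mulVec x = a ∧ H.mulVec y = b).card * (p ^ m * p ^ m) = p ^ (m * n) := by
  have h := card_matrix_rows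
    (fun i => Finset.univ.filter fun r => r ⬝ᵥ x = a i ∧ r ⬝ᵥ y = b i) (fun _ => p * p)
    (fun i => card_row_two x y hx hxy (a i) (b i))
  simpa [funext_iff, mulVec_row, forall_and, mul_pow] using h

/-- For `x` and `y` linearly independent modulo `p`, prescribing the full syndrome of `x` and the
fine syndrome of `y` are independent events. -/
lemma card_syndrome_fine (ℓ : ℕ) (x y : Fin n → ZMod p) (hx : x ≠ 0)
    (hxy : ∀ c : ZMod p, y ≠ c • x) (a : Fin m → ZMod p) :
    (Finset.univ.filter fun H : Matrix (Fin m) (Fin n) (ZMod p) =>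
      H.mulVec x = a ∧ ∀ i : Fin m, ℓ ≤ (i : ℕ) → H.mulVec y i = 0).card
      * (p ^ m * p ^ (m - ℓ)) = p ^ (m * n) := by
  have h := card_matrix_rows
    (fun i : Fin m => Finset.univ.filter fun r =>
      r ⬝ᵥ x = a i ∧ (ℓ ≤ (i : ℕ) → r ⬝ᵥ y = 0))
    (fun i => p * (if ℓ ≤ (i : ℕ) then p else 1)) ?_
  · simpa [funext_iff, mulVec_row, forall_and, -mul_ite, -mul_one, Finset.prod_mul_distrib, prod_rows ℓ] using h
  · intro i
    by_cases hi : ℓ ≤ (i : ℕ)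
    · simpa [hi] using card_row_two x y hx hxy (a i) 0
    · simpa [hi] using card_row_one x hx (a i)

lemma card_fine (ℓ : ℕ) (y : Fin n → ZMod p) (hy : y ≠ 0) :
    (Finset.univ.filter fun H : Matrix (Fin m) (Fin n) (ZMod p) =>
      ∀ i : Fin m, ℓ ≤ (i : ℕ) → H.mulVec y i = 0).card
      * p ^ (m - ℓ) = p ^ (m * n) := by
  have h := card_matrix_rows
    (fun i : Fin m => Finset.univ.filter fun r : Fin n → ZMod p =>
      (ℓ ≤ (i : ℕ) → r ⬝ᵥ y = 0))
    (fun i => (if ℓ ≤ (i : ℕ) then p else 1)) ?_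
  · rw [prod_rows ℓ] at h
    rw [← h]
    congr 2
    ext H
    classical
    refine Finset.mem_filter.trans (Iff.trans ?_ Finset.mem_filter.symm)
    simp [mulVec_row]
  · intro i
    by_cases hi : ℓ ≤ (i : ℕ)
    · simpa [hi] using card_row_one y hy 0
    · simp [hi]

/-- Second moment method: the events `H y = t`, `y ∈ A`, with `t ≠ 0`, are pairwise independent
(linearly independent vectors) or mutually exclusive (proportional vectors), so all of them fail for
at most a `p ^ m / |A|` fraction of the matrices. -/
lemma card_bad_mul_le (A : Finset (Fin n → ZMod p)) (hA : ∀ y ∈ A, y ≠ 0)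
    (t : Fin m → ZMod p) (ht : t ≠ 0) :
    ((Finset.univ.filter fun H : Matrix (Fin m) (Fin n) (ZMod p) =>
      ∀ y ∈ A, H.mulVec y ≠ t).card : ℝ) * A.card ≤ (p : ℝ) ^ (m * n) * p ^ m := by
  classical
  have hp : (0 : ℝ) < p := by exact_mod_cast (Fact.out : p.Prime).pos
  set B := Finset.univ.filter fun H : Matrix (Fin m) (Fin n) (ZMod p) => ∀ y ∈ A, H.mulVec y ≠ t
    with hB
  set q : ℝ := (p : ℝ) ^ m with hq
  set N : ℝ := (p : ℝ) ^ (m * n) with hN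
  have hq0 : 0 < q := by positivity
  have hN0 : 0 < N := by positivity
  set X : (Fin n → ZMod p) → Matrix (Fin m) (Fin n) (ZMod p) → ℝ :=
    fun y H => if H.mulVec y = t then 1 else 0 with hX
  have m1 : ∀ y ∈ A, ∑ H, X y H = N / q := by
    intro y hy
    have := card_syndrome (m := m) y (hA y hy) t
    rw [eq_div_iff hq0.ne', hX]
    simp only [Finset.sum_boole]
    rw [hq, hN]
    exact_mod_cast this
  have m2 : ∀ y ∈ A, ∀ z ∈ A, ∑ H, X y H * X z H ≤ N / q ^ 2 + if y = z then N / q else 0 := by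
    intro y hy z hz
    have e : ∀ H, X y H * X z H = if H.mulVec y = t ∧ H.mulVec z = t then 1 else 0 := by
      intro H
      simp only [hX]
      by_cases h1 : H.mulVec y = t <;> by_cases h2 : H.mulVec z = t <;> simp [h1, h2]
    by_cases hyz : y = z
    · subst hyz
      have e2 : ∀ H, X y H * X y H = X y H := by
        intro H; simp only [hX]; split_ifs <;> simp
      simp only [e2, m1 y hy, if_true]
      have : 0 ≤ N / q ^ 2 := by positivity
      linarith
    · simp only [hyz, if_false, add_zero, e, Finset.sum_boole]
      by_cases hc : ∀ c : ZMod p, z ≠ c • y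
      · have := card_syndrome_two (m := m) y z (hA y hy) hc t t
        rw [le_div_iff₀ (by positivity), sq, hq, hN]
        exact_mod_cast this.le
      · push Not at hc
        obtain ⟨c, rfl⟩ := hc
        rw [Finset.filter_false_of_mem]
        · simp; positivity
        · rintro H - ⟨h1, h2⟩
          rw [Matrix.mulVec_smul, h1] at h2
          obtain ⟨i, hi⟩ := Function.ne_iff.1 ht
          have h3 := congrFun h2 i
          simp only [Pi.smul_apply, smul_eq_mul] at h3
          have : c = 1 := mul_right_cancel₀ hi (by rw [h3, one_mul])
          exact hyz (by simp [this])
  set E : ℝ := A.card / q with hE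
  have hE0 : 0 ≤ E := by positivity
  have s1 : ∑ H, ∑ y ∈ A, X y H = N * E := by
    rw [Finset.sum_comm, Finset.sum_congr rfl m1]
    simp [hE]; ring
  have s2 : ∑ H, (∑ y ∈ A, X y H) ^ 2 ≤ N * E ^ 2 + N * E := by
    calc ∑ H, (∑ y ∈ A, X y H) ^ 2 = ∑ y ∈ A, ∑ z ∈ A, ∑ H, X y H * X z H := by
          simp_rw [sq, Finset.sum_mul_sum]
          rw [Finset.sum_comm]
          refine Finset.sum_congr rfl fun y _ => Finset.sum_comm
      _ ≤ ∑ y ∈ A, ∑ z ∈ A, (N / q ^ 2 + if y = z then N / q else 0) :=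
          Finset.sum_le_sum fun y hy => Finset.sum_le_sum fun z hz => m2 y hy z hz
      _ = N * E ^ 2 + N * E := by
          simp only [Finset.sum_add_distrib, Finset.sum_const, Finset.sum_ite_eq]
          rw [Finset.sum_congr rfl (g := fun _ => N / q) (fun y hy => by simp [hy])]
          simp [hE]
          field_simp
  -- the variance of the number of solutions is at most its mean `E`
  have s3 : ∑ H, (∑ y ∈ A, X y H - E) ^ 2 ≤ N * E := by
    have : ∑ H, (∑ y ∈ A, X y H - E) ^ 2 =
        ∑ H, (∑ y ∈ A, X y H) ^ 2 - 2 * E * ∑ H, ∑ y ∈ A, X y H + N * E ^ 2 := by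
      rw [Finset.mul_sum, ← Finset.sum_sub_distrib]
      have hcard : N * E ^ 2 = ∑ _H : Matrix (Fin m) (Fin n) (ZMod p), E ^ 2 := by
        simp only [Finset.sum_const, nsmul_eq_mul, Finset.card_univ]
        congr 1
        rw [show Fintype.card (Matrix (Fin m) (Fin n) (ZMod p)) = p ^ (m * n) by
          change Fintype.card (Fin m → Fin n → ZMod p) = _; simp [ZMod.card, mul_comm m n, pow_mul], hN]
        push_cast; rfl
      rw [hcard, ← Finset.sum_add_distrib]
      refine Finset.sum_congr rfl fun H _ => by ring
    rw [this, s1]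
    nlinarith
  have s4 : (B.card : ℝ) * E ^ 2 ≤ N * E := by
    refine le_trans ?_ s3
    calc (B.card : ℝ) * E ^ 2 = ∑ H ∈ B, (∑ y ∈ A, X y H - E) ^ 2 := by
          rw [Finset.sum_congr rfl (g := fun _ => E ^ 2)]
          · simp
          · intro H hH
            rw [hB, Finset.mem_filter] at hH
            rw [Finset.sum_eq_zero (fun y hy => by simp [hX, hH.2 y hy])]
            ring
      _ ≤ _ := Finset.sum_le_sum_of_subset_of_nonneg (Finset.subset_univ _)
          fun _ _ _ => sq_nonneg _
  rcases hE0.eq_or_lt with h0 | h0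
  · have : (A.card : ℝ) = 0 := by
      rw [hE] at h0
      field_simp at h0
      linarith
    rw [this]; simp; positivity
  · have : (B.card : ℝ) * E ≤ N := by nlinarith
    rw [hE] at this
    have h5 : (B.card : ℝ) * A.card = (B.card * (A.card / q)) * q := by field_simp
    rw [h5]
    exact mul_le_mul_of_nonneg_right this hq0.le
end

/-! ### Gaussian noise -/

/-- Exponential moments of a product Gaussian measure, coordinate by coordinate. -/
lemma lintegral_exp_pi_gaussian {n : ℕ} (v : NNReal) (c b : Fin n → ℝ) :
    ∫⁻ w, ∏ i, ENNReal.ofReal (Real.exp (c i + b i * w i))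
        ∂(Measure.pi fun _ : Fin n => gaussianReal 0 v) =
      ∏ i, ENNReal.ofReal (Real.exp (c i + v * b i ^ 2 / 2)) := by
  have hint : ∀ i, Integrable (fun x : ℝ => Real.exp (c i + b i * x)) (gaussianReal 0 v) := by
    intro i
    simp_rw [Real.exp_add]
    exact (integrable_exp_mul_gaussianReal (b i)).const_mul _
  have e1 : ∀ w : Fin n → ℝ, ∏ i, ENNReal.ofReal (Real.exp (c i + b i * w i)) =
      ENNReal.ofReal (∏ i, Real.exp (c i + b i * w i)) := fun w =>
    (ENNReal.ofReal_prod_of_nonneg fun i _ => (Real.exp_pos _).le).symm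
  simp_rw [e1]
  rw [← ofReal_integral_eq_lintegral_ofReal (Integrable.fintype_prod hint)
      (Eventually.of_forall fun w => Finset.prod_nonneg fun i _ => (Real.exp_pos _).le),
    integral_fintype_prod_eq_prod (fun i (x : ℝ) => Real.exp (c i + b i * x)),
    ENNReal.ofReal_prod_of_nonneg fun i _ => integral_nonneg fun x => (Real.exp_pos _).le]
  refine Finset.prod_congr rfl fun i _ => ?_
  congr 1
  simp_rw [Real.exp_add]
  rw [integral_const_mul]
  congr 1
  have h := congrFun (mgf_fun_id_gaussianReal (μ := 0) (v := v)) (b i)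
  rw [mgf] at h
  rw [h]; simp

/-- Chernoff bound for the event that `z` beats `x`: the difference of the two squared
distances is an affine function of the noise. -/
lemma pair_error_le {n : ℕ} (v : NNReal) (α τ : ℝ) (hτ : 0 ≤ τ) (x z : Fin n → ℝ) :
    (Measure.pi fun _ : Fin n => gaussianReal 0 v)
      {w | ∑ i, (α * (x i + w i) - z i) ^ 2 ≤ ∑ i, (α * (x i + w i) - x i) ^ 2} ≤
    ∏ i, ENNReal.ofReal (Real.exp (-τ * ((z i - x i) ^ 2 + 2 * (1 - α) * x i * (z i - x i))
      + 2 * τ ^ 2 * α ^ 2 * v * (z i - x i) ^ 2)) := by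
  set μ := (Measure.pi fun _ : Fin n => gaussianReal 0 v)
  set c : Fin n → ℝ := fun i => -τ * ((z i - x i) ^ 2 + 2 * (1 - α) * x i * (z i - x i))
  set b : Fin n → ℝ := fun i => 2 * τ * α * (z i - x i)
  have hc : ∀ w : Fin n → ℝ, ∑ i, (c i + b i * w i) =
      τ * (∑ i, (α * (x i + w i) - x i) ^ 2 - ∑ i, (α * (x i + w i) - z i) ^ 2) := by
    intro w
    rw [← Finset.sum_sub_distrib, Finset.mul_sum]
    refine Finset.sum_congr rfl fun i _ => ?_
    simp only [c, b]; ring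
  calc _ ≤ ∫⁻ w, ∏ i, ENNReal.ofReal (Real.exp (c i + b i * w i)) ∂μ := by
        have hf : AEMeasurable (fun w : Fin n → ℝ =>
            ∏ i, ENNReal.ofReal (Real.exp (c i + b i * w i))) μ :=
          (Finset.measurable_prod _ fun i _ => by fun_prop).aemeasurable
        refine (measure_mono ?_).trans
          ((meas_ge_le_lintegral_div hf one_ne_zero ENNReal.one_ne_top).trans_eq (by simp))
        · intro w hw
          simp only [Set.mem_ofPred_eq] at hw ⊢
          rw [← ENNReal.ofReal_prod_of_nonneg fun i _ => (Real.exp_pos _).le, ← Real.exp_sum,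
            hc w, ENNReal.one_le_ofReal, Real.one_le_exp_iff]
          exact mul_nonneg hτ (sub_nonneg.2 hw)
    _ = _ := by
        rw [lintegral_exp_pi_gaussian]
        refine Finset.prod_congr rfl fun i _ => ?_
        congr 2
        simp only [c, b]; ring

lemma gaussian_memLp (v : NNReal) (q : NNReal) : MemLp (fun w : ℝ => w) q (gaussianReal 0 v) := by
  simpa [Function.id_def] using memLp_id_gaussianReal' (μ := 0) (v := v) q (by simp)

lemma gaussian_integrable_pow (v : NNReal) (k : ℕ) :
    Integrable (fun w : ℝ => w ^ k) (gaussianReal 0 v) := by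
  rcases Nat.eq_zero_or_pos k with rfl | hk
  · simp
  have h := (gaussian_memLp v k).integrable_norm_pow (by omega)
  refine h.mono' (by fun_prop) (Eventually.of_forall fun w => ?_)
  simp

lemma gaussian_integral_sq (v : NNReal) : ∫ w, w ^ 2 ∂(gaussianReal 0 v) = v := by
  have h := variance_fun_id_gaussianReal (μ := 0) (v := v)
  rw [variance_of_integral_eq_zero (by fun_prop) (by simp)] at h
  simpa using h

/-- Reduction of the variance of `w ^ 2` to the standard Gaussian by scaling; the value of the
remaining constant is irrelevant. -/
lemma gaussian_integral_fourth (v : NNReal) :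
    ∫ w, (w ^ 2 - v) ^ 2 ∂(gaussianReal 0 v) =
      v ^ 2 * ∫ w, (w ^ 2 - 1) ^ 2 ∂(gaussianReal 0 1) := by
  have h := gaussianReal_map_const_mul (μ := 0) (v := 1) (√(v : ℝ))
  have e : NNReal.mk (√(v : ℝ) ^ 2) (sq_nonneg _) * 1 = v := by
    ext; simp
  rw [e, mul_zero] at h
  rw [← h, integral_map (by fun_prop) (by fun_prop), ← integral_const_mul]
  refine integral_congr_ae (Eventually.of_forall fun w => ?_)
  have hs : √(v : ℝ) ^ 2 = v := Real.sq_sqrt v.2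
  simp only [mul_pow, hs]
  ring

/-- Chebyshev's inequality for the squared length of the effective noise `α w - β x`. -/
lemma effective_noise_tail : ∃ K : ℝ, 0 ≤ K ∧ ∀ (n : ℕ) (v : NNReal) (α β g : ℝ)
    (x : Fin n → ℝ), 0 < g →
    (Measure.pi fun _ : Fin n => gaussianReal 0 v)
      {w | n * (α ^ 2 * v) + β ^ 2 * ∑ i, x i ^ 2 + g ≤ ∑ i, (α * w i - β * x i) ^ 2} ≤
    ENNReal.ofReal ((2 * α ^ 4 * K * v ^ 2 * n + 8 * α ^ 2 * β ^ 2 * v * ∑ i, x i ^ 2) / g ^ 2) := by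
  refine ⟨∫ w, (w ^ 2 - 1) ^ 2 ∂(gaussianReal 0 1), integral_nonneg fun w => sq_nonneg _, ?_⟩
  intro n v α β g x hg
  set K := ∫ w, (w ^ 2 - 1) ^ 2 ∂(gaussianReal 0 1)
  set X : Fin n → ℝ → ℝ := fun i w => (α * w - β * x i) ^ 2
  have i1 := gaussian_integrable_pow v 1
  have i2 := gaussian_integrable_pow v 2
  have i3 := gaussian_integrable_pow v 3
  have i4 := gaussian_integrable_pow v 4
  simp only [pow_one] at i1
  have hL : ∀ i, MemLp (X i) 2 (gaussianReal 0 v) := by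
    intro i
    rw [memLp_two_iff_integrable_sq (by fun_prop)]
    have : (fun w => X i w ^ 2) = fun w : ℝ => α ^ 4 * w ^ 4 + (-4 * α ^ 3 * (β * x i)) * w ^ 3
        + 6 * α ^ 2 * (β * x i) ^ 2 * w ^ 2 + (-4 * α * (β * x i) ^ 3) * w + (β * x i) ^ 4 := by
      funext w; simp only [X]; ring
    rw [this]
    exact ((((i4.const_mul _).add (i3.const_mul _)).add (i2.const_mul _)).add
      (i1.const_mul _)).add (integrable_const _)
  have hmean : ∀ i, ∫ w, X i w ∂(gaussianReal 0 v) = α ^ 2 * v + β ^ 2 * x i ^ 2 := by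
    intro i
    have : (fun w => X i w) = fun w : ℝ => α ^ 2 * w ^ 2 + (-2 * α * (β * x i)) * w + (β * x i) ^ 2 := by
      funext w; simp only [X]; ring
    have ia : Integrable (fun w : ℝ => α ^ 2 * w ^ 2 + (-2 * α * (β * x i)) * w)
        (gaussianReal 0 v) := (i2.const_mul _).add (i1.const_mul _)
    rw [this, integral_add ia (integrable_const _),
      integral_add (i2.const_mul _) (i1.const_mul _), integral_const_mul, integral_const_mul,
      gaussian_integral_sq]
    simp; ring
  have hvar : ∀ i, Var[X i; gaussianReal 0 v] ≤
      2 * α ^ 4 * K * v ^ 2 + 8 * α ^ 2 * β ^ 2 * v * x i ^ 2 := by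
    intro i
    rw [variance_eq_integral (by fun_prop), hmean]
    have hi : Integrable (fun w : ℝ => (w ^ 2 - v) ^ 2) (gaussianReal 0 v) := by
      have : (fun w : ℝ => (w ^ 2 - v) ^ 2) = fun w => w ^ 4 + (-2 * (v : ℝ)) * w ^ 2 + v ^ 2 := by
        funext w; ring
      rw [this]
      exact (i4.add (i2.const_mul _)).add (integrable_const _)
    calc _ ≤ ∫ w, (2 * α ^ 4 * (w ^ 2 - v) ^ 2 + 8 * α ^ 2 * β ^ 2 * x i ^ 2 * w ^ 2)
          ∂(gaussianReal 0 v) := by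
          refine integral_mono_of_nonneg (Eventually.of_forall fun w => sq_nonneg _)
            ((hi.const_mul _).add (i2.const_mul _)) (Eventually.of_forall fun w => ?_)
          simp only [X]
          nlinarith [sq_nonneg (α ^ 2 * (w ^ 2 - v) + 2 * α * β * x i * w)]
      _ = _ := by
          rw [integral_add (hi.const_mul _) (i2.const_mul _), integral_const_mul,
            integral_const_mul, gaussian_integral_sq, gaussian_integral_fourth]
          ring
  have hLs : MemLp (∑ i, fun w : Fin n → ℝ => X i (w i)) 2
      (Measure.pi fun _ : Fin n => gaussianReal 0 v) := by
    refine memLp_finsetSum' _ fun i _ => ?_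
    exact (hL i).comp_measurePreserving (measurePreserving_eval _ i)
  have hE : ∫ w, (∑ i, fun w : Fin n → ℝ => X i (w i)) w
      ∂(Measure.pi fun _ : Fin n => gaussianReal 0 v) =
      n * (α ^ 2 * v) + β ^ 2 * ∑ i, x i ^ 2 := by
    simp only [Finset.sum_apply]
    rw [integral_finsetSum]
    · have : ∀ i, ∫ w, X i (w i) ∂(Measure.pi fun _ : Fin n => gaussianReal 0 v)
          = α ^ 2 * v + β ^ 2 * x i ^ 2 := by
        intro i
        rw [← hmean i]
        exact integral_comp_eval (μ := fun _ : Fin n => gaussianReal 0 v) (i := i)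
          (hL i).aestronglyMeasurable
      simp_rw [this]
      rw [Finset.sum_add_distrib, Finset.mul_sum]; simp
    · intro i _
      exact ((hL i).comp_measurePreserving (measurePreserving_eval _ i)).integrable (by norm_num)
  have h := meas_ge_le_variance_div_sq hLs hg
  rw [hE] at h
  refine (measure_mono ?_).trans (h.trans (ENNReal.ofReal_le_ofReal ?_))
  · intro w hw
    simp only [Set.mem_ofPred_eq, Finset.sum_apply] at hw ⊢
    refine le_trans ?_ (le_abs_self _)
    simp only [X]; linarith
  · gcongr
    rw [variance_sum_pi hL]
    refine (Finset.sum_le_sum fun i _ => hvar i).trans (le_of_eq ?_)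
    rw [Finset.sum_add_distrib, Finset.mul_sum, Finset.sum_const, Finset.card_univ,
      Fintype.card_fin, nsmul_eq_mul]
    congr 1; ring

/-! ### Lattice points in balls -/

/-- Number of integer points in a Euclidean ball with arbitrary centre, through the exponential
majorant of the indicator and the one-dimensional theta function. -/
lemma tsum_ball_le {n : ℕ} (t : ℝ) (ht : 0 < t) (B : ℝ) (u : Fin n → ℝ) :
    ∑' z : Fin n → ℤ, (if ∑ i, (u i - z i) ^ 2 ≤ B then (1 : ENNReal) else 0) ≤
      ENNReal.ofReal (Real.exp (t * B) * (1 + √(Real.pi / t)) ^ n) := by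
  calc _ ≤ ∑' z : Fin n → ℤ, ENNReal.ofReal (Real.exp (t * B)) *
        ∏ i, ENNReal.ofReal (Real.exp (-t * (-u i + z i) ^ 2)) := by
        refine ENNReal.tsum_le_tsum fun z => ?_
        split_ifs with h
        · rw [← ENNReal.ofReal_prod_of_nonneg fun i _ => (Real.exp_pos _).le, ← Real.exp_sum,
            ← ENNReal.ofReal_mul (Real.exp_pos _).le, ← Real.exp_add, ENNReal.one_le_ofReal,
            Real.one_le_exp_iff, ← Finset.mul_sum]
          have e : ∑ i, (-u i + (z i : ℝ)) ^ 2 = ∑ i, (u i - z i) ^ 2 :=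
            Finset.sum_congr rfl fun i _ => by ring
          rw [e]
          nlinarith
        · exact zero_le
    _ ≤ _ := by
        rw [ENNReal.tsum_mul_left,
          tsum_pi_prod fun i (k : ℤ) => ENNReal.ofReal (Real.exp (-t * (-u i + k) ^ 2)),
          ENNReal.ofReal_mul (Real.exp_pos _).le, ENNReal.ofReal_pow (by positivity)]
        gcongr
        refine (Finset.prod_le_prod' fun i _ => theta_le t ht _).trans_eq ?_
        simp

/-- Number of integer points of a centred ball in a prescribed residue class modulo `p`. -/
lemma tsum_ball_residue_le {n : ℕ} (p : ℕ) (hp : 0 < p) (t : ℝ) (ht : 0 < t) (B : ℝ)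
    (y : Fin n → ZMod p) :
    ∑' z : Fin n → ℤ, (if ∑ i, (z i : ℝ) ^ 2 ≤ B ∧ (fun i => (z i : ZMod p)) = y
        then (1 : ENNReal) else 0) ≤
      ENNReal.ofReal (Real.exp (t * B) * (1 + √(Real.pi / t) / p) ^ n) := by
  calc _ ≤ ∑' z : Fin n → ℤ, ENNReal.ofReal (Real.exp (t * B)) *
        ∏ i, (if (z i : ZMod p) = y i then ENNReal.ofReal (Real.exp (-t * (z i : ℝ) ^ 2)) else 0) := by
        refine ENNReal.tsum_le_tsum fun z => ?_
        split_ifs with h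
        · obtain ⟨h1, h2⟩ := h
          have : ∀ i, (z i : ZMod p) = y i := fun i => congrFun h2 i
          simp only [this, if_true]
          rw [← ENNReal.ofReal_prod_of_nonneg fun i _ => (Real.exp_pos _).le, ← Real.exp_sum,
            ← ENNReal.ofReal_mul (Real.exp_pos _).le, ← Real.exp_add, ENNReal.one_le_ofReal,
            Real.one_le_exp_iff, ← Finset.mul_sum]
          nlinarith
        · exact zero_le
    _ ≤ _ := by
        rw [ENNReal.tsum_mul_left,
          tsum_pi_prod fun i (k : ℤ) => if (k : ZMod p) = y i then
            ENNReal.ofReal (Real.exp (-t * (k : ℝ) ^ 2)) else 0,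
          ENNReal.ofReal_mul (Real.exp_pos _).le, ENNReal.ofReal_pow (by positivity)]
        gcongr
        refine (Finset.prod_le_prod' fun i _ => theta_residue_le t ht p hp _).trans_eq ?_
        simp

lemma int_ball_finite (n : ℕ) (B : ℝ) : {x : Fin n → ℤ | ∑ i, (x i : ℝ) ^ 2 ≤ B}.Finite := by
  refine (Set.Finite.pi' (t := fun _ : Fin n => Set.Icc (-⌈B⌉) ⌈B⌉)
    fun _ => Set.finite_Icc _ _).subset ?_
  intro x hx i
  have h1 : (x i : ℝ) ^ 2 ≤ B :=
    (Finset.single_le_sum (f := fun i => (x i : ℝ) ^ 2) (fun i _ => sq_nonneg _)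
      (Finset.mem_univ i)).trans hx
  have h2 : x i ^ 2 ≤ ⌈B⌉ := by exact_mod_cast h1.trans (Int.le_ceil B)
  rw [Set.mem_Icc]
  constructor <;> nlinarith [sq_nonneg (x i), sq_nonneg (x i - 1), sq_nonneg (x i + 1),
    Int.le_self_sq (x i), Int.le_self_sq (-x i)]

/-- The unit cubes centred at the integer points of norm at most `r + √n / 2` cover the ball of
radius `r`. -/
lemma volume_ball_le_card {n : ℕ} (r : ℝ) (hr : 0 ≤ r) :
    volume (Metric.closedBall (0 : EuclideanSpace ℝ (Fin n)) r) ≤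
      ((int_ball_finite n ((r + √n / 2) ^ 2)).toFinset.card : ENNReal) := by
  set X := (int_ball_finite n ((r + √n / 2) ^ 2)).toFinset with hX
  have hcover : Metric.closedBall (0 : EuclideanSpace ℝ (Fin n)) r ⊆
      ⋃ x ∈ X, (fun y : EuclideanSpace ℝ (Fin n) => (y.ofLp : Fin n → ℝ)) ⁻¹'
        (Set.Icc (fun i => (x i : ℝ) - 1 / 2) (fun i => (x i : ℝ) + 1 / 2)) := by
    intro y hy
    simp only [Set.mem_iUnion, Set.mem_preimage, exists_prop]
    refine ⟨fun i => round (y i), ?_, ?_⟩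
    · simp only [hX, Set.Finite.mem_toFinset, Set.mem_ofPred_eq]
      set z : EuclideanSpace ℝ (Fin n) := WithLp.toLp 2 fun i => (round (y i) : ℝ)
      have h1 : ‖z - y‖ ≤ √n / 2 := by
        rw [EuclideanSpace.norm_eq]
        refine Real.sqrt_le_iff.2 ⟨by positivity, ?_⟩
        calc _ ≤ ∑ i : Fin n, (1 / 4 : ℝ) := by
              refine Finset.sum_le_sum fun i _ => ?_
              have := abs_sub_round (y i)
              simp only [z, PiLp.sub_apply, Real.norm_eq_abs]
              rw [abs_sub_comm]
              nlinarith [abs_nonneg (y i - round (y i))]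
          _ = (√n / 2) ^ 2 := by
              rw [div_pow, Real.sq_sqrt (by positivity)]; simp; ring
      have h2 : ‖z‖ ≤ r + √n / 2 := by
        have h3 : ‖y‖ ≤ r := by simpa using hy
        calc ‖z‖ = ‖y + (z - y)‖ := by congr 1; abel
          _ ≤ _ := (norm_add_le _ _).trans (add_le_add h3 h1)
      have h4 : ‖z‖ ^ 2 = ∑ i, ((round (y i) : ℤ) : ℝ) ^ 2 := by
        rw [EuclideanSpace.norm_sq_eq]; simp [z]
      rw [← h4]
      gcongr
    · constructor <;> intro i <;> have := abs_le.1 (abs_sub_round (y i)) <;> simp only <;> linarith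
  refine (measure_mono hcover).trans ((measure_biUnion_finset_le _ _).trans ?_)
  rw [Finset.card_eq_sum_ones, Nat.cast_sum]
  refine Finset.sum_le_sum fun x _ => ?_
  have hpr := (PiLp.volume_preserving_ofLp (Fin n)).measure_preimage
    (s := Set.Icc (fun i => (x i : ℝ) - 1 / 2) (fun i => (x i : ℝ) + 1 / 2))
    measurableSet_Icc.nullMeasurableSet
  refine (le_of_eq hpr).trans ?_
  rw [Real.volume_Icc_pi]
  norm_num

/-- Stirling-type upper bound with the sharp exponential rate, by maximizing the tilted factor
`x ^ s * exp (-ϑ x)` of Euler's integral. -/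
lemma Gamma_upper (s ϑ : ℝ) (hs : 0 < s) (h0 : 0 < ϑ) (h1 : ϑ < 1) :
    Real.Gamma (s + 1) ≤ (s / (Real.exp 1 * ϑ)) ^ s / (1 - ϑ) := by
  rw [Real.Gamma_eq_integral (by linarith)]
  have hI : ∫ x in Set.Ioi (0 : ℝ), Real.exp (-(1 - ϑ) * x) = 1 / (1 - ϑ) := by
    rw [integral_exp_mul_Ioi (by linarith)]
    rw [mul_zero, Real.exp_zero, neg_div_neg_eq]
  rw [div_eq_mul_one_div, ← hI, ← integral_const_mul]
  refine setIntegral_mono_on (Real.GammaIntegral_convergent (by linarith))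
    ((integrableOn_exp_mul_Ioi (by linarith) 0).const_mul _) measurableSet_Ioi fun x hx => ?_
  have hx : 0 < x := hx
  have hb : 0 < s / (Real.exp 1 * ϑ) := by positivity
  rw [add_sub_cancel_right, Real.rpow_def_of_pos hx, Real.rpow_def_of_pos hb, ← Real.exp_add,
    ← Real.exp_add, Real.exp_le_exp, Real.log_div hs.ne' (by positivity),
    Real.log_mul (by positivity) h0.ne', Real.log_exp]
  have h := Real.log_le_sub_one_of_pos (show 0 < ϑ * x / s by positivity)
  rw [Real.log_div (by positivity) hs.ne', Real.log_mul h0.ne' hx.ne'] at h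
  have h2 := mul_le_mul_of_nonneg_left h hs.le
  have h3 : s * (ϑ * x / s - 1) = ϑ * x - s := by field_simp
  rw [h3] at h2
  nlinarith

/-- Lower bound for the number of integer points in a ball, with the exponential rate of the
volume up to the factor `√ϑ`. -/
lemma card_ball_ge {n : ℕ} (hn : 0 < n) (ϑ : ℝ) (h0 : 0 < ϑ) (h1 : ϑ < 1) (ρ : ℝ)
    (hρ : √n / 2 ≤ ρ) :
    (1 - ϑ) * (√(2 * Real.pi * Real.exp 1 * ϑ / n) * (ρ - √n / 2)) ^ n ≤
      ((int_ball_finite n (ρ ^ 2)).toFinset.card : ℝ) := by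
  have hv := volume_ball_le_card (n := n) (ρ - √n / 2) (by linarith)
  have : Nonempty (Fin n) := ⟨⟨0, hn⟩⟩
  rw [EuclideanSpace.volume_closedBall, sub_add_cancel, Fintype.card_fin] at hv
  have hn' : (0 : ℝ) < n := by exact_mod_cast hn
  have hr : 0 ≤ ρ - √n / 2 := by linarith
  have hG := Gamma_upper (n / 2) ϑ (by positivity) h0 h1
  have hGp : 0 < Real.Gamma ((n : ℝ) / 2 + 1) := Real.Gamma_pos_of_pos (by positivity)
  rw [← ENNReal.ofReal_pow hr, ← ENNReal.ofReal_mul (by positivity), ← ENNReal.ofReal_natCast,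
    ENNReal.ofReal_le_ofReal_iff (by positivity)] at hv
  refine le_trans ?_ hv
  have e1 : (n / 2 / (Real.exp 1 * ϑ)) ^ ((n : ℝ) / 2) = √(n / 2 / (Real.exp 1 * ϑ)) ^ n := by
    rw [Real.sqrt_eq_rpow, ← Real.rpow_natCast, ← Real.rpow_mul (by positivity)]
    congr 1; ring
  rw [e1] at hG
  have e2 : √(2 * Real.pi * Real.exp 1 * ϑ / n) * √(n / 2 / (Real.exp 1 * ϑ)) = √Real.pi := by
    rw [← Real.sqrt_mul (by positivity)]
    congr 1; field_simp
  rw [mul_pow, ← e2, mul_pow]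
  have h3 : 0 < 1 - ϑ := by linarith
  rw [le_div_iff₀ h3] at hG
  rw [show ∀ a b c : ℝ, a * (b * c) = c * (a * b) by intros; ring]
  refine mul_le_mul_of_nonneg_left ?_ (by positivity)
  rw [le_div_iff₀ hGp]
  have := mul_le_mul_of_nonneg_left hG
    (show 0 ≤ √(2 * Real.pi * Real.exp 1 * ϑ / n) ^ n by positivity)
  linarith

/-- Many nonzero residue classes modulo `p` have a representative in a ball. -/
lemma exists_residues {n : ℕ} (p : ℕ) [Fact p.Prime] (t : ℝ) (ht : 0 < t) (B : ℝ) :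
    ∃ A : Finset (Fin n → ZMod p), (∀ y ∈ A, y ≠ 0) ∧
      (∀ y ∈ A, ∃ x : Fin n → ℤ, ∑ i, (x i : ℝ) ^ 2 ≤ B ∧ (fun i => (x i : ZMod p)) = y) ∧
      ((int_ball_finite n B).toFinset.card : ℝ) ≤
        (Real.exp (t * B) * (1 + √(Real.pi / t) / p) ^ n) * (A.card + 1) := by
  classical
  set X := (int_ball_finite n B).toFinset with hX
  set f : (Fin n → ℤ) → (Fin n → ZMod p) := fun x i => (x i : ZMod p)
  set M := Real.exp (t * B) * (1 + √(Real.pi / t) / p) ^ n with hM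
  have hM0 : 0 ≤ M := by positivity
  have hmem : ∀ x, x ∈ X ↔ ∑ i, (x i : ℝ) ^ 2 ≤ B := by intro x; simp [hX]
  refine ⟨(X.image f).erase 0, fun y hy => (Finset.mem_erase.1 hy).1, fun y hy => ?_, ?_⟩
  · obtain ⟨x, hx, rfl⟩ := Finset.mem_image.1 (Finset.mem_of_mem_erase hy)
    exact ⟨x, (hmem x).1 hx, rfl⟩
  · have h1 : ∀ y ∈ X.image f, ((X.filter fun x => f x = y).card : ℝ) ≤ M := by
      intro y _
      have h := tsum_ball_residue_le p (Fact.out : p.Prime).pos t ht B y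
      rw [← hM] at h
      have h2 : ((X.filter fun x => f x = y).card : ENNReal) ≤ ENNReal.ofReal M := by
        refine le_trans ?_ h
        refine le_trans ?_ (ENNReal.sum_le_tsum (X.filter fun x => f x = y))
        rw [Finset.card_eq_sum_ones, Nat.cast_sum]
        refine Finset.sum_le_sum fun x hx => ?_
        rw [Finset.mem_filter, hmem] at hx
        rw [if_pos hx]; simp
      rw [← ENNReal.ofReal_natCast] at h2
      exact (ENNReal.ofReal_le_ofReal_iff hM0).1 h2
    have h2 : (X.card : ℝ) ≤ M * (X.image f).card := by
      rw [Finset.card_eq_sum_card_image f X]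
      push_cast
      refine (Finset.sum_le_sum h1).trans_eq ?_
      simp [mul_comm]
    refine h2.trans (mul_le_mul_of_nonneg_left ?_ hM0)
    have := Finset.pred_card_le_card_erase (s := X.image f) (a := 0)
    exact_mod_cast (by omega : (X.image f).card ≤ ((X.image f).erase 0).card + 1)

/-! ### Theta series of planar lattices -/

/-- Short vectors of the planar lattice `d ≡ b x (mod p)` are collinear: they are all integer
multiples of a single vector `v₀`, both of whose coordinates are nonzero. -/
lemma short_vectors_collinear (p : ℕ) [Fact p.Prime] (b : ZMod p) (hb : b ≠ 0)
    (hex : ∃ v : ℤ × ℤ, v ≠ 0 ∧ v.1 ^ 2 + v.2 ^ 2 < p ∧ (v.2 : ZMod p) = b * v.1) :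
    ∃ v₀ : ℤ × ℤ, v₀.1 ≠ 0 ∧ v₀.2 ≠ 0 ∧
      ∀ v : ℤ × ℤ, v.1 ^ 2 + v.2 ^ 2 < p → (v.2 : ZMod p) = b * v.1 →
        ∃ k : ℤ, v = (k * v₀.1, k * v₀.2) := by
  have hp2 : (2 : ℤ) ≤ p := by exact_mod_cast (Fact.out : p.Prime).two_le
  -- a multiple of `p` whose square is below `p ^ 2` vanishes
  have hz : ∀ y : ℤ, y ^ 2 < (p : ℤ) ^ 2 → (y : ZMod p) = 0 → y = 0 := by
    intro y hy h0
    have hd := (ZMod.intCast_zmod_eq_zero_iff_dvd y p).1 h0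
    refine Int.eq_zero_of_abs_lt_dvd hd ?_
    exact abs_lt_of_sq_lt_sq hy (by omega)
  have hz' : ∀ y : ℤ, y ^ 2 < p → (y : ZMod p) = 0 → y = 0 := by
    intro y hy h0
    exact hz y (by nlinarith) h0
  have hx0 : ∀ v : ℤ × ℤ, v.1 ^ 2 + v.2 ^ 2 < p → (v.2 : ZMod p) = b * v.1 → v.1 = 0 → v.2 = 0 := by
    intro v h1 h2 h3
    refine hz' _ (by nlinarith) ?_
    rw [h2, h3]; simp
  have hd0 : ∀ v : ℤ × ℤ, v.1 ^ 2 + v.2 ^ 2 < p → (v.2 : ZMod p) = b * v.1 → v.2 = 0 → v.1 = 0 := by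
    intro v h1 h2 h3
    refine hz' _ (by nlinarith) ?_
    rw [h3] at h2
    simpa [hb] using h2.symm
  have hex' : ∃ N : ℕ, ∃ v : ℤ × ℤ, v.1.natAbs = N ∧ v.1 ≠ 0 ∧ v.1 ^ 2 + v.2 ^ 2 < p ∧
      (v.2 : ZMod p) = b * v.1 := by
    obtain ⟨v, h0, h1, h2⟩ := hex
    refine ⟨_, v, rfl, ?_, h1, h2⟩
    intro h
    exact h0 (Prod.ext h (hx0 v h1 h2 h))
  classical
  -- `v₀` has the least nonzero first coordinate in absolute value
  obtain ⟨v₀, e, h0, h1, h2⟩ := Nat.find_spec hex'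
  have hmin := fun N hN => Nat.find_min hex' (m := N) hN
  rw [← e] at hmin
  refine ⟨v₀, h0, fun h => h0 (hd0 v₀ h1 h2 h), fun v hv1 hv2 => ?_⟩
  -- the determinant of two lattice vectors is a multiple of `p`, and short vectors make it small
  have hcross : v.1 * v₀.2 - v.2 * v₀.1 = 0 := by
    refine hz _ ?_ ?_
    · have hA := add_nonneg (sq_nonneg v.1) (sq_nonneg v.2)
      have hB := add_nonneg (sq_nonneg v₀.1) (sq_nonneg v₀.2)
      nlinarith [sq_nonneg (v.1 * v₀.1 + v.2 * v₀.2), mul_lt_mul'' hv1 h1 hA hB]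
    · push_cast
      rw [h2, hv2]; ring
  set k := v.1 / v₀.1 with hk
  set r := v.1 % v₀.1 with hr
  have hdiv : v.1 = k * v₀.1 + r := by
    rw [hk, hr, mul_comm]; exact (Int.mul_ediv_add_emod _ _).symm
  have hr0 : 0 ≤ r := Int.emod_nonneg _ h0
  have hr1 : r < |v₀.1| := Int.emod_lt_abs _ h0
  have hcol : (v.2 - k * v₀.2) * v₀.1 = r * v₀.2 := by
    have : r = v.1 - k * v₀.1 := by omega
    rw [this]; linear_combination -hcross
  have hrsq : r ^ 2 < v₀.1 ^ 2 := by
    rw [← sq_abs v₀.1]; nlinarith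
  have hdsq : (v.2 - k * v₀.2) ^ 2 ≤ v₀.2 ^ 2 := by
    have h3 : (v.2 - k * v₀.2) ^ 2 * v₀.1 ^ 2 = r ^ 2 * v₀.2 ^ 2 := by
      rw [← mul_pow, ← mul_pow, hcol]
    have h4 : 0 < v₀.1 ^ 2 := by positivity
    by_contra h5
    push Not at h5
    nlinarith [sq_nonneg v₀.2]
  have hrz : r = 0 := by
    by_contra hne
    refine hmin r.natAbs ?_ ⟨(r, v.2 - k * v₀.2), rfl, hne, ?_, ?_⟩
    · zify; rwa [abs_of_nonneg hr0]
    · simp only; linarith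
    · have : r = v.1 - k * v₀.1 := by omega
      simp only [this]
      push_cast
      rw [h2, hv2]; ring
  refine ⟨k, Prod.ext ?_ ?_⟩
  · simp only; omega
  · rw [hrz, zero_mul] at hcol
    rcases mul_eq_zero.1 hcol with h | h
    · simp only; omega
    · exact absurd h h0

/-- Theta series of a quadratic form over the planar lattice `d ≡ b x (mod p)`: the vectors
of squared length below `p` are multiples of a single one, and the remaining ones contribute the
last summand, which is small when `P ≪ p`. -/
lemma lattice_theta_le (p : ℕ) [Fact p.Prime] (b : ZMod p) (hb : b ≠ 0)
    (q : ℝ → ℝ → ℝ) (hq : ∀ k x d, q (k * x) (k * d) = k ^ 2 * q x d)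
    (P μ₀ c : ℝ) (hP : 0 < P) (hμ : 0 < μ₀) (hc : 0 < c)
    (h1 : ∀ x d : ℤ, x ≠ 0 → d ≠ 0 → μ₀ ≤ q x d)
    (h2 : ∀ x d : ℝ, c * (x ^ 2 + d ^ 2) ≤ q x d) :
    ∑' v : ℤ × ℤ, (if (v.2 : ZMod p) = b * v.1 then
        ENNReal.ofReal (Real.exp (-(q v.1 v.2 / P))) else 0) ≤
      ENNReal.ofReal (1 + √(Real.pi * P / μ₀) +
        Real.exp (-(c * p / (2 * P))) * (1 + √(2 * Real.pi * P / c)) ^ 2) := by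
  classical
  have hlarge : ∑' v : ℤ × ℤ, (if (v.2 : ZMod p) = b * v.1 ∧ ¬ (v.1 ^ 2 + v.2 ^ 2 < p) then
        ENNReal.ofReal (Real.exp (-(q v.1 v.2 / P))) else 0) ≤
      ENNReal.ofReal (Real.exp (-(c * p / (2 * P))) * (1 + √(2 * Real.pi * P / c)) ^ 2) := by
    have hth := theta_le (c / (2 * P)) (by positivity) 0
    have e : Real.pi / (c / (2 * P)) = 2 * Real.pi * P / c := by field_simp
    rw [e] at hth
    simp only [zero_add] at hth
    calc _ ≤ ∑' v : ℤ × ℤ, ENNReal.ofReal (Real.exp (-(c * p / (2 * P)))) *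
          (ENNReal.ofReal (Real.exp (-(c / (2 * P)) * (v.1 : ℝ) ^ 2)) *
            ENNReal.ofReal (Real.exp (-(c / (2 * P)) * (v.2 : ℝ) ^ 2))) := by
          refine ENNReal.tsum_le_tsum fun v => ?_
          split_ifs with h
          · rw [← ENNReal.ofReal_mul (Real.exp_pos _).le, ← ENNReal.ofReal_mul (Real.exp_pos _).le,
              ← Real.exp_add, ← Real.exp_add]
            refine ENNReal.ofReal_le_ofReal (Real.exp_le_exp.2 ?_)
            have h3 : (p : ℝ) ≤ (v.1 : ℝ) ^ 2 + (v.2 : ℝ) ^ 2 := by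
              have := not_lt.1 h.2
              exact_mod_cast this
            have h4 := h2 v.1 v.2
            have h5 : c * p + c * ((v.1 : ℝ) ^ 2 + (v.2 : ℝ) ^ 2) ≤ 2 * q v.1 v.2 := by
              nlinarith [mul_le_mul_of_nonneg_left h3 hc.le]
            have h6 : (c * p + c * ((v.1 : ℝ) ^ 2 + (v.2 : ℝ) ^ 2)) / (2 * P) ≤
              2 * q v.1 v.2 / (2 * P) := by gcongr
            have h7 : 2 * q v.1 v.2 / (2 * P) = q v.1 v.2 / P := by field_simp
            have h8 : (c * p + c * ((v.1 : ℝ) ^ 2 + (v.2 : ℝ) ^ 2)) / (2 * P) =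
              c * p / (2 * P) + (c / (2 * P) * (v.1 : ℝ) ^ 2 + c / (2 * P) * (v.2 : ℝ) ^ 2) := by
              field_simp
            linarith
          · exact zero_le
      _ = ENNReal.ofReal (Real.exp (-(c * p / (2 * P)))) *
          ((∑' x : ℤ, ENNReal.ofReal (Real.exp (-(c / (2 * P)) * (x : ℝ) ^ 2))) *
          (∑' x : ℤ, ENNReal.ofReal (Real.exp (-(c / (2 * P)) * (x : ℝ) ^ 2)))) := by
          rw [ENNReal.tsum_mul_left, ENNReal.tsum_prod']
          simp_rw [ENNReal.tsum_mul_left]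
          rw [ENNReal.tsum_mul_right]
      _ ≤ ENNReal.ofReal (Real.exp (-(c * p / (2 * P)))) *
          (ENNReal.ofReal (1 + √(2 * Real.pi * P / c)) *
            ENNReal.ofReal (1 + √(2 * Real.pi * P / c))) := by gcongr
      _ = _ := by
          rw [← ENNReal.ofReal_mul (by positivity), ← ENNReal.ofReal_mul (by positivity), sq]
  have hsmall : ∑' v : ℤ × ℤ, (if (v.2 : ZMod p) = b * v.1 ∧ (v.1 ^ 2 + v.2 ^ 2 < p) then
        ENNReal.ofReal (Real.exp (-(q v.1 v.2 / P))) else 0) ≤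
      ENNReal.ofReal (1 + √(Real.pi * P / μ₀)) := by
    by_cases hex : ∃ v : ℤ × ℤ, v ≠ 0 ∧ v.1 ^ 2 + v.2 ^ 2 < p ∧ (v.2 : ZMod p) = b * v.1
    · obtain ⟨v₀, hx, hd, hv⟩ := short_vectors_collinear p b hb hex
      have hinj : Function.Injective (fun k : ℤ => ((k * v₀.1, k * v₀.2) : ℤ × ℤ)) := by
        intro k k' h
        exact mul_right_cancel₀ hx (Prod.ext_iff.1 h).1
      rw [← hinj.tsum_eq]
      · have hQ := h1 v₀.1 v₀.2 hx hd
        have hQ0 : 0 < q v₀.1 v₀.2 := lt_of_lt_of_le hμ hQ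
        have hth := theta_le (q v₀.1 v₀.2 / P) (by positivity) 0
        refine (ENNReal.tsum_le_tsum fun k => ?_).trans (hth.trans ?_)
        · split_ifs
          · refine le_of_eq ?_
            push_cast
            rw [hq]
            congr 2
            ring
          · exact zero_le
        · refine ENNReal.ofReal_le_ofReal ?_
          gcongr 1 + √?_
          rw [div_div_eq_mul_div]
          gcongr
      · intro v hvs
        rw [Function.mem_support] at hvs
        have h : (v.2 : ZMod p) = b * v.1 ∧ (v.1 ^ 2 + v.2 ^ 2 < p) := by
          by_contra h
          exact hvs (if_neg h)
        obtain ⟨k, hk⟩ := hv v h.2 h.1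
        exact ⟨k, hk.symm⟩
    · push Not at hex
      rw [tsum_eq_single (0 : ℤ × ℤ)]
      · split_ifs
        · refine ENNReal.ofReal_le_ofReal ?_
          have h3 := h2 0 0
          have : Real.exp (-(q ((0 : ℤ × ℤ).1 : ℝ) ((0 : ℤ × ℤ).2 : ℝ) / P)) ≤ 1 := by
            rw [Real.exp_le_one_iff]
            simp only [Prod.fst_zero, Prod.snd_zero, Int.cast_zero]
            have : 0 ≤ q 0 0 := by simpa using h3
            have : 0 ≤ q 0 0 / P := by positivity
            linarith
          have h4 := Real.sqrt_nonneg (Real.pi * P / μ₀)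
          linarith
        · exact zero_le
      · intro v hv
        rw [if_neg]
        rintro ⟨ha, hb⟩
        exact hex v hv hb ha
  rw [ENNReal.ofReal_add (by positivity) (by positivity)]
  refine le_trans (le_of_eq ?_) (add_le_add hsmall hlarge)
  rw [← ENNReal.tsum_add]
  refine tsum_congr fun v => ?_
  by_cases ha : (v.2 : ZMod p) = b * v.1 <;> by_cases hb : (v.1 ^ 2 + v.2 ^ 2 < (p : ℤ)) <;>
    simp [ha, hb]

/-! ### Averaged union bound -/

section UnionBound

variable {p n m : ℕ} [Fact p.Prime]

/-- Reduction modulo `p` of an integer vector. -/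
def redMod (p : ℕ) {n : ℕ} (x : Fin n → ℤ) : Fin n → ZMod p := fun i => (x i : ZMod p)

lemma card_matrix_univ :
    Fintype.card (Matrix (Fin m) (Fin n) (ZMod p)) = p ^ (m * n) := by
  rw [Fintype.card_congr (Matrix.of (m := Fin m) (n := Fin n) (α := ZMod p)).symm,
    Fintype.card_fun, Fintype.card_fun, ZMod.card, Fintype.card_fin, Fintype.card_fin, ← pow_mul,
    mul_comm]

lemma card_le_of_mul_eq {a N : ℕ} {c : ℕ} (hc : 0 < c) (h : a * c = N) :
    (a : ENNReal) ≤ ENNReal.ofReal ((N : ℝ) * (c : ℝ)⁻¹) := by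
  have hc' : (0 : ℝ) < c := by exact_mod_cast hc
  rw [← ENNReal.ofReal_natCast, ← h]
  apply ENNReal.ofReal_le_ofReal
  push_cast
  rw [mul_assoc, mul_inv_cancel₀ hc'.ne', mul_one]

/-- Averaged union bound for a nonzero syndrome `t`. Here `X` is the set of candidate code
points, `S x` the event that the effective noise is long, `E x z` the event that `z` is close to
the scaled channel output and `D x z` the event that `z` beats `x`. A competitor `z` which is
independent of `x` modulo `p` costs an extra factor `p ^ (m - ℓ)`, while a competitor proportional
to `x` modulo `p` is not constrained any further by the lattice. -/
lemma union_bound {Ω : Type*} [MeasurableSpace Ω] (μ : Measure Ω) [IsProbabilityMeasure μ]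
    (ℓ : ℕ) (t : Fin m → ZMod p) (ht : t ≠ 0)
    (enc : Matrix (Fin m) (Fin n) (ZMod p) → Fin n → ℤ)
    (F : Matrix (Fin m) (Fin n) (ZMod p) → Set Ω) (X : Finset (Fin n → ℤ))
    (S : (Fin n → ℤ) → Set Ω) (E D : (Fin n → ℤ) → (Fin n → ℤ) → Set Ω)
    (h0 : ∀ H, (∃ x ∈ X, H.mulVec (redMod p x) = t) →
      enc H ∈ X ∧ H.mulVec (redMod p (enc H)) = t)
    (hF : ∀ H, ∀ w ∈ F H, ∃ z, (∀ i : Fin m, ℓ ≤ (i : ℕ) → H.mulVec (redMod p z) i = 0) ∧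
      redMod p z ≠ redMod p (enc H) ∧ w ∈ D (enc H) z)
    (hD : ∀ x z, D x z ⊆ S x ∪ E x z)
    (T₁ T₂ Bρ Br T₄ : ℝ) (hT₁0 : 0 ≤ T₁) (hT₂0 : 0 ≤ T₂) (hBρ0 : 0 ≤ Bρ) (hBr0 : 0 ≤ Br)
    (hT₄0 : 0 ≤ T₄)
    (hT₁ : ((Finset.univ.filter fun H : Matrix (Fin m) (Fin n) (ZMod p) =>
      ∀ x ∈ X, H.mulVec (redMod p x) ≠ t).card : ℝ) ≤ (p : ℝ) ^ (m * n) * T₁)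
    (hT₂ : ∀ x ∈ X, μ (S x) ≤ ENNReal.ofReal T₂)
    (hBρ : (X.card : ℝ) ≤ Bρ)
    (hBr : ∀ x, ∑' z, μ (E x z) ≤ ENNReal.ofReal Br)
    (hT₄ : ∑ x ∈ X, ∑' z, (if ∃ b : ZMod p, b ≠ 0 ∧ redMod p z = redMod p x + b • redMod p x
      then μ (D x z) else 0) ≤ ENNReal.ofReal T₄) :
    ∑ H, μ (F H) ≤ ENNReal.ofReal ((p : ℝ) ^ (m * n) *
      (T₁ + T₂ + ((p : ℝ) ^ m * (p : ℝ) ^ (m - ℓ))⁻¹ * (Bρ * Br) + ((p : ℝ) ^ m)⁻¹ * T₄)) := by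
  classical
  have hp : 0 < p := (Fact.out : p.Prime).pos
  have hp' : (0 : ℝ) < p := by exact_mod_cast hp
  set N : ℝ := (p : ℝ) ^ (m * n) with hN
  have hN0 : 0 ≤ N := by positivity
  have hNc : ((p ^ (m * n) : ℕ) : ℝ) = N := by push_cast; rfl
  let bad : Matrix (Fin m) (Fin n) (ZMod p) → Prop := fun H => ∀ x ∈ X, H.mulVec (redMod p x) ≠ t
  let hit : Matrix (Fin m) (Fin n) (ZMod p) → (Fin n → ℤ) → Prop := fun H x =>
    H.mulVec (redMod p x) = t
  let fine : Matrix (Fin m) (Fin n) (ZMod p) → (Fin n → ℤ) → Prop := fun H z =>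
    ∀ i : Fin m, ℓ ≤ (i : ℕ) → H.mulVec (redMod p z) i = 0
  let ind : (Fin n → ℤ) → (Fin n → ℤ) → Prop := fun x z => ∀ c : ZMod p, redMod p z ≠ c • redMod p x
  let pro : (Fin n → ℤ) → (Fin n → ℤ) → Prop := fun x z =>
    ∃ b : ZMod p, b ≠ 0 ∧ redMod p z = redMod p x + b • redMod p x
  -- nonvanishing of a code point modulo `p`
  have hnz : ∀ H x, hit H x → redMod p x ≠ 0 := by
    intro H x h h'
    simp only [hit, h', Matrix.mulVec_zero] at h
    exact ht h.symm
  have hper : ∀ H, μ (F H) ≤ (if bad H then 1 else 0) + ENNReal.ofReal T₂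
      + ∑ x ∈ X, ∑' z, (if hit H x ∧ fine H z ∧ ind x z then μ (E x z) else 0)
      + ∑ x ∈ X, (if hit H x then ∑' z, (if pro x z then μ (D x z) else 0) else 0) := by
    intro H
    by_cases hb : bad H
    · rw [if_pos hb, add_assoc, add_assoc]
      exact prob_le_one.trans le_self_add
    · rw [if_neg hb, zero_add]
      have hex : ∃ x ∈ X, H.mulVec (redMod p x) = t := by
        simpa [bad] using hb
      obtain ⟨hx, hxt⟩ := h0 H hex
      set x := enc H
      -- either the noise is long, or a competitor independent of `x` modulo `p` is close to the
      -- channel output, or a competitor proportional to `x` modulo `p` wins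
      have hsub : F H ⊆ S x ∪ (⋃ z, {w | w ∈ E x z ∧ fine H z ∧ ind x z})
          ∪ ⋃ z, {w | w ∈ D x z ∧ pro x z} := by
        intro w hw
        obtain ⟨z, hz1, hz2, hz3⟩ := hF H w hw
        by_cases hi : ind x z
        · rcases hD _ _ hz3 with h | h
          · exact Or.inl (Or.inl h)
          · exact Or.inl (Or.inr (Set.mem_iUnion.2 ⟨z, h, hz1, hi⟩))
        · simp only [ind, not_forall, not_not] at hi
          obtain ⟨c, hc⟩ := hi
          refine Or.inr (Set.mem_iUnion.2 ⟨z, hz3, c - 1, ?_, ?_⟩)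
          · intro h
            rw [sub_eq_zero.1 h, one_smul] at hc
            exact hz2 hc
          · rw [hc, sub_smul, one_smul]; abel
      refine (measure_mono hsub).trans ((measure_union_le _ _).trans ?_)
      refine add_le_add ((measure_union_le _ _).trans (add_le_add (hT₂ x hx) ?_)) ?_
      · refine (measure_iUnion_le _).trans ?_
        refine le_trans ?_ (Finset.single_le_sum (fun _ _ => zero_le) hx)
        refine ENNReal.tsum_le_tsum fun z => ?_
        split_ifs with h
        · exact measure_mono fun w hw => hw.1
        · rw [show {w | w ∈ E x z ∧ fine H z ∧ ind x z} = ∅ from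
            Set.eq_empty_of_forall_notMem fun w hw => h ⟨hxt, hw.2⟩]; simp
      · refine (measure_iUnion_le _).trans ?_
        refine le_trans ?_ (Finset.single_le_sum (fun _ _ => zero_le) hx)
        rw [if_pos (show hit H x from hxt)]
        refine ENNReal.tsum_le_tsum fun z => ?_
        split_ifs with h
        · exact measure_mono fun w hw => hw.1
        · rw [show {w | w ∈ D x z ∧ pro x z} = ∅ from
            Set.eq_empty_of_forall_notMem fun w hw => h hw.2]; simp
  have hA : ∑ H, (if bad H then (1 : ENNReal) else 0) ≤ ENNReal.ofReal (N * T₁) := by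
    rw [Finset.sum_ite, Finset.sum_const_zero, add_zero, Finset.sum_const, nsmul_eq_mul, mul_one,
      ← ENNReal.ofReal_natCast]
    refine ENNReal.ofReal_le_ofReal (le_trans (le_of_eq ?_) hT₁)
    congr
  have hB : ∑ _H : Matrix (Fin m) (Fin n) (ZMod p), ENNReal.ofReal T₂ = ENNReal.ofReal (N * T₂) := by
    rw [Finset.sum_const, nsmul_eq_mul, ENNReal.ofReal_mul hN0, Finset.card_univ]
    congr 1
    rw [← ENNReal.ofReal_natCast, ← hNc, card_matrix_univ]
  have hC : ∑ H, ∑ x ∈ X, ∑' z, (if hit H x ∧ fine H z ∧ ind x z then μ (E x z) else 0) ≤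
      ENNReal.ofReal (N * (((p : ℝ) ^ m * (p : ℝ) ^ (m - ℓ))⁻¹ * (Bρ * Br))) := by
    rw [Finset.sum_comm]
    have hx : ∀ x ∈ X, ∑ H, ∑' z, (if hit H x ∧ fine H z ∧ ind x z then μ (E x z) else 0) ≤
        ENNReal.ofReal (N * ((p : ℝ) ^ m * (p : ℝ) ^ (m - ℓ))⁻¹) * ENNReal.ofReal Br := by
      intro x _
      rw [← Summable.tsum_finsetSum fun _ _ => ENNReal.summable]
      refine le_trans ?_ (mul_le_mul_right (hBr x) _)
      rw [← ENNReal.tsum_mul_left]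
      refine ENNReal.tsum_le_tsum fun z => ?_
      rw [Finset.sum_ite, Finset.sum_const_zero, add_zero, Finset.sum_const, nsmul_eq_mul]
      refine mul_le_mul_left ?_ _
      by_cases hz : redMod p x ≠ 0 ∧ ind x z
      · have h := card_le_of_mul_eq (by positivity)
          (card_syndrome_fine (m := m) ℓ (redMod p x) (redMod p z) hz.1 hz.2 t)
        rw [hNc] at h
        push_cast at h
        refine le_trans ?_ h
        exact_mod_cast Finset.card_le_card fun H hH => by
          simp only [Finset.mem_filter] at hH ⊢
          exact ⟨hH.1, hH.2.1, hH.2.2.1⟩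
      · rw [Finset.filter_false_of_mem]
        · simp
        · rintro H - ⟨h1, -, h3⟩
          exact hz ⟨hnz H x h1, h3⟩
    refine (Finset.sum_le_sum hx).trans ?_
    rw [Finset.sum_const, nsmul_eq_mul, ← ENNReal.ofReal_natCast,
      ← ENNReal.ofReal_mul (by positivity), ← ENNReal.ofReal_mul (by positivity)]
    refine ENNReal.ofReal_le_ofReal ?_
    have := mul_le_mul_of_nonneg_right hBρ
      (show 0 ≤ N * ((p : ℝ) ^ m * (p : ℝ) ^ (m - ℓ))⁻¹ * Br by positivity)
    refine this.trans (le_of_eq (by ring))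
  have hE : ∑ H, ∑ x ∈ X, (if hit H x then ∑' z, (if pro x z then μ (D x z) else 0) else 0) ≤
      ENNReal.ofReal (N * (((p : ℝ) ^ m)⁻¹ * T₄)) := by
    rw [Finset.sum_comm]
    have hx : ∀ x ∈ X, ∑ H, (if hit H x then ∑' z, (if pro x z then μ (D x z) else 0) else 0) ≤
        ENNReal.ofReal (N * ((p : ℝ) ^ m)⁻¹) * ∑' z, (if pro x z then μ (D x z) else 0) := by
      intro x _
      rw [Finset.sum_ite, Finset.sum_const_zero, add_zero, Finset.sum_const, nsmul_eq_mul]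
      refine mul_le_mul_left ?_ _
      by_cases hz : redMod p x ≠ 0
      · have h := card_le_of_mul_eq (by positivity) (card_syndrome (m := m) (redMod p x) hz t)
        rw [hNc] at h
        push_cast at h
        exact h
      · rw [Finset.filter_false_of_mem]
        · simp
        · exact fun H _ h1 => hz (hnz H x h1)
    refine (Finset.sum_le_sum hx).trans ?_
    rw [← Finset.mul_sum, ← mul_assoc,
      ENNReal.ofReal_mul (show 0 ≤ N * ((p : ℝ) ^ m)⁻¹ by positivity)]
    exact mul_le_mul_right hT₄ _
  calc ∑ H, μ (F H) ≤ _ := Finset.sum_le_sum fun H _ => hper H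
    _ ≤ ENNReal.ofReal (N * T₁) + ENNReal.ofReal (N * T₂)
        + ENNReal.ofReal (N * (((p : ℝ) ^ m * (p : ℝ) ^ (m - ℓ))⁻¹ * (Bρ * Br)))
        + ENNReal.ofReal (N * (((p : ℝ) ^ m)⁻¹ * T₄)) := by
        rw [Finset.sum_add_distrib, Finset.sum_add_distrib, Finset.sum_add_distrib, hB]
        gcongr
    _ = _ := by
        rw [← ENNReal.ofReal_add (by positivity) (by positivity),
          ← ENNReal.ofReal_add (by positivity) (by positivity),
          ← ENNReal.ofReal_add (by positivity) (by positivity)]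
        congr 1; ring

/-- Averaged union bound for the zero syndrome, whose minimal representative is the origin. -/
lemma union_bound_zero {Ω : Type*} [MeasurableSpace Ω] (μ : Measure Ω) [IsProbabilityMeasure μ]
    (ℓ : ℕ) (F : Matrix (Fin m) (Fin n) (ZMod p) → Set Ω)
    (S : Set Ω) (E D : (Fin n → ℤ) → Set Ω)
    (hF : ∀ H, ∀ w ∈ F H, ∃ z, (∀ i : Fin m, ℓ ≤ (i : ℕ) → H.mulVec (redMod p z) i = 0) ∧
      redMod p z ≠ 0 ∧ w ∈ D z)
    (hD : ∀ z, D z ⊆ S ∪ E z)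
    (T₂ Br : ℝ) (hT₂0 : 0 ≤ T₂) (hBr0 : 0 ≤ Br)
    (hT₂ : μ S ≤ ENNReal.ofReal T₂)
    (hBr : ∑' z, μ (E z) ≤ ENNReal.ofReal Br) :
    ∑ H, μ (F H) ≤ ENNReal.ofReal ((p : ℝ) ^ (m * n) *
      (T₂ + ((p : ℝ) ^ (m - ℓ))⁻¹ * Br)) := by
  classical
  have hp : 0 < p := (Fact.out : p.Prime).pos
  have hp' : (0 : ℝ) < p := by exact_mod_cast hp
  set N : ℝ := (p : ℝ) ^ (m * n) with hN
  have hN0 : 0 ≤ N := by positivity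
  have hNc : ((p ^ (m * n) : ℕ) : ℝ) = N := by push_cast; rfl
  let fine : Matrix (Fin m) (Fin n) (ZMod p) → (Fin n → ℤ) → Prop := fun H z =>
    ∀ i : Fin m, ℓ ≤ (i : ℕ) → H.mulVec (redMod p z) i = 0
  have hper : ∀ H, μ (F H) ≤ ENNReal.ofReal T₂
      + ∑' z, (if fine H z ∧ redMod p z ≠ 0 then μ (E z) else 0) := by
    intro H
    have hsub : F H ⊆ S ∪ (⋃ z, {w | w ∈ E z ∧ fine H z ∧ redMod p z ≠ 0}) := by
      intro w hw
      obtain ⟨z, hz1, hz2, hz3⟩ := hF H w hw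
      rcases hD _ hz3 with h | h
      · exact Or.inl h
      · exact Or.inr (Set.mem_iUnion.2 ⟨z, h, hz1, hz2⟩)
    refine (measure_mono hsub).trans ((measure_union_le _ _).trans (add_le_add hT₂ ?_))
    refine (measure_iUnion_le _).trans (ENNReal.tsum_le_tsum fun z => ?_)
    split_ifs with h
    · exact measure_mono fun w hw => hw.1
    · rw [show {w | w ∈ E z ∧ fine H z ∧ redMod p z ≠ 0} = ∅ from
        Set.eq_empty_of_forall_notMem fun w hw => h hw.2]; simp
  have hB : ∑ _H : Matrix (Fin m) (Fin n) (ZMod p), ENNReal.ofReal T₂ = ENNReal.ofReal (N * T₂) := by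
    rw [Finset.sum_const, nsmul_eq_mul, ENNReal.ofReal_mul hN0, Finset.card_univ]
    congr 1
    rw [← ENNReal.ofReal_natCast, ← hNc, card_matrix_univ]
  have hC : ∑ H, ∑' z, (if fine H z ∧ redMod p z ≠ 0 then μ (E z) else 0) ≤
      ENNReal.ofReal (N * (((p : ℝ) ^ (m - ℓ))⁻¹ * Br)) := by
    rw [← Summable.tsum_finsetSum fun _ _ => ENNReal.summable, ← mul_assoc,
      ENNReal.ofReal_mul (by positivity)]
    refine le_trans ?_ (mul_le_mul_right hBr _)
    rw [← ENNReal.tsum_mul_left]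
    refine ENNReal.tsum_le_tsum fun z => ?_
    rw [Finset.sum_ite, Finset.sum_const_zero, add_zero, Finset.sum_const, nsmul_eq_mul]
    refine mul_le_mul_left ?_ _
    by_cases hz : redMod p z ≠ 0
    · have h := card_le_of_mul_eq (by positivity) (card_fine (m := m) ℓ (redMod p z) hz)
      rw [hNc] at h
      push_cast at h
      refine le_trans ?_ h
      exact_mod_cast Finset.card_le_card fun H hH => by
        simp only [Finset.mem_filter] at hH ⊢
        exact ⟨hH.1, hH.2.1⟩
    · rw [Finset.filter_false_of_mem]
      · simp
      · exact fun H _ h1 => hz h1.2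
  calc ∑ H, μ (F H) ≤ _ := Finset.sum_le_sum fun H _ => hper H
    _ ≤ ENNReal.ofReal (N * T₂) + ENNReal.ofReal (N * (((p : ℝ) ^ (m - ℓ))⁻¹ * Br)) := by
        rw [Finset.sum_add_distrib, hB]
        gcongr
    _ = _ := by
        rw [← ENNReal.ofReal_add (by positivity) (by positivity)]
        congr 1; ring

end UnionBound

/-! ### Pairs of lattice points -/

/-- Expected number of integer points close to the scaled channel output. -/
lemma tsum_close_le {n : ℕ} (v : NNReal) (α t : ℝ) (ht : 0 < t) (B : ℝ) (x : Fin n → ℝ) :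
    ∑' z : Fin n → ℤ, (Measure.pi fun _ : Fin n => gaussianReal 0 v)
      {w | ∑ i, (α * (x i + w i) - z i) ^ 2 ≤ B} ≤
    ENNReal.ofReal (Real.exp (t * B) * (1 + √(Real.pi / t)) ^ n) := by
  set μ := (Measure.pi fun _ : Fin n => gaussianReal 0 v)
  have hm : ∀ z : Fin n → ℤ, MeasurableSet {w : Fin n → ℝ | ∑ i, (α * (x i + w i) - z i) ^ 2 ≤ B} :=
    fun z => measurableSet_le (by fun_prop) (by fun_prop)
  calc _ = ∑' z : Fin n → ℤ, ∫⁻ w,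
        (if ∑ i, (α * (x i + w i) - z i) ^ 2 ≤ B then (1 : ENNReal) else 0) ∂μ := by
        refine tsum_congr fun z => ?_
        rw [← lintegral_indicator_one (hm z)]
        rfl
    _ = ∫⁻ w, ∑' z : Fin n → ℤ,
        (if ∑ i, (α * (x i + w i) - z i) ^ 2 ≤ B then (1 : ENNReal) else 0) ∂μ := by
        refine (lintegral_tsum fun z => ?_).symm
        exact (Measurable.ite (hm z) measurable_const measurable_const).aemeasurable
    _ ≤ ∫⁻ _, ENNReal.ofReal (Real.exp (t * B) * (1 + √(Real.pi / t)) ^ n) ∂μ :=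
        lintegral_mono fun w => tsum_ball_le t ht B fun i => α * (x i + w i)
    _ = _ := by simp [μ]

/-- Total error contribution of the pairs `(x, x + d)` with `d ≡ b x (mod p)`, `b ≠ 0`. The
indicator of the code ball and the Chernoff bound turn each class of pairs into an `n`-th power
of a theta series of a planar lattice. -/
lemma proportional_pairs_le {n : ℕ} (p : ℕ) [Fact p.Prime] (v : NNReal) (α t τ ρ2 G : ℝ)
    (ht : 0 ≤ t) (hτ : 0 ≤ τ) (hG0 : 0 ≤ G)
    (hG : ∀ b : ZMod p, b ≠ 0 → ∑' y : ℤ × ℤ, (if (y.2 : ZMod p) = b * y.1 then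
      ENNReal.ofReal (Real.exp (-(t * (y.1 : ℝ) ^ 2 + τ * ((y.2 : ℝ) ^ 2 + 2 * (1 - α) * y.1 * y.2)
        - 2 * τ ^ 2 * α ^ 2 * v * (y.2 : ℝ) ^ 2))) else 0) ≤ ENNReal.ofReal G) :
    ∑ x ∈ (int_ball_finite n ρ2).toFinset, ∑' z : Fin n → ℤ,
      (if ∃ b : ZMod p, b ≠ 0 ∧ redMod p z = redMod p x + b • redMod p x
        then (Measure.pi fun _ : Fin n => gaussianReal 0 v)
          {w | ∑ i, (α * (x i + w i) - z i) ^ 2 ≤ ∑ i, (α * (x i + w i) - x i) ^ 2} else 0) ≤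
      ENNReal.ofReal (p * (Real.exp (t * ρ2) * G ^ n)) := by
  classical
  set μ := (Measure.pi fun _ : Fin n => gaussianReal 0 v)
  let D : (Fin n → ℤ) → (Fin n → ℤ) → Set (Fin n → ℝ) := fun x z =>
    {w | ∑ i, (α * (x i + w i) - z i) ^ 2 ≤ ∑ i, (α * (x i + w i) - x i) ^ 2}
  let f : ZMod p → ℤ × ℤ → ENNReal := fun b y => if (y.2 : ZMod p) = b * y.1 then
      ENNReal.ofReal (Real.exp (-(t * (y.1 : ℝ) ^ 2 + τ * ((y.2 : ℝ) ^ 2 + 2 * (1 - α) * y.1 * y.2)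
        - 2 * τ ^ 2 * α ^ 2 * v * (y.2 : ℝ) ^ 2))) else 0
  -- the code ball indicator is majorized by `exp (t * ρ2 - t * ‖x‖²)`, which factorizes
  have hterm : ∀ x ∈ (int_ball_finite n ρ2).toFinset, ∀ d : Fin n → ℤ, ∀ b : ZMod p,
      (if redMod p d = b • redMod p x then μ (D x (x + d)) else 0) ≤
        ENNReal.ofReal (Real.exp (t * ρ2)) * ∏ i, f b (x i, d i) := by
    intro x hx d b
    split_ifs with h
    · have h' : ∀ i, ((d i : ℤ) : ZMod p) = b * (x i : ℤ) := fun i => congrFun h i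
      have hx' : ∑ i, (x i : ℝ) ^ 2 ≤ ρ2 := by simpa using hx
      have hp := pair_error_le v α τ hτ (fun i => (x i : ℝ)) (fun i => ((x i + d i : ℤ) : ℝ))
      refine le_trans hp ?_
      simp only [f, h', if_true]
      rw [← ENNReal.ofReal_prod_of_nonneg fun i _ => (Real.exp_pos _).le,
        ← ENNReal.ofReal_prod_of_nonneg fun i _ => (Real.exp_pos _).le,
        ← Real.exp_sum, ← Real.exp_sum, ← ENNReal.ofReal_mul (Real.exp_pos _).le, ← Real.exp_add]
      refine ENNReal.ofReal_le_ofReal (Real.exp_le_exp.2 ?_)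
      have e : ∑ i, (-τ * ((((x i + d i : ℤ) : ℝ) - x i) ^ 2
            + 2 * (1 - α) * x i * (((x i + d i : ℤ) : ℝ) - x i))
          + 2 * τ ^ 2 * α ^ 2 * v * (((x i + d i : ℤ) : ℝ) - x i) ^ 2) =
          t * ∑ i, (x i : ℝ) ^ 2 + ∑ i, -(t * (x i : ℝ) ^ 2
            + τ * ((d i : ℝ) ^ 2 + 2 * (1 - α) * x i * d i)
            - 2 * τ ^ 2 * α ^ 2 * v * (d i : ℝ) ^ 2) := by
        rw [Finset.mul_sum, ← Finset.sum_add_distrib]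
        refine Finset.sum_congr rfl fun i _ => ?_
        push_cast; ring
      rw [e]
      gcongr
    · exact zero_le
  have hb : ∀ b : ZMod p, b ≠ 0 → ∑ x ∈ (int_ball_finite n ρ2).toFinset, ∑' d : Fin n → ℤ,
      (if redMod p d = b • redMod p x then μ (D x (x + d)) else 0) ≤
      ENNReal.ofReal (Real.exp (t * ρ2) * G ^ n) := by
    intro b hb
    calc _ ≤ ∑ x ∈ (int_ball_finite n ρ2).toFinset, ∑' d : Fin n → ℤ,
          ENNReal.ofReal (Real.exp (t * ρ2)) * ∏ i, f b (x i, d i) :=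
          Finset.sum_le_sum fun x hx => ENNReal.tsum_le_tsum fun d => hterm x hx d b
      _ ≤ ∑' x : Fin n → ℤ, ∑' d : Fin n → ℤ,
          ENNReal.ofReal (Real.exp (t * ρ2)) * ∏ i, f b (x i, d i) := ENNReal.sum_le_tsum _
      _ = ENNReal.ofReal (Real.exp (t * ρ2)) * ∑' y : Fin n → ℤ × ℤ, ∏ i, f b (y i) := by
          simp_rw [ENNReal.tsum_mul_left]
          congr 1
          rw [← ENNReal.tsum_prod (f := fun x d : Fin n → ℤ => ∏ i, f b (x i, d i)),
            ← (Equiv.arrowProdEquivProdArrow (Fin n) (fun _ => ℤ) (fun _ => ℤ)).tsum_eq]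
          rfl
      _ ≤ _ := by
          rw [tsum_pi_prod fun _ => f b, ENNReal.ofReal_mul (Real.exp_pos _).le,
            ENNReal.ofReal_pow hG0, Finset.prod_const, Finset.card_univ, Fintype.card_fin]
          gcongr
          exact hG b hb
  calc _ ≤ ∑ x ∈ (int_ball_finite n ρ2).toFinset, ∑' d : Fin n → ℤ,
        ∑ b ∈ Finset.univ.filter (fun b : ZMod p => b ≠ 0),
          (if redMod p d = b • redMod p x then μ (D x (x + d)) else 0) := by
        refine Finset.sum_le_sum fun x _ => ?_
        rw [← (Equiv.addLeft x).tsum_eq]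
        refine ENNReal.tsum_le_tsum fun d => ?_
        split_ifs with h
        · obtain ⟨b, hb0, hb1⟩ := h
          have hd : redMod p d = b • redMod p x := by
            have : redMod p (x + d) = redMod p x + redMod p d := by
              funext i; simp [redMod]
            simp only [Equiv.coe_addLeft] at hb1
            rw [this] at hb1
            exact add_left_cancel hb1
          refine le_trans ?_ (Finset.single_le_sum (fun _ _ => zero_le)
            (Finset.mem_filter.2 ⟨Finset.mem_univ b, hb0⟩))
          rw [if_pos hd]
          rfl
        · exact zero_le
    _ = ∑ b ∈ Finset.univ.filter (fun b : ZMod p => b ≠ 0),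
        ∑ x ∈ (int_ball_finite n ρ2).toFinset, ∑' d : Fin n → ℤ,
          (if redMod p d = b • redMod p x then μ (D x (x + d)) else 0) := by
        rw [Finset.sum_comm]
        refine Finset.sum_congr rfl fun x _ => ?_
        exact Summable.tsum_finsetSum fun _ _ => ENNReal.summable
    _ ≤ ∑ b ∈ Finset.univ.filter (fun b : ZMod p => b ≠ 0),
        ENNReal.ofReal (Real.exp (t * ρ2) * G ^ n) :=
        Finset.sum_le_sum fun b h => hb b (Finset.mem_filter.1 h).2
    _ ≤ _ := by
        rw [Finset.sum_const, nsmul_eq_mul, ENNReal.ofReal_mul (p := (p : ℝ)) (by positivity),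
          ENNReal.ofReal_natCast]
        gcongr
        refine (Finset.card_filter_le _ _).trans_eq ?_
        rw [Finset.card_univ, ZMod.card]

/-- Few parity-check matrices leave the ball without a representative of a nonzero syndrome. -/
lemma card_bad_le {n m : ℕ} (p : ℕ) [Fact p.Prime] (s : Fin m → ZMod p) (hs : s ≠ 0)
    (ρ2 t L : ℝ) (ht : 0 < t)
    (hcard : L * (Real.exp (t * ρ2) * (1 + √(Real.pi / t) / p) ^ n) ≤
      ((int_ball_finite n ρ2).toFinset.card : ℝ)) (hL1 : 1 < L) :
    ((Finset.univ.filter fun H : Matrix (Fin m) (Fin n) (ZMod p) =>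
      ∀ x ∈ (int_ball_finite n ρ2).toFinset, H.mulVec (redMod p x) ≠ s).card : ℝ) ≤
      (p : ℝ) ^ (m * n) * ((p : ℝ) ^ m / (L - 1)) := by
  classical
  obtain ⟨A, hA0, hAx, hA⟩ := exists_residues (n := n) p t ht ρ2
  set M := Real.exp (t * ρ2) * (1 + √(Real.pi / t) / p) ^ n
  have hM : 0 < M := by positivity
  have hLA : L ≤ A.card + 1 := by
    have := hcard.trans hA
    rw [mul_comm M] at this
    exact le_of_mul_le_mul_right this hM
  have h := card_bad_mul_le (m := m) A hA0 s hs
  have hsub : ((Finset.univ.filter fun H : Matrix (Fin m) (Fin n) (ZMod p) =>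
      ∀ x ∈ (int_ball_finite n ρ2).toFinset, H.mulVec (redMod p x) ≠ s).card : ℝ) ≤
      ((Finset.univ.filter fun H : Matrix (Fin m) (Fin n) (ZMod p) =>
        ∀ y ∈ A, H.mulVec y ≠ s).card : ℝ) := by
    exact_mod_cast Finset.card_le_card fun H hH => by
      simp only [Finset.mem_filter, Finset.mem_univ, true_and] at hH ⊢
      intro y hy
      obtain ⟨x, hx1, hx2⟩ := hAx y hy
      have := hH x (by simpa using hx1)
      rwa [← hx2]
  refine hsub.trans ?_
  have hL' : 0 < L - 1 := by linarith
  rw [← mul_div_assoc, le_div_iff₀ hL']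
  refine le_trans ?_ h
  gcongr
  linarith

/-! ### The quadratic form of the pair bound -/

section QuadraticForm

variable {θ κ β : ℝ}

lemma form_lower (hκ0 : 0 < κ) (hκ2 : κ ≤ 1 - 2 * β)
    (x d : ℝ) :
    θ / 2 * x ^ 2 + κ * (d ^ 2 + 2 * β * x * d) - κ * (1 - 2 * β) / 2 * d ^ 2 ≤
      θ / 2 * x ^ 2 + κ * (d ^ 2 + 2 * β * x * d) - 2 * κ ^ 2 * ((1 - β) * β) * d ^ 2 := by
  have h1 : (1 - β) * β ≤ 1 / 4 := by nlinarith [sq_nonneg (β - 1 / 2)]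
  have h2 : 2 * κ ^ 2 * ((1 - β) * β) ≤ κ * (1 - 2 * β) / 2 := by
    nlinarith [mul_le_mul_of_nonneg_left h1 (sq_nonneg κ), mul_le_mul_of_nonneg_left hκ2 hκ0.le]
  nlinarith [mul_le_mul_of_nonneg_right h2 (sq_nonneg d)]

/-- The quadratic form of the pair bound exceeds `1 / 2` by a margin at integer points with both
coordinates nonzero. This is where `β < 1 / 2`, that is `SNR > 1`, enters. -/
lemma form_int (hβ0 : 0 < β) (hβ1 : β < 1 / 2) (hκ0 : 0 < κ) (hκ1 : κ ≤ 1 / 4)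
    (hκ2 : κ ≤ 1 - 2 * β) (hθ1 : 3 / 4 ≤ θ) (hθ2 : 1 - κ * (1 - 2 * β) / 2 ≤ θ)
    (x d : ℤ) (hx : x ≠ 0) (hd : d ≠ 0) :
    1 / 2 + κ * (1 - 2 * β) / 4 ≤
      θ / 2 * (x : ℝ) ^ 2 + κ * ((d : ℝ) ^ 2 + 2 * β * x * d)
        - 2 * κ ^ 2 * ((1 - β) * β) * (d : ℝ) ^ 2 := by
  refine le_trans ?_ (form_lower hκ0 hκ2 _ _)
  have hdsq : (1 : ℝ) ≤ (d : ℝ) ^ 2 := by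
    have : 1 ≤ d ^ 2 := by have := sq_pos_of_ne_zero hd; omega
    exact_mod_cast this
  have hdabs : |(d : ℝ)| ≤ (d : ℝ) ^ 2 := by
    have h : (1 : ℝ) ≤ |(d : ℝ)| := by exact_mod_cast Int.one_le_abs hd
    rw [← sq_abs]; nlinarith
  have hκβ : 0 < κ * (1 - 2 * β) := mul_pos hκ0 (by linarith)
  by_cases h : |x| = 1
  · have hxx : (x : ℝ) ^ 2 = 1 := by
      have : x ^ 2 = 1 := by rw [← sq_abs, h]; norm_num
      exact_mod_cast this
    have hxd : -(d : ℝ) ^ 2 ≤ x * d := by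
      have h1 : |(x : ℝ) * d| = |(d : ℝ)| := by
        rw [abs_mul]; have : |(x : ℝ)| = 1 := by exact_mod_cast h
        rw [this, one_mul]
      have := neg_abs_le ((x : ℝ) * d)
      linarith
    rw [hxx]
    have h3 := mul_le_mul_of_nonneg_left hxd (mul_pos hκ0 hβ0).le
    have h4 := mul_le_mul_of_nonneg_left hdsq hκβ.le
    nlinarith
  · have hx4 : (4 : ℝ) ≤ (x : ℝ) ^ 2 := by
      have h2 : 2 ≤ |x| := by have := Int.one_le_abs hx; omega
      have : 4 ≤ x ^ 2 := by rw [← sq_abs]; nlinarith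
      exact_mod_cast this
    -- completing the square in `d`
    have h5 : -(β * (x : ℝ) ^ 2) ≤ (1 / 2 + β) * (d : ℝ) ^ 2 + 2 * β * x * d := by
      nlinarith [mul_nonneg hβ0.le (sq_nonneg ((x : ℝ) + d)), sq_nonneg (d : ℝ)]
    have h6 := mul_le_mul_of_nonneg_left h5 hκ0.le
    have h7 : κ * (1 - 2 * β) ≤ 1 / 4 := by nlinarith
    have h8 : κ * β ≤ 1 / 8 := by nlinarith
    nlinarith [mul_le_mul_of_nonneg_right h8 (sq_nonneg (x : ℝ))]

lemma form_pos (hβ0 : 0 < β) (hβ1 : β < 1 / 2) (hκ0 : 0 < κ) (hκ1 : κ ≤ 1 / 4)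
    (hκ2 : κ ≤ 1 - 2 * β) (hθ1 : 3 / 4 ≤ θ) (x d : ℝ) :
    κ / 4 * (x ^ 2 + d ^ 2) ≤
      θ / 2 * x ^ 2 + κ * (d ^ 2 + 2 * β * x * d) - 2 * κ ^ 2 * ((1 - β) * β) * d ^ 2 := by
  refine le_trans ?_ (form_lower hκ0 hκ2 _ _)
  have h5 : -(2 * β * x ^ 2) - β / 2 * d ^ 2 ≤ 2 * β * x * d := by
    nlinarith [mul_nonneg hβ0.le (sq_nonneg (2 * x + d))]
  have h6 := mul_le_mul_of_nonneg_left h5 hκ0.le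
  have h8 : κ * β ≤ 1 / 8 := by nlinarith
  nlinarith [mul_le_mul_of_nonneg_right h8 (sq_nonneg x), mul_le_mul_of_nonneg_right hκ1 (sq_nonneg x), mul_le_mul_of_nonneg_right hθ1 (sq_nonneg x),
    mul_nonneg hκ0.le (sq_nonneg d), mul_nonneg (mul_nonneg hκ0.le hβ0.le) (sq_nonneg d)]

end QuadraticForm

/-! ### Error bound at fixed block length -/

/-- The full syndrome (coarse part `s`, fine part `0`) as one vector. -/
def target {p : ℕ} (m ℓ : ℕ) (s : Fin ℓ → ZMod p) : Fin m → ZMod p :=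
  fun i => if h : (i : ℕ) < ℓ then s ⟨i, h⟩ else 0

lemma hasSyndrome_iff {p m ℓ n : ℕ} (s : Fin ℓ → ZMod p) (H : Matrix (Fin m) (Fin n) (ZMod p))
    (x : Fin n → ℤ) : hasSyndrome p m ℓ n s H x ↔ H.mulVec (redMod p x) = target m ℓ s := by
  constructor
  · rintro ⟨h1, h2⟩
    funext i
    by_cases h : (i : ℕ) < ℓ
    · simp only [target, h, dif_pos]; exact h1 i h
    · simp only [target, h, dif_neg, not_false_iff]; exact h2 i (not_lt.1 h)
  · intro h
    constructor
    · intro i hi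
      have := congrFun h i
      simp only [target, hi, dif_pos] at this
      exact this
    · intro i hi
      have := congrFun h i
      simp only [target, not_lt.2 hi, dif_neg, not_false_iff] at this
      exact this

lemma redMod_ne {p n : ℕ} (x z : Fin n → ℤ) (h : ¬ ∀ j, (p : ℤ) ∣ (z j - x j)) :
    redMod p z ≠ redMod p x := by
  intro h'
  refine h fun j => ?_
  have := congrFun h' j
  exact (ZMod.intCast_eq_intCast_iff_dvd_sub _ _ _).1 this.symm

/-- The Chebyshev bound of `effective_noise_tail` for a code point of squared length `e` in the ball
of radius `√(N P / θ)`, with deviation `N P ζ`, is of order `1 / N`. -/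
lemma noise_const_le {K N P θ ζ α β v e : ℝ} (hK : 0 ≤ K) (hN : 0 < N) (hP : 0 < P) (hθ : 0 < θ)
    (hζ : 0 < ζ) (hα0 : 0 ≤ α) (hα1 : α ≤ 1) (hβ0 : 0 ≤ β) (hβ1 : β ≤ 1) (hv0 : 0 ≤ v)
    (hvP : v ≤ P) (he : e ≤ N * P / θ) :
    (2 * α ^ 4 * K * v ^ 2 * N + 8 * α ^ 2 * β ^ 2 * v * e) / (N * P * ζ) ^ 2 ≤
      (2 * K + 8 / θ) / (ζ ^ 2 * N) := by
  have hα4 : α ^ 4 ≤ 1 := pow_le_one₀ hα0 hα1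
  have hα2 : α ^ 2 ≤ 1 := pow_le_one₀ hα0 hα1
  have hβ2 : β ^ 2 ≤ 1 := pow_le_one₀ hβ0 hβ1
  have hv2 : v ^ 2 ≤ P ^ 2 := pow_le_pow_left₀ hv0 hvP 2
  have h1 : 2 * α ^ 4 * K * v ^ 2 * N ≤ 2 * 1 * K * P ^ 2 * N := by gcongr
  have h2 : 8 * α ^ 2 * β ^ 2 * v * e ≤ 8 * 1 * 1 * P * (N * P / θ) := by
    calc _ ≤ 8 * α ^ 2 * β ^ 2 * v * (N * P / θ) := by gcongr
      _ ≤ _ := by gcongr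
  calc _ ≤ (2 * 1 * K * P ^ 2 * N + 8 * 1 * 1 * P * (N * P / θ)) / (N * P * ζ) ^ 2 := by gcongr
    _ = _ := by field_simp

set_option maxHeartbeats 2000000 in
/-- The bound on the error probability at a fixed block length, with code radius
`√(n P / θ)` and decoding radius `√(n P β) / θ`. -/
lemma finite_bound : ∃ K : ℝ, 0 ≤ K ∧ ∀ (n p m ℓ : ℕ) [Fact p.Prime] (_ : 0 < n)
    (a β θ κ P ε L : ℝ) (_ : 1 < a) (_ : β = 1 / (1 + a)) (_ : 0 < P) (_ : 0 < κ)
    (_ : κ ≤ 1 / 4) (_ : κ ≤ 1 - 2 * β) (_ : 3 / 4 ≤ θ) (_ : θ < 1)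
    (_ : 1 - κ * (1 - 2 * β) / 2 ≤ θ) (_ : 0 < ε) (_ : 1 < L)
    (_ : (p : ℝ) ^ m = √(2 * Real.pi * Real.exp 1 * P) ^ n)
    (_ : L * (Real.exp (ε / P * (n * P / θ)) * (1 + √(Real.pi / (ε / P)) / p) ^ n) ≤
      ((int_ball_finite n (n * P / θ)).toFinset.card : ℝ))
    (s : Fin ℓ → ZMod p) (enc : Matrix (Fin m) (Fin n) (ZMod p) → (Fin n → ℤ))
    (_ : ∀ H, (∃ x, hasSyndrome p m ℓ n s H x) → hasSyndrome p m ℓ n s H (enc H) ∧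
      ∀ z, hasSyndrome p m ℓ n s H z → intNorm (enc H) ≤ intNorm z),
    (∑ H : Matrix (Fin m) (Fin n) (ZMod p),
      (Measure.pi fun _ : Fin n => gaussianReal 0 (P / a).toNNReal)
        {w : Fin n → ℝ | ∃ z : Fin n → ℤ, inFineLattice p m ℓ n H z ∧
          ¬(∀ j, (p : ℤ) ∣ (z j - enc H j)) ∧
          Real.sqrt (∑ j, (a / (1 + a) * (enc H j + w j) - (z j : ℝ)) ^ 2) ≤
            Real.sqrt (∑ j, (a / (1 + a) * (enc H j + w j) - (enc H j : ℝ)) ^ 2)}) ≤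
    ENNReal.ofReal ((p : ℝ) ^ (m * n) *
      ((p : ℝ) ^ m / (L - 1) + (2 * K + 8 / θ) / ((β * (1 / θ ^ 2 - 1 / θ)) ^ 2 * n)
      + ((p : ℝ) ^ m * (p : ℝ) ^ (m - ℓ))⁻¹ *
        ((Real.exp (1 / 2) * (1 + √(2 * Real.pi * P / θ))) ^ n *
         (Real.exp (1 / 2) * (1 + √(2 * Real.pi * P * β / θ ^ 2))) ^ n)
      + ((p : ℝ) ^ m)⁻¹ * (p * (Real.exp (1 / 2) * (1 + √(Real.pi * P / (1 / 2 + κ * (1 - 2 * β) / 4)) +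
        Real.exp (-(κ / 4 * p / (2 * P))) * (1 + √(2 * Real.pi * P / (κ / 4))) ^ 2)) ^ n))) := by
  obtain ⟨K, hK0, hK⟩ := effective_noise_tail
  refine ⟨K, hK0, ?_⟩
  intro n p m ℓ _ hn a β θ κ P ε L ha hβ hP hκ0 hκ1 hκ2 hθ1 hθ3 hθ2 hε hL hpm hcard s enc henc
  have hn' : (0 : ℝ) < n := by exact_mod_cast hn
  have hθ0 : 0 < θ := by linarith
  have ha0 : 0 < a := by linarith
  have hβ0 : 0 < β := by rw [hβ]; positivity
  have hβ1 : β < 1 / 2 := by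
    rw [hβ]; exact one_div_lt_one_div_of_lt (by norm_num) (by linarith)
  set α := a / (1 + a) with hα
  have hαβ : α = 1 - β := by rw [hα, hβ]; field_simp; ring
  have hαa : α = a * β := by rw [hα, hβ]; field_simp
  set v : NNReal := (P / a).toNNReal with hv
  have hvr : (v : ℝ) = P / a := Real.coe_toNNReal _ (by positivity)
  have hαv : α ^ 2 * v = (1 - β) * β * P := by
    rw [hvr, sq]; nth_rewrite 2 [hαa]; rw [hαβ]; field_simp
  set μ := (Measure.pi fun _ : Fin n => gaussianReal 0 v) with hμ
  set ρ2 := n * P / θ with hρ2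
  set r2 := n * P * β / θ ^ 2 with hr2
  have hρ20 : 0 < ρ2 := by positivity
  have hr20 : 0 < r2 := by positivity
  set X := (int_ball_finite n ρ2).toFinset with hX
  have hmem : ∀ x, x ∈ X ↔ ∑ i, (x i : ℝ) ^ 2 ≤ ρ2 := by intro x; simp [hX]
  let F : Matrix (Fin m) (Fin n) (ZMod p) → Set (Fin n → ℝ) := fun H =>
    {w : Fin n → ℝ | ∃ z : Fin n → ℤ, inFineLattice p m ℓ n H z ∧
          ¬(∀ j, (p : ℤ) ∣ (z j - enc H j)) ∧
          Real.sqrt (∑ j, (α * (enc H j + w j) - (z j : ℝ)) ^ 2) ≤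
            Real.sqrt (∑ j, (α * (enc H j + w j) - (enc H j : ℝ)) ^ 2)}
  let S : (Fin n → ℤ) → Set (Fin n → ℝ) := fun x =>
    {w | r2 ≤ ∑ i, (α * (x i + w i) - x i) ^ 2}
  let E : (Fin n → ℤ) → (Fin n → ℤ) → Set (Fin n → ℝ) := fun x z =>
    {w | ∑ i, (α * (x i + w i) - z i) ^ 2 ≤ r2}
  let D : (Fin n → ℤ) → (Fin n → ℤ) → Set (Fin n → ℝ) := fun x z =>
    {w | ∑ i, (α * (x i + w i) - z i) ^ 2 ≤ ∑ i, (α * (x i + w i) - x i) ^ 2}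
  set T₂ := (2 * K + 8 / θ) / ((β * (1 / θ ^ 2 - 1 / θ)) ^ 2 * n) with hT₂def
  set Bρ := (Real.exp (1 / 2) * (1 + √(2 * Real.pi * P / θ))) ^ n with hBρdef
  set Br := (Real.exp (1 / 2) * (1 + √(2 * Real.pi * P * β / θ ^ 2))) ^ n with hBrdef
  set μ₀ := 1 / 2 + κ * (1 - 2 * β) / 4 with hμ₀
  set G := 1 + √(Real.pi * P / μ₀) +
        Real.exp (-(κ / 4 * p / (2 * P))) * (1 + √(2 * Real.pi * P / (κ / 4))) ^ 2 with hGdef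
  have hμ₀0 : 0 < μ₀ := by
    have := mul_pos hκ0 (by linarith : 0 < 1 - 2 * β)
    rw [hμ₀]; linarith
  have hG0 : 0 ≤ G := by positivity
  have hT₂0 : 0 ≤ T₂ := by positivity
  have hD : ∀ x z, D x z ⊆ S x ∪ E x z := by
    intro x z w hw
    rcases le_total r2 (∑ i, (α * (x i + w i) - x i) ^ 2) with h | h
    · exact Or.inl h
    · exact Or.inr (le_trans hw h)
  have hT₂ : ∀ x ∈ X, μ (S x) ≤ ENNReal.ofReal T₂ := by
    intro x hx
    rw [hmem] at hx
    set ζ := β * (1 / θ ^ 2 - 1 / θ) with hζ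
    have hζ0 : 0 < ζ := by
      refine mul_pos hβ0 (sub_pos.2 ?_)
      exact one_div_lt_one_div_of_lt (by positivity) (by nlinarith)
    have hg : 0 < n * P * ζ := by positivity
    refine le_trans (measure_mono ?_) ((hK n v α β (n * P * ζ) (fun i => (x i : ℝ)) hg).trans
      (ENNReal.ofReal_le_ofReal ?_))
    · intro w hw
      have hw : r2 ≤ ∑ i, (α * (x i + w i) - x i) ^ 2 := hw
      have e : ∑ i, (α * (x i + w i) - x i) ^ 2 = ∑ i, (α * w i - β * x i) ^ 2 :=
        Finset.sum_congr rfl fun i _ => by rw [hαβ]; ring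
      change (n : ℝ) * (α ^ 2 * v) + β ^ 2 * ∑ i, (x i : ℝ) ^ 2 + n * P * ζ ≤
        ∑ i, (α * w i - β * x i) ^ 2
      rw [← e]
      refine le_trans ?_ hw
      rw [hαv]
      have h1 : β ^ 2 * ∑ i, (x i : ℝ) ^ 2 ≤ β ^ 2 * ρ2 := by gcongr
      have h2 : n * ((1 - β) * β * P) ≤ (1 - β) * β * ρ2 := by
        rw [hρ2]
        have : (n : ℝ) * P ≤ n * P / θ := by
          rw [le_div_iff₀ hθ0]; nlinarith [mul_pos hn' hP]
        have h4 : 0 ≤ (1 - β) * β := mul_nonneg (by linarith) hβ0.le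
        nlinarith [mul_le_mul_of_nonneg_left this h4]
      have h3 : (1 - β) * β * ρ2 + β ^ 2 * ρ2 + n * P * ζ = r2 := by
        rw [hρ2, hr2, hζ]; field_simp; ring
      linarith
    · refine (noise_const_le hK0 hn' hP hθ0 hζ0 ?_ ?_ hβ0.le (by linarith) v.2 ?_ hx).trans_eq hT₂def.symm
      · rw [hαβ]; linarith
      · rw [hαβ]; linarith
      · exact hvr.trans_le (div_le_self hP.le ha.le)
  have hBr : ∀ x, ∑' z, μ (E x z) ≤ ENNReal.ofReal Br := by
    intro x
    have h := tsum_close_le v α (θ ^ 2 / (2 * P * β)) (by positivity) r2 (fun i => (x i : ℝ))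
    refine h.trans_eq ?_
    congr 1
    rw [hBrdef, mul_pow, ← Real.exp_nat_mul]
    have e1 : θ ^ 2 / (2 * P * β) * r2 = n * (1 / 2) := by rw [hr2]; field_simp
    have e2 : Real.pi / (θ ^ 2 / (2 * P * β)) = 2 * Real.pi * P * β / θ ^ 2 := by field_simp
    rw [e1, e2]
  have hBρ : (X.card : ℝ) ≤ Bρ := by
    have h := tsum_ball_le (n := n) (θ / (2 * P)) (by positivity) ρ2 0
    have h2 : (X.card : ENNReal) ≤ ENNReal.ofReal Bρ := by
      refine le_trans (le_trans ?_ (ENNReal.sum_le_tsum X)) (h.trans_eq ?_)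
      · rw [Finset.card_eq_sum_ones, Nat.cast_sum]
        refine Finset.sum_le_sum fun x hx => ?_
        rw [hmem] at hx
        rw [if_pos (by simpa using hx)]; simp
      · congr 1
        rw [hBρdef, mul_pow, ← Real.exp_nat_mul]
        have e1 : θ / (2 * P) * ρ2 = n * (1 / 2) := by rw [hρ2]; field_simp
        have e2 : Real.pi / (θ / (2 * P)) = 2 * Real.pi * P / θ := by field_simp
        rw [e1, e2]
    rw [← ENNReal.ofReal_natCast] at h2
    exact (ENNReal.ofReal_le_ofReal_iff (by positivity)).1 h2
  have hFD : ∀ H, ∀ w ∈ F H, ∃ z, (∀ i : Fin m, ℓ ≤ (i : ℕ) → H.mulVec (redMod p z) i = 0) ∧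
      redMod p z ≠ redMod p (enc H) ∧ w ∈ D (enc H) z := by
    rintro H w ⟨z, h1, h2, h3⟩
    refine ⟨z, h1, redMod_ne _ _ h2, ?_⟩
    exact (Real.sqrt_le_sqrt_iff (Finset.sum_nonneg fun i _ => sq_nonneg _)).1 h3
  change ∑ H, μ (F H) ≤ _
  -- for the zero syndrome the transmitted point is the origin
  by_cases hs : target m ℓ s = 0
  · have hz : ∀ H : Matrix (Fin m) (Fin n) (ZMod p), hasSyndrome p m ℓ n s H 0 := by
      intro H
      rw [hasSyndrome_iff, hs]
      have : redMod p (0 : Fin n → ℤ) = 0 := by funext i; simp [redMod]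
      rw [this, Matrix.mulVec_zero]
    have henc0 : ∀ H, enc H = 0 := by
      intro H
      have h := (henc H ⟨0, hz H⟩).2 0 (hz H)
      have h0 : intNorm (0 : Fin n → ℤ) = 0 := by simp [intNorm]
      rw [h0, intNorm, Real.sqrt_le_iff] at h
      have h2 := (Finset.sum_eq_zero_iff_of_nonneg fun i _ => sq_nonneg _).1
        (le_antisymm (h.2.trans_eq (by norm_num)) (Finset.sum_nonneg fun i _ => sq_nonneg _))
      funext i
      have := h2 i (Finset.mem_univ i)
      simpa using this
    refine (union_bound_zero μ ℓ F (S 0) (E 0) (D 0) ?_ (hD 0) T₂ Br hT₂0 (by positivity)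
      (hT₂ 0 ?_) (hBr 0)).trans (ENNReal.ofReal_le_ofReal ?_)
    · intro H w hw
      obtain ⟨z, h1, h2, h3⟩ := hFD H w hw
      rw [henc0 H] at h2 h3
      have : redMod p (0 : Fin n → ℤ) = 0 := by funext i; simp [redMod]
      rw [this] at h2
      exact ⟨z, h1, h2, h3⟩
    · rw [hmem]; simp [hρ20.le]
    · have hp' : (0 : ℝ) < p := by exact_mod_cast (Fact.out : p.Prime).pos
      refine mul_le_mul_of_nonneg_left ?_ (by positivity)
      have h1 : 0 ≤ (p : ℝ) ^ m / (L - 1) := div_nonneg (by positivity) (by linarith)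
      have h2 : 0 ≤ ((p : ℝ) ^ m)⁻¹ * (p * (Real.exp (1 / 2) * G) ^ n) := by positivity
      -- the ball of radius `√ρ2` is at least as large as the number of syndromes
      have h3 : (p : ℝ) ^ m ≤ Bρ := by
        rw [hpm, hBρdef]
        gcongr
        have e1 : √(2 * Real.pi * Real.exp 1 * P) = Real.exp (1 / 2) * √(2 * Real.pi * P) := by
          rw [Real.exp_half, ← Real.sqrt_mul (Real.exp_pos _).le]
          congr 1; ring
        rw [e1]
        gcongr
        have : √(2 * Real.pi * P) ≤ √(2 * Real.pi * P / θ) := by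
          apply Real.sqrt_le_sqrt
          rw [le_div_iff₀ hθ0]
          have : 0 < 2 * Real.pi * P := by positivity
          nlinarith
        linarith
      have h4 : ((p : ℝ) ^ (m - ℓ))⁻¹ * Br ≤ ((p : ℝ) ^ m * (p : ℝ) ^ (m - ℓ))⁻¹ * (Bρ * Br) := by
        have hpm0 : 0 < (p : ℝ) ^ m := by positivity
        calc _ = ((p : ℝ) ^ m * (p : ℝ) ^ (m - ℓ))⁻¹ * ((p : ℝ) ^ m * Br) := by
              field_simp
          _ ≤ _ := by gcongr
      linarith
  · have hT₄ : ∑ x ∈ X, ∑' z, (if ∃ b : ZMod p, b ≠ 0 ∧ redMod p z = redMod p x + b • redMod p x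
        then μ (D x z) else 0) ≤ ENNReal.ofReal (p * (Real.exp (1 / 2) * G) ^ n) := by
      have h := proportional_pairs_le (n := n) p v α (θ / (2 * P)) (κ / P) ρ2 G (by positivity)
        (by positivity) hG0 ?_
      · refine h.trans_eq ?_
        congr 2
        rw [mul_pow, ← Real.exp_nat_mul]
        congr 2
        rw [hρ2]; field_simp
      -- `τ = κ / P` and `t = θ / (2 P)`, so that the exponents are a fixed form divided by `P`
      · intro b hb
        have h := lattice_theta_le p b hb (fun x d => θ / 2 * x ^ 2 + κ * (d ^ 2 + 2 * β * x * d)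
          - 2 * κ ^ 2 * ((1 - β) * β) * d ^ 2) (by intros; ring) P μ₀ (κ / 4) hP hμ₀0
          (by positivity) (form_int hβ0 hβ1 hκ0 hκ1 hκ2 hθ1 hθ2)
          (form_pos hβ0 hβ1 hκ0 hκ1 hκ2 hθ1)
        refine le_trans (le_of_eq ?_) h
        refine tsum_congr fun y => ?_
        congr 4
        rw [show 2 * (κ / P) ^ 2 * α ^ 2 * v = 2 * (κ / P) ^ 2 * (α ^ 2 * v) by ring, hαv,
          hαβ]
        field_simp
        ring
    have hT₁ := card_bad_le (n := n) (m := m) p (target m ℓ s) hs ρ2 (ε / P) L (by positivity)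
      hcard hL
    refine union_bound μ ℓ (target m ℓ s) hs enc F X S E D ?_ hFD hD _ T₂ Bρ Br _
      (div_nonneg (by positivity) (by linarith)) hT₂0 (by positivity) (by positivity)
      (by positivity) hT₁ hT₂ hBρ hBr hT₄
    rintro H ⟨x, hx, hxt⟩
    have hx1 := (hasSyndrome_iff s H x).2 hxt
    obtain ⟨h1, h2⟩ := henc H ⟨x, hx1⟩
    refine ⟨?_, (hasSyndrome_iff s H _).1 h1⟩
    rw [hmem] at hx ⊢
    have h3 := (Real.sqrt_le_sqrt_iff (Finset.sum_nonneg fun i _ => sq_nonneg _)).1 (h2 x hx1)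
    exact h3.trans hx

/-! ### Asymptotics -/

lemma pow_le_geometric {l : Filter ℕ} {b : ℕ → ℝ} {L : ℝ} (hb : Tendsto b l (nhds L))
    (hL : L < 1) (hb0 : ∀ᶠ n in l, 0 ≤ b n) :
    ∃ r : ℝ, 0 < r ∧ r < 1 ∧ ∀ᶠ n in l, b n ^ n ≤ r ^ n := by
  obtain ⟨r, h1, h2⟩ := exists_between (max_lt hL (zero_lt_one' ℝ))
  refine ⟨r, (le_max_right _ _).trans_lt h1, h2, ?_⟩
  filter_upwards [hb.eventually_lt_const ((le_max_left _ _).trans_lt h1), hb0] with n h h'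
  exact pow_le_pow_left₀ h' h.le n

lemma tendsto_pow_zero {l : Filter ℕ} (hl : l ≤ atTop) {b : ℕ → ℝ} {L : ℝ}
    (hb : Tendsto b l (nhds L)) (hL : L < 1) (hb0 : ∀ᶠ n in l, 0 ≤ b n) :
    Tendsto (fun n => b n ^ n) l (nhds 0) := by
  obtain ⟨r, h0, h1, h⟩ := pow_le_geometric hb hL hb0
  refine squeeze_zero' ?_ h ((tendsto_pow_atTop_nhds_zero_of_lt_one h0.le h1).mono_left hl)
  filter_upwards [hb0] with n hn using pow_nonneg hn n

/-- Geometric decay beats a factor of polynomial growth. -/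
lemma tendsto_mul_pow_zero {l : Filter ℕ} (hl : l ≤ atTop) {b q : ℕ → ℝ} {L lam : ℝ}
    (hb : Tendsto b l (nhds L)) (hL : L < 1) (hb0 : ∀ᶠ n in l, 0 ≤ b n) (hq0 : ∀ n, 0 ≤ q n)
    (hq : Tendsto (fun n : ℕ => q n / (n : ℝ) ^ lam) l (nhds 1)) :
    Tendsto (fun n => q n * b n ^ n) l (nhds 0) := by
  obtain ⟨r, h0, h1, h⟩ := pow_le_geometric hb hL hb0
  obtain ⟨k, hk⟩ := exists_nat_ge lam
  have hlim := ((tendsto_pow_const_mul_const_pow_of_abs_lt_one k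
    (r := r) (by rwa [abs_of_pos h0])).const_mul 2).mono_left hl
  rw [mul_zero] at hlim
  refine squeeze_zero' ?_ ?_ hlim
  · filter_upwards [hb0] with n hn using mul_nonneg (hq0 n) (pow_nonneg hn n)
  · filter_upwards [h, hq.eventually_lt_const one_lt_two, hl (eventually_ge_atTop 1), hb0]
      with n h2 h3 h4 h5
    have hn : (1 : ℝ) ≤ n := by exact_mod_cast h4
    have h6 : q n ≤ 2 * (n : ℝ) ^ k := by
      rw [div_lt_iff₀ (Real.rpow_pos_of_pos (by linarith) _)] at h3
      have := Real.rpow_le_rpow_of_exponent_le hn hk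
      rw [Real.rpow_natCast] at this
      linarith
    calc _ ≤ (2 * (n : ℝ) ^ k) * r ^ n := mul_le_mul h6 h2 (pow_nonneg h5 n) (by positivity)
      _ = _ := by ring

lemma tendsto_pow_atTop_of_gt {l : Filter ℕ} (hl : l ≤ atTop) {y : ℕ → ℝ} {L : ℝ}
    (hy : Tendsto y l (nhds L)) (hL : 1 < L) : Tendsto (fun n => y n ^ n) l atTop := by
  obtain ⟨r, h1, h2⟩ := exists_between hL
  refine tendsto_atTop_mono' l ?_ ((tendsto_pow_atTop_atTop_of_one_lt h1).mono_left hl)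
  filter_upwards [hy.eventually_const_lt h2] with n h
  exact pow_le_pow_left₀ (by linarith) h.le n

lemma sqrt_split (P : ℝ) :
    √(2 * Real.pi * Real.exp 1 * P) = Real.exp (1 / 2) * √(2 * Real.pi * P) := by
  rw [Real.exp_half, ← Real.sqrt_mul (Real.exp_pos _).le]
  congr 1; ring

/-- The per-coordinate growth rate of a theta function, relative to that of the volume of the
ball of radius `√(n P)`. -/
lemma tendsto_theta_ratio {l : Filter ℕ} {P : ℕ → ℝ} (hP : Tendsto P l atTop) (c : ℝ) :
    Tendsto (fun n => Real.exp (1 / 2) * (1 + √(2 * Real.pi * P n * c)) /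
      √(2 * Real.pi * Real.exp 1 * P n)) l (nhds (√c)) := by
  have h1 : Tendsto (fun n => √(2 * Real.pi * P n)) l atTop :=
    Real.tendsto_sqrt_atTop.comp (hP.const_mul_atTop (by positivity))
  have h2 := (tendsto_inv_atTop_zero.comp h1).add_const (√c)
  rw [zero_add] at h2
  refine h2.congr' ?_
  filter_upwards [hP.eventually_gt_atTop 0] with n hn
  rw [sqrt_split, mul_div_mul_left _ _ (Real.exp_pos _).ne', Real.sqrt_mul (by positivity)]
  have : √(2 * Real.pi * P n) ≠ 0 := by positivity
  simp only [Function.comp]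
  field_simp

/-- The long vectors of the planar lattices, of squared length at least `p`, contribute a negligible
amount as soon as `p / P` grows like a positive power of `p`, that is when `R > 1 / 2`. -/
lemma tendsto_wrap_zero {l : Filter ℕ} {q P : ℕ → ℝ} (R c : ℝ) (hR : 1 / 2 < R) (hR1 : R < 1)
    (hc : 0 < c) (hq : Tendsto q l atTop)
    (hPq : ∀ n, P n = q n ^ (2 * (1 - R)) / (2 * Real.pi * Real.exp 1)) :
    Tendsto (fun n => Real.exp (-(c * q n / (2 * P n))) * (1 + √(2 * Real.pi * P n / c)) ^ 2 /
      √(2 * Real.pi * P n)) l (nhds 0) := by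
  have hs : 0 < 2 * R - 1 := by linarith
  have ht := (tendsto_rpow_atTop hs).comp hq
  have h1 := ((tendsto_rpow_mul_exp_neg_mul_atTop_nhds_zero (2 * (1 - R) / (2 * R - 1))
    (c * Real.pi * Real.exp 1) (by positivity)).comp ht).const_mul
      (2 + 4 * Real.pi / c)
  rw [mul_zero] at h1
  have hPT : Tendsto P l atTop := by
    have := ((tendsto_rpow_atTop (by linarith : 0 < 2 * (1 - R))).comp hq).atTop_div_const
      (by positivity : 0 < 2 * Real.pi * Real.exp 1)
    exact this.congr fun n => (hPq n).symm
  refine squeeze_zero' (Eventually.of_forall fun n => by positivity) ?_ h1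
  filter_upwards [hPT.eventually_ge_atTop 1, hq.eventually_gt_atTop 0] with n hP hq0
  have hpi := Real.pi_gt_three
  have e1 : c * q n / (2 * P n) = c * Real.pi * Real.exp 1 * q n ^ (2 * R - 1) := by
    rw [hPq n, show 2 * R - 1 = 1 - 2 * (1 - R) by ring, Real.rpow_sub hq0, Real.rpow_one]
    have : q n ^ (2 * (1 - R)) ≠ 0 := (Real.rpow_pos_of_pos hq0 _).ne'
    field_simp
  have e2 : (q n ^ (2 * R - 1)) ^ (2 * (1 - R) / (2 * R - 1)) = q n ^ (2 * (1 - R)) := by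
    rw [← Real.rpow_mul hq0.le]; congr 1; field_simp
  have e3 : P n ≤ q n ^ (2 * (1 - R)) := by
    rw [hPq n]
    refine div_le_self (Real.rpow_pos_of_pos hq0 _).le ?_
    have := Real.add_one_le_exp (1 : ℝ)
    nlinarith
  have e4 : (1 + √(2 * Real.pi * P n / c)) ^ 2 ≤ (2 + 4 * Real.pi / c) * P n := by
    have h5 : 0 ≤ 2 * Real.pi * P n / c := by positivity
    have h6 := Real.sq_sqrt h5
    have h7 : 2 * (2 * Real.pi * P n / c) = 4 * Real.pi / c * P n := by ring
    nlinarith [sq_nonneg (1 - √(2 * Real.pi * P n / c))]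
  have e5 : 1 ≤ √(2 * Real.pi * P n) := by
    rw [Real.one_le_sqrt]; nlinarith
  simp only [Function.comp]
  rw [e2, e1]
  refine (div_le_self (by positivity) e5).trans ?_
  rw [neg_mul]
  have h8 : (1 + √(2 * Real.pi * P n / c)) ^ 2 ≤
      (2 + 4 * Real.pi / c) * q n ^ (2 * (1 - R)) := e4.trans (by gcongr)
  calc _ ≤ Real.exp (-(c * Real.pi * Real.exp 1 * q n ^ (2 * R - 1))) *
        ((2 + 4 * Real.pi / c) * q n ^ (2 * (1 - R))) := by gcongr
    _ = _ := by ring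

/-- The per-coordinate ratio between the number of lattice points in the code ball and the number
of syndromes times the bound on the number of lattice points per residue class. -/
lemma tendsto_margin {l : Filter ℕ} {q P : ℕ → ℝ} (R θ ϑ ε : ℝ) (hR : 1 / 2 < R) (hR1 : R < 1)
    (hϑ : 0 < ϑ) (hε : 0 < ε) (hq : Tendsto q l atTop) (hP : Tendsto P l atTop)
    (hPq : ∀ n, P n = q n ^ (2 * (1 - R)) / (2 * Real.pi * Real.exp 1)) :
    Tendsto (fun n => √(2 * Real.pi * Real.exp 1 * ϑ) * (√(P n / θ) - 1 / 2) /
      (Real.exp (ε / θ) * (1 + √(Real.pi / (ε / P n)) / q n) *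
        √(2 * Real.pi * Real.exp 1 * P n))) l
      (nhds (√ϑ * √(1 / θ) / Real.exp (ε / θ))) := by
  have hsP : Tendsto (fun n => √(P n)) l atTop := Real.tendsto_sqrt_atTop.comp hP
  have hsq : Tendsto (fun n => √(q n)) l atTop := Real.tendsto_sqrt_atTop.comp hq
  have h0 : Tendsto (fun n => √(P n) / q n) l (nhds 0) := by
    refine squeeze_zero' ?_ ?_ (tendsto_inv_atTop_zero.comp hsq)
    · filter_upwards [hq.eventually_gt_atTop 0] with n hn using by positivity
    · filter_upwards [hq.eventually_ge_atTop 1] with n hn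
      have hPq' : P n ≤ q n := by
        rw [hPq n]
        refine (div_le_self (Real.rpow_pos_of_pos (by linarith) _).le ?_).trans ?_
        · have := Real.add_one_le_exp (1 : ℝ)
          nlinarith [Real.pi_gt_three]
        · calc _ ≤ q n ^ (1 : ℝ) := Real.rpow_le_rpow_of_exponent_le hn (by linarith)
            _ = _ := Real.rpow_one _
      have h3 : √(P n) ≤ √(q n) := Real.sqrt_le_sqrt hPq'
      have h4 : 0 < √(q n) := Real.sqrt_pos.2 (by linarith)
      simp only [Function.comp]
      rw [div_le_iff₀ (by linarith)]
      nth_rewrite 2 [← Real.mul_self_sqrt (show 0 ≤ q n by linarith)]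
      rwa [inv_mul_cancel_left₀ h4.ne']
  have h1 : Tendsto (fun n => √ϑ * (√(1 / θ) - 1 / 2 * (√(P n))⁻¹) /
      (Real.exp (ε / θ) * (1 + √(Real.pi / ε) * (√(P n) / q n)))) l
      (nhds (√ϑ * (√(1 / θ) - 1 / 2 * 0) / (Real.exp (ε / θ) * (1 + √(Real.pi / ε) * 0)))) := by
    refine Tendsto.div ?_ ?_ (by simp [Real.exp_ne_zero])
    · exact tendsto_const_nhds.mul (tendsto_const_nhds.sub
        (tendsto_const_nhds.mul (tendsto_inv_atTop_zero.comp hsP)))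
    · exact tendsto_const_nhds.mul (tendsto_const_nhds.add (tendsto_const_nhds.mul h0))
  rw [mul_zero, sub_zero, mul_zero, add_zero, mul_one] at h1
  refine h1.congr' ?_
  filter_upwards [hP.eventually_gt_atTop 0, hq.eventually_gt_atTop 0] with n hn hqn
  have hs : 0 < √(P n) := Real.sqrt_pos.2 hn
  have hc : 0 < √(2 * Real.pi * Real.exp 1) := by positivity
  rw [Real.sqrt_mul (by positivity) ϑ, Real.sqrt_mul (by positivity) (P n),
    show P n / θ = P n * (1 / θ) by ring, Real.sqrt_mul hn.le,
    show Real.pi / (ε / P n) = Real.pi / ε * P n by field_simp,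
    Real.sqrt_mul (by positivity : 0 ≤ Real.pi / ε)]
  have : 0 < 1 + √(Real.pi / ε) * (√(P n) / q n) := by positivity
  field_simp

/-- The factor `√(2 π e ϑ / n) (√(n P / θ) - √n / 2)` of the lattice point count does not depend
on the dimension. -/
lemma margin_scale {N P θ ϑ : ℝ} (hN : 0 < N) (hϑ : 0 < ϑ) :
    √(2 * Real.pi * Real.exp 1 * ϑ / N) * (√(N * P / θ) - √N / 2) =
      √(2 * Real.pi * Real.exp 1 * ϑ) * (√(P / θ) - 1 / 2) := by
  have : 0 < √N := Real.sqrt_pos.2 hN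
  rw [Real.sqrt_div (by positivity), mul_div_assoc, Real.sqrt_mul hN.le]
  field_simp

/-- Choice of the slack parameters `θ < 1` (radii) and `ε > 0` (tilting). -/
lemma exists_params (a γ κ β : ℝ) (ha : 1 < a) (hβ : β = 1 / (1 + a)) (hγ : γ < 1) (hκ : 0 < κ) :
    ∃ θ ε : ℝ, 3 / 4 ≤ θ ∧ θ < 1 ∧ 1 - κ * (1 - 2 * β) / 2 ≤ θ ∧ 0 < ε ∧
      Real.exp (γ / 2 * Real.log (1 + a)) * √(1 / θ) * √(β / θ ^ 2) < 1 ∧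
      1 < √(√θ) * √(1 / θ) / Real.exp (ε / θ) := by
  have hβ1 : β < 1 / 2 := by
    rw [hβ]; exact one_div_lt_one_div_of_lt (by norm_num) (by linarith)
  have hlog : 0 < Real.log (1 + a) := Real.log_pos (by linarith)
  have hc : ContinuousAt (fun θ : ℝ =>
      Real.exp (γ / 2 * Real.log (1 + a)) * √(1 / θ) * √(β / θ ^ 2)) 1 := by
    refine ContinuousAt.mul (continuousAt_const.mul ?_) ?_
    · exact (continuousAt_const.div continuousAt_id one_ne_zero).sqrt
    · exact (continuousAt_const.div (continuousAt_id.pow 2) (by norm_num)).sqrt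
  have h1 : Real.exp (γ / 2 * Real.log (1 + a)) * √(1 / 1) * √(β / 1 ^ 2) < 1 := by
    have e : √(β / 1 ^ 2) = Real.exp (-(Real.log (1 + a) / 2)) := by
      rw [hβ, one_pow, div_one, one_div, Real.sqrt_inv, Real.exp_neg, Real.exp_half,
        Real.exp_log (by linarith)]
    rw [e, div_one, Real.sqrt_one, mul_one, ← Real.exp_add, Real.exp_lt_one_iff]
    nlinarith
  have hev := hc.eventually_lt_const h1
  have h3 : ∀ᶠ θ : ℝ in nhds 1, 1 - κ * (1 - 2 * β) / 2 < θ := by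
    refine lt_mem_nhds ?_
    have := mul_pos hκ (by linarith : 0 < 1 - 2 * β)
    linarith
  have h2 : ∀ᶠ θ : ℝ in nhds 1, 3 / 4 < θ := lt_mem_nhds (by norm_num)
  obtain ⟨θ, ⟨⟨hA, hB⟩, hC⟩, hD⟩ := (((hev.and h2).and h3).filter_mono
    (nhdsWithin_le_nhds (s := Set.Iio 1)) |>.and self_mem_nhdsWithin).exists
  have hD' : θ < 1 := hD
  have hθ0 : 0 < θ := by linarith
  have h4 : 1 < √(√θ) * √(1 / θ) / Real.exp (0 / θ) := by
    rw [zero_div, Real.exp_zero, div_one, ← Real.sqrt_mul (Real.sqrt_nonneg _), Real.lt_sqrt,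
      one_pow, mul_one_div, lt_div_iff₀ hθ0, one_mul, Real.lt_sqrt]
    · nlinarith
    · exact hθ0.le
    · norm_num
  have hc2 : ContinuousAt (fun ε : ℝ => √(√θ) * √(1 / θ) / Real.exp (ε / θ)) 0 := by
    have : Continuous (fun ε : ℝ => √(√θ) * √(1 / θ) / Real.exp (ε / θ)) := by
      refine continuous_const.div (by fun_prop) fun ε => Real.exp_ne_zero _
    exact this.continuousAt
  obtain ⟨ε, hE, hF⟩ := (((hc2.eventually_const_lt h4).filter_mono
    (nhdsWithin_le_nhds (s := Set.Ioi 0))).and self_mem_nhdsWithin).exists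
  exact ⟨θ, ε, hB.le, hD', hC.le, hF, hA, hE⟩

/-! ### The error probability tends to zero -/

/-- **Construction-A lattice codes achieve AWGN capacity under MMSE lattice decoding
(error-probability form).**  Fix `SNR > 1`, a rational `R ∈ (1/2,1)`, `γ ∈ (0,1)` and
`λ > 1/(1+R)`.  Let `p(n)` be primes with `p(n)/n^λ → 1`, restrict to `n` with
`n(1−R) ∈ ℕ` (i.e. `m n = n(1−R)`), and let `ℓ(n)` satisfy `0 < ℓ(n) < m(n)` and
`(ℓ(n)·ln p(n))/n → (γ/2)·ln(1+SNR)`.  Set `P(n) = p(n)^{2(1−R)}/(2πe)`,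
`σ(n)² = P(n)/SNR` and `α = SNR/(1+SNR)`.  Let `H` be a uniformly random `m(n) × n` matrix
over `𝔽_{p(n)}`, `w` an independent Gaussian vector with i.i.d. `N(0,σ(n)²)` coordinates,
and for each syndrome `s` let `enc n H` be a chosen minimum-norm solution of
`H'x ≡ s, H_f x ≡ 0` (whenever solutions exist).  Then the probability of the
decoding-failure event
`F(s) = {∃ z ∈ Λ_f : z ≢ x_s (mod p), ‖α(x_s+w) − z‖ ≤ ‖α(x_s+w) − x_s‖}` tends to `0`. -/
theorem constructionA_capacity_error_probability
    (SNR : ℝ) (hSNR : 1 < SNR) (R : ℚ) (hR : 1/2 < R ∧ R < 1)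
    (γ : ℝ) (hγ : 0 < γ ∧ γ < 1) (lam : ℝ) (hlam : 1 / (1 + (R : ℝ)) < lam)
    (p : ℕ → ℕ) (hp : ∀ n, (p n).Prime)
    (hpn : Tendsto (fun n : ℕ => (p n : ℝ) / (n : ℝ) ^ lam) atTop (nhds 1))
    (m ℓ : ℕ → ℕ) (hℓ : ∀ n, 0 < ℓ n ∧ ℓ n < m n)
    (hrate : Tendsto (fun n : ℕ => ((ℓ n : ℝ) * Real.log (p n)) / (n : ℝ)) atTop
      (nhds ((γ / 2) * Real.log (1 + SNR))))
    (P : ℕ → ℝ) (hPdef : ∀ n, P n = (p n : ℝ) ^ (2 * (1 - (R : ℝ))) / (2 * Real.pi * Real.exp 1))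
    (σ : ℕ → ℝ) (hσdef : ∀ n, σ n = Real.sqrt (P n / SNR))
    (α : ℕ → ℝ) (hαdef : ∀ n, α n = SNR / (1 + SNR))
    (s : (n : ℕ) → Fin (ℓ n) → ZMod (p n))
    (enc : (n : ℕ) → Matrix (Fin (m n)) (Fin n) (ZMod (p n)) → (Fin n → ℤ))
    (henc : ∀ n (Hm : Matrix (Fin (m n)) (Fin n) (ZMod (p n))),
      (∃ x, hasSyndrome (p n) (m n) (ℓ n) n (s n) Hm x) →
        hasSyndrome (p n) (m n) (ℓ n) n (s n) Hm (enc n Hm) ∧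
        ∀ z, hasSyndrome (p n) (m n) (ℓ n) n (s n) Hm z → intNorm (enc n Hm) ≤ intNorm z) :
    Tendsto
      (fun n : ℕ =>
        letI : NeZero (p n) := ⟨(hp n).ne_zero⟩
        (∑ Hm : Matrix (Fin (m n)) (Fin n) (ZMod (p n)),
          ((Measure.pi fun _ : Fin n => gaussianReal 0 ((σ n ^ 2).toNNReal))
            {w : Fin n → ℝ | ∃ z : Fin n → ℤ,
              inFineLattice (p n) (m n) (ℓ n) n Hm z ∧
              ¬(∀ j, (p n : ℤ) ∣ (z j - enc n Hm j)) ∧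
              Real.sqrt (∑ j, (α n * (enc n Hm j + w j) - (z j : ℝ)) ^ 2) ≤
                Real.sqrt (∑ j, (α n * (enc n Hm j + w j) - (enc n Hm j : ℝ)) ^ 2)}).toReal)
          / (p n : ℝ) ^ (m n * n))
      (atTop ⊓ Filter.principal {n : ℕ | (m n : ℚ) = (n : ℚ) * (1 - R)}) (nhds 0) := by
  obtain ⟨K, hK0, hfin⟩ := finite_bound
  have hR1 : (1 : ℝ) / 2 < R := by
    have := (Rat.cast_lt (K := ℝ)).2 hR.1
    push_cast at this
    exact this
  have hR2 : (R : ℝ) < 1 := by exact_mod_cast hR.2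
  set a := SNR with ha_def
  set β := 1 / (1 + a) with hβ
  have hβ0 : 0 < β := by positivity
  have hβ1 : β < 1 / 2 := by
    rw [hβ]; exact one_div_lt_one_div_of_lt (by norm_num) (by linarith)
  set κ := min (1 / 4) (1 - 2 * β) with hκ
  have hκ0 : 0 < κ := lt_min (by norm_num) (by linarith)
  obtain ⟨θ, ε, hθ1, hθ3, hθ2, hε, hT3, hmargin⟩ := exists_params a γ κ β hSNR hβ hγ.2 hκ0
  have hθ0 : 0 < θ := by linarith
  have hϑ0 : 0 < √θ := Real.sqrt_pos.2 hθ0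
  have hϑ1 : √θ < 1 := by rw [Real.sqrt_lt' one_pos]; linarith
  set l := atTop ⊓ Filter.principal {n : ℕ | (m n : ℚ) = (n : ℚ) * (1 - R)} with hl_def
  have hl : l ≤ atTop := inf_le_left
  have hpos : ∀ᶠ n in l, 0 < n := hl (eventually_gt_atTop 0)
  have hmR : ∀ᶠ n in l, (m n : ℝ) = n * (1 - R) := by
    have : ∀ᶠ n in l, (m n : ℚ) = (n : ℚ) * (1 - R) :=
      (inf_le_right : l ≤ _) (mem_principal_self _)
    filter_upwards [this] with n hn
    exact_mod_cast congrArg (Rat.cast : ℚ → ℝ) hn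
  have hp0 : ∀ n, (0 : ℝ) < p n := fun n => by exact_mod_cast (hp n).pos
  have hp1 : ∀ n, (1 : ℝ) ≤ p n := fun n => by exact_mod_cast (hp n).one_le
  have hlam0 : 0 < lam := lt_trans (by positivity) hlam
  have hq : Tendsto (fun n => (p n : ℝ)) l atTop := by
    refine Tendsto.mono_left ?_ hl
    refine (hpn.pos_mul_atTop one_pos
      ((tendsto_rpow_atTop hlam0).comp tendsto_natCast_atTop_atTop)).congr' ?_
    filter_upwards [eventually_gt_atTop 0] with n hn
    have : (0 : ℝ) < (n : ℝ) ^ lam := Real.rpow_pos_of_pos (by exact_mod_cast hn) _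
    simp only [Function.comp]
    field_simp
  have hP0 : ∀ n, 0 < P n := fun n => by
    rw [hPdef n]
    exact div_pos (Real.rpow_pos_of_pos (hp0 n) _) (by positivity)
  have hPT : Tendsto P l atTop := by
    have := ((tendsto_rpow_atTop (by linarith : 0 < 2 * (1 - (R : ℝ)))).comp hq).atTop_div_const
      (by positivity : 0 < 2 * Real.pi * Real.exp 1)
    exact this.congr fun n => (hPdef n).symm
  -- the number of syndromes matches the volume of the ball of radius `√(n P)`
  have hpm : ∀ᶠ n in l, (p n : ℝ) ^ m n = √(2 * Real.pi * Real.exp 1 * P n) ^ n := by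
    filter_upwards [hmR] with n hn
    have e : 2 * Real.pi * Real.exp 1 * P n = ((p n : ℝ) ^ (1 - (R : ℝ))) ^ 2 := by
      rw [hPdef n, ← Real.rpow_natCast, ← Real.rpow_mul (hp0 n).le]
      rw [mul_div_cancel₀ _ (by positivity)]
      congr 1; push_cast; ring
    rw [e, Real.sqrt_sq (Real.rpow_nonneg (hp0 n).le _), ← Real.rpow_natCast,
      ← Real.rpow_natCast, ← Real.rpow_mul (hp0 n).le, hn]
    congr 1; ring
  set y : ℕ → ℝ := fun n => √(2 * Real.pi * Real.exp 1 * √θ) * (√(P n / θ) - 1 / 2) /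
      (Real.exp (ε / θ) * (1 + √(Real.pi / (ε / P n)) / p n) *
        √(2 * Real.pi * Real.exp 1 * P n)) with hy
  have hyT : Tendsto (fun n => y n ^ n) l atTop :=
    tendsto_pow_atTop_of_gt hl (tendsto_margin R θ (√θ) ε hR1 hR2 hϑ0 hε hq hPT hPdef) hmargin
  have hyT' : Tendsto (fun n => (1 - √θ) * y n ^ n) l atTop :=
    hyT.const_mul_atTop (by linarith)
  set L : ℕ → ℝ := fun n => (1 - √θ) * y n ^ n * (p n : ℝ) ^ m n with hL
  have hLy : ∀ᶠ n in l, 2 ≤ (1 - √θ) * y n ^ n := hyT'.eventually_ge_atTop 2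
  have hp1m : ∀ n, (1 : ℝ) ≤ (p n : ℝ) ^ m n := fun n => one_le_pow₀ (hp1 n)
  have hL2 : ∀ᶠ n in l, 2 ≤ L n := by
    filter_upwards [hLy] with n hn
    have := hp1m n
    simp only [hL]; nlinarith
  have hcard : ∀ᶠ n in l, L n * (Real.exp (ε / P n * (n * P n / θ)) *
      (1 + √(Real.pi / (ε / P n)) / p n) ^ n) ≤
      ((int_ball_finite n (n * P n / θ)).toFinset.card : ℝ) := by
    filter_upwards [hpos, hpm, hPT.eventually_ge_atTop 1] with n hn hpmn hPn
    have hn' : (0 : ℝ) < n := by exact_mod_cast hn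
    have hPn0 := hP0 n
    have h0 : 0 ≤ n * P n / θ := by positivity
    have h := card_ball_ge hn (√θ) hϑ0 hϑ1 (√(n * P n / θ)) ?_
    · rw [margin_scale hn' hϑ0] at h
      simp only [Real.sq_sqrt h0] at h
      refine le_trans (le_of_eq ?_) h
      have e : ε / P n * (n * P n / θ) = n * (ε / θ) := by field_simp
      have h1 : 0 < √(2 * Real.pi * Real.exp 1 * P n) := by positivity
      have h2 : 0 < 1 + √(Real.pi / (ε / P n)) / p n := by
        have := hp0 n
        positivity
      simp only [hL]
      rw [hpmn, e, Real.exp_nat_mul, mul_assoc, mul_assoc, ← mul_pow, ← mul_pow, ← mul_pow]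
      congr 2
      simp only [hy]
      field_simp
    · have : √n / 2 = √(n / 4) := by
        rw [Real.sqrt_div hn'.le, show (4 : ℝ) = 2 ^ 2 by norm_num, Real.sqrt_sq (by norm_num)]
      rw [this]
      apply Real.sqrt_le_sqrt
      rw [le_div_iff₀ hθ0]
      nlinarith
  set μ₀ := 1 / 2 + κ * (1 - 2 * β) / 4 with hμ₀
  have hμ₀1 : 1 / 2 < μ₀ := by
    have := mul_pos hκ0 (by linarith : 0 < 1 - 2 * β)
    rw [hμ₀]; linarith
  -- failure to find a code point in the ball
  have hT₁ : Tendsto (fun n => (p n : ℝ) ^ m n / (L n - 1)) l (nhds 0) := by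
    have h := tendsto_const_nhds (x := (2 : ℝ)).div_atTop hyT'
    refine squeeze_zero' ?_ ?_ h
    · filter_upwards [hL2] with n hn
      exact div_nonneg (by linarith [hp1m n]) (by linarith)
    · filter_upwards [hL2, hLy] with n hn hn2
      have h1 := hp1m n
      rw [div_le_div_iff₀ (by linarith) (by linarith)]
      have : L n = (1 - √θ) * y n ^ n * (p n : ℝ) ^ m n := rfl
      linarith
  -- long effective noise
  have hT₂ : Tendsto (fun n : ℕ => (2 * K + 8 / θ) / ((β * (1 / θ ^ 2 - 1 / θ)) ^ 2 * n)) l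
      (nhds 0) := by
    refine Tendsto.mono_left ?_ hl
    have hζ : β * (1 / θ ^ 2 - 1 / θ) ≠ 0 := by
      refine (mul_pos hβ0 (sub_pos.2 ?_)).ne'
      exact one_div_lt_one_div_of_lt (by positivity) (by nlinarith)
    exact tendsto_const_nhds.div_atTop
      (tendsto_natCast_atTop_atTop.const_mul_atTop (by positivity))
  -- competitors independent of the transmitted point modulo `p`
  have hT₃ : Tendsto (fun n => ((p n : ℝ) ^ m n * (p n : ℝ) ^ (m n - ℓ n))⁻¹ *
        ((Real.exp (1 / 2) * (1 + √(2 * Real.pi * P n / θ))) ^ n *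
         (Real.exp (1 / 2) * (1 + √(2 * Real.pi * P n * β / θ ^ 2))) ^ n)) l (nhds 0) := by
    have h1 := (((Real.continuous_exp.tendsto _).comp (hrate.mono_left hl)).mul
      (tendsto_theta_ratio hPT (1 / θ))).mul (tendsto_theta_ratio hPT (β / θ ^ 2))
    refine (tendsto_pow_zero hl h1 hT3 (Eventually.of_forall fun n => ?_)).congr' ?_
    · simp only [Function.comp]; positivity
    · filter_upwards [hpos, hpm] with n hn hpmn
      have hn' : (n : ℝ) ≠ 0 := by exact_mod_cast hn.ne'
      have e1 : Real.exp (ℓ n * Real.log (p n) / n) ^ n = (p n : ℝ) ^ ℓ n := by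
        rw [← Real.exp_nat_mul, mul_div_cancel₀ _ hn', Real.exp_nat_mul, Real.exp_log (hp0 n)]
      have e2 : (p n : ℝ) ^ m n = (p n : ℝ) ^ (m n - ℓ n) * (p n : ℝ) ^ ℓ n := by
        rw [← pow_add, Nat.sub_add_cancel (hℓ n).2.le]
      simp only [Function.comp]
      rw [mul_pow, mul_pow, div_pow, div_pow, e1, ← hpmn, mul_one_div, ← mul_div_assoc]
      have h3 := (hp0 n).ne'
      nth_rewrite 2 [e2]
      field_simp
  -- competitors proportional to the transmitted point modulo `p`
  have hT₄ : Tendsto (fun n => ((p n : ℝ) ^ m n)⁻¹ * (p n * (Real.exp (1 / 2) *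
        (1 + √(Real.pi * P n / μ₀) + Real.exp (-(κ / 4 * p n / (2 * P n))) *
          (1 + √(2 * Real.pi * P n / (κ / 4))) ^ 2)) ^ n)) l (nhds 0) := by
    have h1 := (tendsto_theta_ratio hPT (1 / (2 * μ₀))).add
      (tendsto_wrap_zero R (κ / 4) hR1 hR2 (by positivity) hq hPdef)
    rw [add_zero] at h1
    have hlt : √(1 / (2 * μ₀)) < 1 := by
      rw [Real.sqrt_lt' one_pos, one_pow, div_lt_one (by linarith)]; linarith
    refine (tendsto_mul_pow_zero hl h1 hlt (Eventually.of_forall fun n => ?_)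
      (fun n => (hp0 n).le) (hpn.mono_left hl)).congr' ?_
    · have := hP0 n
      positivity
    · filter_upwards [hpm] with n hpmn
      have hPn := hP0 n
      rw [hpmn, mul_left_comm, ← inv_pow, ← mul_pow]
      congr 2
      rw [sqrt_split, show 2 * Real.pi * P n * (1 / (2 * μ₀)) = Real.pi * P n / μ₀ by
        have : μ₀ ≠ 0 := by linarith
        field_simp]
      have : 0 < √(2 * Real.pi * P n) := by positivity
      field_simp
  have hT := ((hT₁.add hT₂).add hT₃).add hT₄
  simp only [add_zero] at hT
  refine squeeze_zero' (Eventually.of_forall fun n => ?_) ?_ hT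
  · exact div_nonneg (Finset.sum_nonneg fun H _ => ENNReal.toReal_nonneg) (by positivity)
  · filter_upwards [hpos, hpm, hL2, hcard] with n hn hpmn hLn hcn
    have : Fact (p n).Prime := ⟨hp n⟩
    have h := hfin n (p n) (m n) (ℓ n) hn a β θ κ (P n) ε (L n) hSNR hβ (hP0 n) hκ0
      (min_le_left _ _) (min_le_right _ _) hθ1 hθ3 hθ2 hε (by linarith) hpmn hcn (s n) (enc n)
      (henc n)
    have hσ : (σ n ^ 2).toNNReal = (P n / a).toNNReal := by
      rw [hσdef, Real.sq_sqrt (div_nonneg (hP0 n).le (by linarith))]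
    have hpp := hp0 n
    rw [div_le_iff₀ (by positivity), mul_comm _ ((p n : ℝ) ^ (m n * n)), hσ, hαdef n,
      ← ENNReal.toReal_sum (fun H _ => measure_ne_top _ _)]
    refine ENNReal.toReal_le_of_le_ofReal ?_ h
    have hPn := hP0 n
    have : 0 ≤ (p n : ℝ) ^ m n / (L n - 1) := div_nonneg (by positivity) (by linarith)
    positivity
end

section
/- Let f > 0 be rational and Δ a positive integer with fΔ ∈ ℕ. For n with fn ∈ ℕ, consider the random bipartite multigraph G on n left vertices and fn right vertices obtained as follows: each left vertex carries fΔ sockets and each right vertex carries Δ sockets, and a uniformly random bijection between the fΔn left sockets and the fΔn right sockets is chosen; an edge joins a left vertex and a right vertex for each socket of the former matched to a socket of the latter. If D ≥ 1 and Δ > max{ (1 + 1/f)·(1 − D·h(1/D)/((D+1)·h(1/(D+1))))^{−1}, D² + 1/f }, then the probability that G is not D-good from left to right tends to 0 as n → ∞ (n ranging over integers with fn ∈ ℕ). -/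
/-! The proof is a union bound over pairs `(S, T)`, where `S` is a set of `s` left vertices violating
goodness and `T ⊇ N(S)` is a set of right vertices whose size `t` is the largest integer below
`f D s`. The image of the `a s` sockets of `S` under a uniformly random bijection is a uniformly
random set, so `N(S) ⊆ T` has probability `C(Δ t, a s) / C(a n, a s)` (`card_equiv_mapsTo`), and
the probability of not being good is at most the sum over `1 ≤ s ≤ n / (D + 1)` of
`C(n, s) C(r, t) C(Δ t, a s) / C(a n, a s)` (`bad_prob_le`).

With `x = s / n` and entropy `H` in nats, the entropy bounds for binomial coefficients show that
the term for `s` is at most a polynomial in `s` times `exp (-n F(x))`, where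
`F(x) = (a - 1) H(x) - f H(D x) - a D x H(1/D)` is the function `rate`. The condition
`Δ > D² + 1/f` makes `F` concave on `[0, 1/(D+1)]` (`rate_concaveOn`), and the other condition on
`Δ` is equivalent to `F(1/(D+1)) > 0` (`rate_endpoint_pos`). Since `F(0) = 0`, there is `c > 0`
with `F(x) ≥ c x` on the whole interval, so the term for `s` is at most a constant times
`s exp (-c s)`, uniformly in `n` (`pairTerm_le`). The lower bound on `C(a n, a s)` must lose a
factor polynomial in `s` rather than in `n` for this; see `le_log_choose`.

For fixed `s` the term is `O(1/n)`, because `s + t < a s` (`pairTerm_le_div`). Dominated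
convergence for series then gives the limit zero.
-/

open Filter

/-- The binary entropy function `h(θ) = −θ·log₂θ − (1−θ)·log₂(1−θ)` (with `h(1) = 0`). -/
noncomputable def binEnt (θ : ℝ) : ℝ :=
  -(θ * Real.logb 2 θ) - (1 - θ) * Real.logb 2 (1 - θ)

/-- In the socket model, the left vertex `u` (with `a` sockets per left vertex) and the right
vertex `v` (with `Δ` sockets per right vertex) are adjacent in the bipartite multigraph
determined by the socket bijection `π`. -/
def socketAdj {N M : ℕ} (a Δ : ℕ) (π : Fin N ≃ Fin M) (u v : ℕ) : Prop :=
  ∃ k : Fin N, (k : ℕ) / a = u ∧ ((π k : ℕ)) / Δ = v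

/-- The bipartite multigraph with `n` left vertices (each with `a` sockets) and `r` right
vertices (each with `Δ` sockets) given by the socket bijection `π` is `D`-good from left to
right (with ratio `f`): every set `S` of left vertices with `|S| ≤ n/(D+1)` satisfies
`|N(S)| ≥ fD|S|`. -/
def DGoodLR (n r a Δ : ℕ) (f D : ℝ) (π : Fin (n * a) ≃ Fin (r * Δ)) : Prop :=
  ∀ S : Set ℕ, (∀ u ∈ S, u < n) → (S.ncard : ℝ) ≤ (n : ℝ) / (D + 1) →
    f * D * (S.ncard : ℝ) ≤
      (Set.ncard {v : ℕ | v < r ∧ ∃ u ∈ S, socketAdj a Δ π u v} : ℝ)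

/-! ### Counting bijections that send one prescribed set into another -/

/-- The number of bijections carrying `P` exactly onto `R` depends only on the size of `R`:
compose with a permutation carrying `R` onto `R'`. -/
lemma card_equiv_map_eq {α β : Type*} [Fintype α] [DecidableEq α] [Fintype β] [DecidableEq β]
    (P : Finset α) (R R' : Finset β) (h : R.card = R'.card) :
    (Finset.univ.filter (fun π : α ≃ β => P.map π.toEmbedding = R)).card =
      (Finset.univ.filter (fun π : α ≃ β => P.map π.toEmbedding = R')).card := by
  have e : {x // x ∈ R} ≃ {x // x ∈ R'} := Finset.equivOfCardEq h
  set σ : Equiv.Perm β := e.extendSubtype with hσ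
  have hσR : R.map σ.toEmbedding = R' := by
    apply Finset.eq_of_subset_of_card_le
    · intro y hy
      obtain ⟨x, hx, rfl⟩ := Finset.mem_map.1 hy
      exact e.extendSubtype_mem x hx
    · simp [h]
  have hσR' : R'.map σ.symm.toEmbedding = R := by
    rw [← hσR, Finset.map_map]
    ext x; simp
  refine Finset.card_nbij' (fun π => π.trans σ) (fun π => π.trans σ.symm) ?_ ?_ ?_ ?_
  · intro π hπ
    have hπ : P.map π.toEmbedding = R := by simpa using hπ
    have : P.map (π.trans σ).toEmbedding = R' := by
      rw [Equiv.trans_toEmbedding, ← Finset.map_map, hπ, hσR]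
    simpa using this
  · intro π hπ
    have hπ : P.map π.toEmbedding = R' := by simpa using hπ
    have : P.map (π.trans σ.symm).toEmbedding = R := by
      rw [Equiv.trans_toEmbedding, ← Finset.map_map, hπ, hσR']
    simpa using this
  · intro π _
    ext x; simp
  · intro π _
    ext x; simp

/-- A uniformly random bijection sends `P` into `Q` with probability
`C(|Q|, |P|) / C(|β|, |P|)`: the image of `P` is a uniformly random set of size `|P|`. -/
lemma card_equiv_mapsTo {α β : Type*} [Fintype α] [DecidableEq α] [Fintype β] [DecidableEq β]
    (P : Finset α) (Q : Finset β) :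
    (Finset.univ.filter (fun π : α ≃ β => ∀ k ∈ P, π k ∈ Q)).card *
        (Fintype.card β).choose P.card =
      Q.card.choose P.card * Fintype.card (α ≃ β) := by
  obtain ⟨c, hc⟩ : ∃ c, ∀ R : Finset β, R.card = P.card →
      (Finset.univ.filter (fun π : α ≃ β => P.map π.toEmbedding = R)).card = c := by
    by_cases hR : ∃ R : Finset β, R.card = P.card
    · obtain ⟨R, hR⟩ := hR
      exact ⟨_, fun R' hR' => card_equiv_map_eq P R' R (hR'.trans hR.symm)⟩
    · exact ⟨0, fun R hR' => absurd ⟨R, hR'⟩ hR⟩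
  have key : ∀ Q : Finset β,
      (Finset.univ.filter (fun π : α ≃ β => ∀ k ∈ P, π k ∈ Q)).card =
        Q.card.choose P.card * c := by
    intro Q
    rw [Finset.card_eq_sum_card_fiberwise (f := fun π : α ≃ β => P.map π.toEmbedding)
      (t := Q.powersetCard P.card)]
    · rw [← Finset.card_powersetCard, ← smul_eq_mul, ← Finset.sum_const]
      refine Finset.sum_congr rfl fun R hR => ?_
      obtain ⟨hRQ, hRc⟩ := Finset.mem_powersetCard.1 hR
      rw [← hc R hRc, Finset.filter_filter]
      congr 1
      refine Finset.filter_congr fun π _ => ⟨fun h => h.2, fun h => ⟨fun k hk => ?_, h⟩⟩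
      exact hRQ (h ▸ Finset.mem_map_of_mem π.toEmbedding hk)
    · intro π hπ
      have hπ : ∀ k ∈ P, π k ∈ Q := by simpa using hπ
      refine Finset.mem_coe.2 (Finset.mem_powersetCard.2 ⟨?_, by simp⟩)
      intro y hy
      obtain ⟨x, hx, rfl⟩ := Finset.mem_map.1 hy
      exact hπ x hx
  have h1 := key Finset.univ
  simp only [Finset.mem_univ, implies_true, Finset.filter_true, Finset.card_univ] at h1
  rw [key Q, h1]
  ring

/-- The sockets of the vertices in `S`, when every vertex has `a` sockets, number `a * |S|`. -/
lemma card_sockets (n a : ℕ) (ha : 0 < a) (S : Finset ℕ) (hS : S ⊆ Finset.range n) :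
    (Finset.univ.filter (fun k : Fin (n * a) => (k : ℕ) / a ∈ S)).card = a * S.card := by
  rw [mul_comm a, ← Finset.card_range a, ← Finset.card_product, Finset.card_range]
  refine Finset.card_nbij (fun k => ((k : ℕ) / a, (k : ℕ) % a)) ?_ ?_ ?_
  · intro k hk
    have hk : (k : ℕ) / a ∈ S := by simpa using hk
    simpa using ⟨hk, Nat.mod_lt _ ha⟩
  · intro k _ l _ h
    obtain ⟨h1, h2⟩ := Prod.mk.inj h
    ext
    rw [← Nat.div_add_mod (k : ℕ) a, ← Nat.div_add_mod (l : ℕ) a, h1, h2]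
  · rintro ⟨u, b⟩ hub
    obtain ⟨hu, hb⟩ : u ∈ S ∧ b < a := by simpa using hub
    have hun : u < n := Finset.mem_range.1 (hS hu)
    have h1 : (b + a * u) / a = u := by
      rw [Nat.add_mul_div_left _ _ ha, Nat.div_eq_of_lt hb, zero_add]
    have h2 : (b + a * u) % a = b := by
      rw [Nat.add_mul_mod_self_left, Nat.mod_eq_of_lt hb]
    refine ⟨⟨b + a * u, ?_⟩, ?_, ?_⟩
    · calc b + a * u < a + a * u := by omega
        _ = (u + 1) * a := by ring
        _ ≤ n * a := Nat.mul_le_mul_right a hun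
    · simpa [h1] using hu
    · simp [h1, h2]

/-! ### The union bound -/

/-- The largest integer strictly below `f * D * s` (for positive `f * D * s`), which is the
largest size of `N(S)` for a set `S` of size `s` violating goodness. -/
noncomputable def maxNbhd (f D : ℝ) (s : ℕ) : ℕ := ⌈f * D * s⌉₊ - 1

/-- The contribution of the left sets of size `s` to the union bound: the expected number of
pairs `(S, T)` with `|S| = s`, `|T| = maxNbhd f D s` and `N(S) ⊆ T`. It is set to `0` outside the
range `1 ≤ s ≤ n / (D + 1)`, so that it can be summed over all natural numbers `s`. -/
noncomputable def pairTerm (n r a Δ : ℕ) (f D : ℝ) (s : ℕ) : ℝ :=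
  if 1 ≤ s ∧ (s : ℝ) * (D + 1) ≤ n then
    (n.choose s : ℝ) * (r.choose (maxNbhd f D s)) *
      ((Δ * maxNbhd f D s).choose (a * s)) / ((n * a).choose (a * s))
  else 0

lemma pairTerm_nonneg (n r a Δ : ℕ) (f D : ℝ) (s : ℕ) : 0 ≤ pairTerm n r a Δ f D s := by
  unfold pairTerm
  split_ifs <;> positivity

lemma le_maxNbhd {f D : ℝ} {s c : ℕ} (h : (c : ℝ) < f * D * s) : c ≤ maxNbhd f D s := by
  have := Nat.lt_ceil.2 h
  unfold maxNbhd
  omega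

lemma maxNbhd_lt {f D : ℝ} {s : ℕ} (h : 0 < f * D * s) : (maxNbhd f D s : ℝ) < f * D * s := by
  have := Nat.ceil_pos.2 h
  apply Nat.lt_ceil.1
  unfold maxNbhd
  omega

lemma le_maxNbhd_add_one {f D : ℝ} {s : ℕ} : f * D * s ≤ maxNbhd f D s + 1 := by
  refine (Nat.le_ceil _).trans ?_
  unfold maxNbhd
  norm_cast
  omega

/-- A bijection that is not good has a pair `(S, T)` of the critical sizes such that all sockets
of `S` are matched to sockets of `T`. -/
lemma exists_pair_of_not_good {n r a Δ : ℕ} {f D : ℝ} (hf : 0 < f) (hD : 1 ≤ D)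
    (hr : (r : ℝ) = f * n) (π : Fin (n * a) ≃ Fin (r * Δ)) (h : ¬ DGoodLR n r a Δ f D π) :
    ∃ S ⊆ Finset.range n, 1 ≤ S.card ∧ (S.card : ℝ) * (D + 1) ≤ n ∧
      ∃ T ∈ (Finset.range r).powersetCard (maxNbhd f D S.card),
        ∀ k : Fin (n * a), (k : ℕ) / a ∈ S → (π k : ℕ) / Δ ∈ T := by
  unfold DGoodLR at h
  push Not at h
  obtain ⟨S, hSn, hSc, hN⟩ := h
  have hfin : S.Finite := (Set.finite_lt_nat n).subset hSn
  lift S to Finset ℕ using hfin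
  rw [Set.ncard_coe_finset] at hSc hN
  have hD1 : 0 < D + 1 := by linarith
  rw [le_div_iff₀ hD1] at hSc
  have hNfin : {v : ℕ | v < r ∧ ∃ u ∈ (S : Set ℕ), socketAdj a Δ π u v}.Finite :=
    (Set.finite_lt_nat r).subset fun v hv => hv.1
  obtain ⟨N, hNeq⟩ := hNfin.exists_finset_coe
  rw [← hNeq, Set.ncard_coe_finset] at hN
  have hpos : 0 < f * D * S.card := lt_of_le_of_lt (Nat.cast_nonneg _) hN
  have hS1 : 1 ≤ S.card := by
    by_contra h0
    have : S.card = 0 := by omega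
    simp [this] at hpos
  have hNr : N ⊆ Finset.range r := by
    intro v hv
    have : v ∈ (N : Set ℕ) := hv
    rw [hNeq] at this
    exact Finset.mem_range.2 this.1
  have htr : maxNbhd f D S.card ≤ (Finset.range r).card := by
    rw [Finset.card_range]
    have h1 := maxNbhd_lt hpos
    have h2 : f * D * S.card ≤ r := by
      rw [hr, mul_assoc]
      refine mul_le_mul_of_nonneg_left ?_ hf.le
      have : (0 : ℝ) ≤ S.card := Nat.cast_nonneg _
      nlinarith
    exact_mod_cast (h1.trans_le h2).le
  obtain ⟨T, hNT, hTr, hTc⟩ := Finset.exists_subsuperset_card_eq hNr (le_maxNbhd hN) htr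
  refine ⟨S, fun u hu => Finset.mem_range.2 (hSn u hu), hS1, hSc, T,
    Finset.mem_powersetCard.2 ⟨hTr, hTc⟩, fun k hk => hNT ?_⟩
  have : (π k : ℕ) / Δ ∈ (N : Set ℕ) := by
    rw [hNeq]
    refine ⟨?_, _, hk, k, rfl, rfl⟩
    exact Nat.div_lt_of_lt_mul ((π k).2.trans_eq (mul_comm r Δ))
  exact this

/-- The union bound over all pairs `(S, T)` of the critical sizes. -/
lemma bad_prob_le {n r a Δ : ℕ} {f D : ℝ} (hf : 0 < f) (hD : 1 ≤ D) (ha : 0 < a) (hΔ : 0 < Δ)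
    (hr : (r : ℝ) = f * n) (hN : n * a = r * Δ) :
    (Set.ncard {π : Fin (n * a) ≃ Fin (r * Δ) | ¬ DGoodLR n r a Δ f D π} : ℝ) /
        (Nat.factorial (n * a)) ≤ ∑ s ∈ Finset.range (n + 1), pairTerm n r a Δ f D s := by
  classical
  have hcard : Fintype.card (Fin (n * a) ≃ Fin (r * Δ)) = Nat.factorial (n * a) := by
    rw [Fintype.card_equiv (finCongr hN), Fintype.card_fin]
  have hcardN : Fintype.card (Fin (r * Δ)) = n * a := by rw [Fintype.card_fin, hN]
  set B : Finset ℕ → Finset ℕ → Finset (Fin (n * a) ≃ Fin (r * Δ)) := fun S T =>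
    Finset.univ.filter fun π => ∀ k : Fin (n * a), (k : ℕ) / a ∈ S → (π k : ℕ) / Δ ∈ T with hB
  have hBcard : ∀ S ⊆ Finset.range n, ∀ T ⊆ Finset.range r,
      ((B S T).card : ℝ) / (Nat.factorial (n * a)) =
        ((Δ * T.card).choose (a * S.card) : ℝ) / ((n * a).choose (a * S.card)) := by
    intro S hS T hT
    have h := card_equiv_mapsTo
      (Finset.univ.filter (fun k : Fin (n * a) => (k : ℕ) / a ∈ S))
      (Finset.univ.filter (fun k : Fin (r * Δ) => (k : ℕ) / Δ ∈ T))
    rw [card_sockets n a ha S hS, card_sockets r Δ hΔ T hT, hcard, hcardN] at h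
    simp only [Finset.mem_filter, Finset.mem_univ, true_and] at h
    have hSn : S.card ≤ n := by simpa using Finset.card_le_card hS
    have hpos : 0 < (n * a).choose (a * S.card) :=
      Nat.choose_pos (by rw [mul_comm]; exact Nat.mul_le_mul_right a hSn)
    rw [div_eq_div_iff (by positivity) (by positivity)]
    simp only [hB]
    exact_mod_cast h
  set G : Finset ℕ := (Finset.range (n + 1)).filter
    (fun s => 1 ≤ s ∧ (s : ℝ) * (D + 1) ≤ n) with hG
  have hsub : {π : Fin (n * a) ≃ Fin (r * Δ) | ¬ DGoodLR n r a Δ f D π} ⊆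
      ((G.biUnion fun s => ((Finset.range n).powersetCard s).biUnion fun S =>
        ((Finset.range r).powersetCard (maxNbhd f D s)).biUnion fun T => B S T :
          Finset (Fin (n * a) ≃ Fin (r * Δ))) : Set (Fin (n * a) ≃ Fin (r * Δ))) := by
    intro π hπ
    obtain ⟨S, hS, hS1, hSD, T, hT, hk⟩ := exists_pair_of_not_good hf hD hr π hπ
    have hSn : S.card ≤ n := by simpa using Finset.card_le_card hS
    simp only [Finset.coe_biUnion, Set.mem_iUnion, Finset.mem_coe]
    refine ⟨S.card, ?_, S, Finset.mem_powersetCard.2 ⟨hS, rfl⟩, T, hT, ?_⟩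
    · rw [hG, Finset.mem_filter, Finset.mem_range]
      exact ⟨by omega, hS1, hSD⟩
    · rw [hB]
      exact Finset.mem_filter.2 ⟨Finset.mem_univ _, hk⟩
  have h1 := Set.ncard_le_ncard hsub (Finset.finite_toSet _)
  rw [Set.ncard_coe_finset] at h1
  have h2 := h1.trans (Finset.card_biUnion_le.trans (Finset.sum_le_sum fun s _ =>
    Finset.card_biUnion_le.trans (Finset.sum_le_sum fun S _ => Finset.card_biUnion_le)))
  have h3 : (Set.ncard {π : Fin (n * a) ≃ Fin (r * Δ) | ¬ DGoodLR n r a Δ f D π} : ℝ) ≤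
      ∑ s ∈ G, ∑ S ∈ (Finset.range n).powersetCard s,
        ∑ T ∈ (Finset.range r).powersetCard (maxNbhd f D s), ((B S T).card : ℝ) := by
    exact_mod_cast h2
  refine (div_le_div_of_nonneg_right h3 (Nat.cast_nonneg _)).trans (le_of_eq ?_)
  rw [Finset.sum_div, hG, Finset.sum_filter]
  refine Finset.sum_congr rfl fun s _ => ?_
  unfold pairTerm
  split_ifs with hs
  · rw [Finset.sum_div]
    have : ∀ S ∈ (Finset.range n).powersetCard s,
        (∑ T ∈ (Finset.range r).powersetCard (maxNbhd f D s), ((B S T).card : ℝ)) /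
          (Nat.factorial (n * a)) =
        (r.choose (maxNbhd f D s) : ℝ) * (((Δ * maxNbhd f D s).choose (a * s) : ℝ) /
          ((n * a).choose (a * s))) := by
      intro S hS
      obtain ⟨hSn, hSc⟩ := Finset.mem_powersetCard.1 hS
      rw [Finset.sum_div, Finset.sum_congr rfl fun T hT => ?_, Finset.sum_const,
        Finset.card_powersetCard, Finset.card_range, nsmul_eq_mul]
      obtain ⟨hTr, hTc⟩ := Finset.mem_powersetCard.1 hT
      rw [hBcard S hSn T hTr, hSc, hTc]
    rw [Finset.sum_congr rfl this, Finset.sum_const, Finset.card_powersetCard,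
      Finset.card_range, nsmul_eq_mul]
    ring
  · rfl

/-! ### Entropy bounds for binomial coefficients -/

/-- A single term of the binomial distribution with parameter `p` is at most `1`. -/
lemma log_choose_le {n k : ℕ} (hk : k ≤ n) {p : ℝ} (hp0 : 0 < p) (hp1 : p < 1) :
    Real.log (n.choose k) ≤ -(k * Real.log p + ((n : ℝ) - k) * Real.log (1 - p)) := by
  have hq : 0 < 1 - p := by linarith
  have h1 : p ^ k * (1 - p) ^ (n - k) * (n.choose k) ≤ 1 := by
    have h := add_pow p (1 - p) n
    rw [add_sub_cancel, one_pow] at h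
    refine le_of_le_of_eq ?_ h.symm
    exact Finset.single_le_sum (f := fun m => p ^ m * (1 - p) ^ (n - m) * (n.choose m : ℝ))
      (fun i _ => by positivity) (Finset.mem_range.2 (Nat.lt_succ_of_le hk))
  have hc : (0 : ℝ) < n.choose k := by exact_mod_cast Nat.choose_pos hk
  have h2 := Real.log_le_log (by positivity) h1
  rw [Real.log_mul (by positivity) hc.ne', Real.log_mul (by positivity) (by positivity),
    Real.log_pow, Real.log_pow, Real.log_one, Nat.cast_sub hk] at h2
  linarith

lemma binEntropy_eq' (p : ℝ) :
    Real.binEntropy p = -(p * Real.log p) - (1 - p) * Real.log (1 - p) := by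
  simp only [Real.binEntropy, Real.log_inv]
  ring

lemma log_choose_le_binEntropy {n k : ℕ} (hk0 : 0 < k) (hk : k < n) :
    Real.log (n.choose k) ≤ n * Real.binEntropy (k / n) := by
  have hk0' : (0 : ℝ) < k := by exact_mod_cast hk0
  have hk' : (k : ℝ) < n := by exact_mod_cast hk
  have hn : (0 : ℝ) < n := hk0'.trans hk'
  refine (log_choose_le hk.le (div_pos hk0' hn) ((div_lt_one hn).2 hk')).trans (le_of_eq ?_)
  rw [binEntropy_eq']
  field_simp
  ring

/-- If `t` lies within `1` below `p * r`, replacing `t / r` by `p` in the entropy bound for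
`C(r, t)` costs at most the odds `p / (1 - p)`, here bounded by `D`. -/
lemma log_choose_le_binEntropy_of_near {r t : ℕ} {p D : ℝ} (hp0 : 0 < p) (hp1 : p < 1)
    (hD : 1 ≤ D) (hpD : p ≤ D * (1 - p)) (ht : (t : ℝ) ≤ p * r) (ht' : p * r ≤ t + 1) :
    Real.log (r.choose t) ≤ r * Real.binEntropy p + Real.log D := by
  have hq : 0 < 1 - p := by linarith
  have htr : t ≤ r := by
    have : (t : ℝ) ≤ r := ht.trans (by nlinarith [(Nat.cast_nonneg r : (0 : ℝ) ≤ r)])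
    exact_mod_cast this
  refine (log_choose_le htr hp0 hp1).trans ?_
  have h1 : Real.log p ≤ Real.log D + Real.log (1 - p) := by
    rw [← Real.log_mul (by positivity) hq.ne']
    exact Real.log_le_log hp0 hpD
  have h2 : 0 ≤ Real.log D := Real.log_nonneg hD
  rw [binEntropy_eq']
  nlinarith [mul_nonneg (sub_nonneg.2 ht) (sub_nonneg.2 h1),
    mul_nonneg (sub_nonneg.2 ht') h2]

lemma log_choose_le_mul_binEntropy_inv {A m : ℕ} {D : ℝ} (hD : 1 ≤ D) (hm : m ≤ A)
    (hA : (A : ℝ) ≤ D * m) : Real.log (A.choose m) ≤ D * m * Real.binEntropy (1 / D) := by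
  rcases hD.eq_or_lt with rfl | hD
  · have : A ≤ m := by
      rw [one_mul] at hA
      exact_mod_cast hA
    simp [le_antisymm this hm]
  · have hD0 : 0 < D := by linarith
    have hp1 : 1 / D < 1 := (div_lt_one hD0).2 hD
    refine (log_choose_le hm (by positivity) hp1).trans ?_
    have h1 : Real.log (1 - 1 / D) ≤ 0 :=
      Real.log_nonpos (by linarith) (by linarith [one_div_pos.2 hD0])
    have h2 : D * m * Real.binEntropy (1 / D) =
        -(m * Real.log (1 / D) + (D * m - m) * Real.log (1 - 1 / D)) := by
      rw [binEntropy_eq']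
      field_simp
      ring
    rw [h2]
    nlinarith

lemma log_succ_sub_log_le {k : ℕ} (hk : 0 < k) :
    Real.log (k + 1) - Real.log k ≤ 1 / k := by
  have hk' : (0 : ℝ) < k := by exact_mod_cast hk
  rw [← Real.log_div (by positivity) hk'.ne']
  refine (Real.log_le_sub_one_of_pos (by positivity)).trans (le_of_eq ?_)
  field_simp
  ring

lemma le_log_succ_sub_log {k : ℕ} (hk : 0 < k) :
    1 / ((k : ℝ) + 1) ≤ Real.log (k + 1) - Real.log k := by
  have hk' : (0 : ℝ) < k := by exact_mod_cast hk
  have h := Real.log_le_sub_one_of_pos (x := (k : ℝ) / (k + 1)) (by positivity)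
  rw [Real.log_div hk'.ne' (by positivity)] at h
  have : (k : ℝ) / (k + 1) - 1 = -(1 / ((k : ℝ) + 1)) := by
    field_simp
    ring
  linarith

/-- `N (N-1) ⋯ (N-m+1) ≥ N ^ N / (N-m) ^ (N-m) * e ^ (-m)`, in logarithmic form. -/
lemma le_log_descFactorial (N m : ℕ) (hm : m ≤ N) :
    N * Real.log N - ((N : ℝ) - m) * Real.log ((N : ℝ) - m) - m ≤
      Real.log (N.descFactorial m) := by
  induction m with
  | zero => simp
  | succ m ih =>
    have ih := ih (by omega)
    obtain ⟨k, rfl⟩ : ∃ k, N = m + 1 + k := ⟨N - (m + 1), by omega⟩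
    have hpos : (0 : ℝ) < (m + 1 + k).descFactorial m := by
      exact_mod_cast Nat.descFactorial_pos.2 (by omega)
    have e1 : m + 1 + k - m = k + 1 := by omega
    rw [Nat.descFactorial_succ, e1, Nat.cast_mul, Real.log_mul (by positivity) hpos.ne']
    push_cast at ih ⊢
    have e2 : (m : ℝ) + 1 + k - m = k + 1 := by ring
    have e3 : (m : ℝ) + 1 + k - (m + 1) = k := by ring
    rw [e2] at ih
    rw [e3]
    have key : (k : ℝ) * Real.log (k + 1) ≤ k * Real.log k + 1 := by
      rcases Nat.eq_zero_or_pos k with rfl | hk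
      · simp
      · have hk' : (0 : ℝ) < k := by exact_mod_cast hk
        have := log_succ_sub_log_le hk
        rw [le_div_iff₀ hk'] at this
        linarith
    linarith

/-- `m! ≤ m ^ (m+1) * e ^ (1-m)`, in logarithmic form. -/
lemma log_factorial_le (m : ℕ) (hm : 1 ≤ m) :
    Real.log (Nat.factorial m) ≤ ((m : ℝ) + 1) * Real.log m + 1 - m := by
  induction m, hm using Nat.le_induction with
  | base => simp
  | succ m hm ih =>
    rw [Nat.factorial_succ, Nat.cast_mul, Real.log_mul (by positivity) (by positivity)]
    push_cast
    have h := le_log_succ_sub_log (k := m) (by omega)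
    rw [div_le_iff₀ (by positivity)] at h
    linarith

/-- A lower bound for `C(N, m)` whose loss is polynomial in `m` alone, uniformly in `N`. -/
lemma le_log_choose {N m : ℕ} (hm0 : 1 ≤ m) (hm : m < N) :
    N * Real.binEntropy (m / N) - Real.log m - 1 ≤ Real.log (N.choose m) := by
  have hm0' : (0 : ℝ) < m := by exact_mod_cast hm0
  have hm' : (m : ℝ) < N := by exact_mod_cast hm
  have hN : (0 : ℝ) < N := hm0'.trans hm'
  have hc : (0 : ℝ) < N.choose m := by exact_mod_cast Nat.choose_pos hm.le
  have h1 := le_log_descFactorial N m hm.le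
  have h2 := log_factorial_le m hm0
  rw [Nat.descFactorial_eq_factorial_mul_choose, Nat.cast_mul,
    Real.log_mul (by positivity) hc.ne'] at h1
  have h3 : N * Real.binEntropy (m / N) =
      N * Real.log N - ((N : ℝ) - m) * Real.log ((N : ℝ) - m) - m * Real.log m := by
    have e : 1 - (m : ℝ) / N = (N - m) / N := by field_simp
    rw [binEntropy_eq', e, Real.log_div hm0'.ne' hN.ne', Real.log_div (by linarith) hN.ne']
    field_simp
    ring
  linarith

/-! ### The rate function -/

/-- The exponential rate, in nats: left sets of size `x n` contribute at most
`exp (-n * rate a f D x)` to the union bound, up to factors polynomial in `α n`. -/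
noncomputable def rate (a f D x : ℝ) : ℝ :=
  (a - 1) * Real.binEntropy x - f * Real.binEntropy (D * x) -
    a * D * x * Real.binEntropy (1 / D)

/-- Strict concavity of entropy makes `D * h(1/D)` strictly increasing in `D`. -/
lemma mul_binEntropy_lt {D : ℝ} (hD : 1 ≤ D) :
    D * Real.binEntropy (1 / D) < (D + 1) * Real.binEntropy (1 / (D + 1)) := by
  have hD0 : 0 < D := by linarith
  obtain ⟨-, hconc⟩ := Real.strictConcave_binEntropy
  have hx : 1 / D ∈ Set.Icc (0 : ℝ) 1 := ⟨by positivity, (div_le_one hD0).2 hD⟩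
  have hy : (0 : ℝ) ∈ Set.Icc (0 : ℝ) 1 := ⟨le_rfl, zero_le_one⟩
  have hl : 0 < D / (D + 1) := by positivity
  have hl' : 0 < 1 / (D + 1) := by positivity
  have h := hconc hx hy (by positivity) hl hl' (by field_simp)
  simp only [smul_eq_mul, Real.binEntropy_zero, mul_zero, add_zero] at h
  have e : D / (D + 1) * (1 / D) = 1 / (D + 1) := by field_simp
  rw [e, div_mul_eq_mul_div, div_lt_iff₀ (by positivity)] at h
  linarith

lemma binEnt_eq (x : ℝ) : binEnt x = Real.binEntropy x / Real.log 2 := by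
  rw [binEnt, binEntropy_eq', Real.logb, Real.logb]
  ring

/-- The first lower bound on `Δ` says exactly that the rate is positive at the right endpoint
`1 / (D + 1)`, where `h(D x) = h(x)`. -/
lemma rate_endpoint_pos {f D Δ a : ℝ} (hf : 0 < f) (hD : 1 ≤ D) (ha : a = f * Δ)
    (h : (1 + 1 / f) * (1 - D * binEnt (1 / D) / ((D + 1) * binEnt (1 / (D + 1))))⁻¹ < Δ) :
    0 < rate a f D (1 / (D + 1)) := by
  have hD1 : 0 < D + 1 := by linarith
  have hlt := mul_binEntropy_lt hD
  have hlog : 0 < Real.log 2 := Real.log_pos (by norm_num)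
  have hH : 0 < Real.binEntropy (1 / (D + 1)) :=
    Real.binEntropy_pos (by positivity) ((div_lt_one hD1).2 (by linarith))
  have hρ : D * binEnt (1 / D) / ((D + 1) * binEnt (1 / (D + 1))) =
      D * Real.binEntropy (1 / D) / ((D + 1) * Real.binEntropy (1 / (D + 1))) := by
    rw [binEnt_eq, binEnt_eq]
    field_simp
  rw [hρ] at h
  have hc : 0 < 1 - D * Real.binEntropy (1 / D) / ((D + 1) * Real.binEntropy (1 / (D + 1))) := by
    rw [sub_pos, div_lt_one (by positivity)]
    exact hlt
  rw [← div_eq_mul_inv, div_lt_iff₀ hc] at h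
  have hsymm : Real.binEntropy (D * (1 / (D + 1))) = Real.binEntropy (1 / (D + 1)) := by
    rw [← Real.binEntropy_one_sub]
    congr 1
    field_simp
    ring
  have e : rate a f D (1 / (D + 1)) = f * Real.binEntropy (1 / (D + 1)) *
      (Δ * (1 - D * Real.binEntropy (1 / D) / ((D + 1) * Real.binEntropy (1 / (D + 1)))) -
        (1 + 1 / f)) := by
    rw [rate, hsymm, ha]
    field_simp
    ring
  rw [e]
  have : 0 < Δ * (1 - D * Real.binEntropy (1 / D) /
      ((D + 1) * Real.binEntropy (1 / (D + 1)))) - (1 + 1 / f) := by linarith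
  positivity

/-- The second lower bound on `Δ` makes the rate concave on `[0, 1 / (D + 1)]`: up to a positive
factor its second derivative is affine in `x`, and it is nonpositive at both endpoints. -/
lemma rate_concaveOn {f D a : ℝ} (hf : 0 < f) (hD : 1 ≤ D) (ha : f * D ^ 2 + 1 < a) :
    ConcaveOn ℝ (Set.Icc 0 (1 / (D + 1))) (rate a f D) := by
  have hD0 : 0 < D := by linarith
  have hD1 : 0 < D + 1 := by linarith
  have hcont : Continuous (rate a f D) := by
    unfold rate
    fun_prop
  have hbd : ∀ x ∈ interior (Set.Icc (0 : ℝ) (1 / (D + 1))),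
      0 < x ∧ 0 < 1 - x ∧ 0 < 1 - D * x ∧ (D + 1) * x < 1 := by
    intro x hx
    rw [interior_Icc] at hx
    obtain ⟨h0, h1⟩ := hx
    rw [lt_div_iff₀ hD1] at h1
    refine ⟨h0, ?_, ?_, by linarith⟩ <;> nlinarith
  refine concaveOn_of_hasDerivWithinAt2_nonpos (convex_Icc _ _) hcont.continuousOn
    (f' := fun x => (a - 1) * (Real.log (1 - x) - Real.log x) -
      f * ((Real.log (1 - D * x) - Real.log (D * x)) * D) - a * D * Real.binEntropy (1 / D))
    (f'' := fun x => (a - 1) * (-1 / (1 - x) - 1 / x) -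
      f * ((-D / (1 - D * x) - D / (D * x)) * D)) ?_ ?_ ?_
  · intro x hx
    obtain ⟨h0, h1, h2, h3⟩ := hbd x hx
    have hDx : 0 < D * x := by positivity
    have d1 := (Real.hasDerivAt_binEntropy (p := x) h0.ne' (by linarith)).const_mul (a - 1)
    have dl : HasDerivAt (fun x : ℝ => D * x) D x := by
      simpa using (hasDerivAt_id x).const_mul D
    have d2 := ((Real.hasDerivAt_binEntropy (p := D * x) hDx.ne'
      (by linarith)).comp x dl).const_mul f
    have d3 : HasDerivAt (fun x : ℝ => a * D * x * Real.binEntropy (1 / D))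
        (a * D * Real.binEntropy (1 / D)) x := by
      simpa using ((hasDerivAt_id x).const_mul (a * D)).mul_const (Real.binEntropy (1 / D))
    exact ((d1.sub d2).sub d3).hasDerivWithinAt
  · intro x hx
    obtain ⟨h0, h1, h2, h3⟩ := hbd x hx
    have hDx : 0 < D * x := by positivity
    have dl : HasDerivAt (fun x : ℝ => D * x) D x := by
      simpa using (hasDerivAt_id x).const_mul D
    have e1 : HasDerivAt (fun x : ℝ => Real.log (1 - x)) (-1 / (1 - x)) x :=
      ((hasDerivAt_id x).const_sub 1).log h1.ne'
    have e2 : HasDerivAt (fun x : ℝ => Real.log x) (1 / x) x := by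
      simpa using Real.hasDerivAt_log h0.ne'
    have e3 : HasDerivAt (fun x : ℝ => Real.log (1 - D * x)) (-D / (1 - D * x)) x :=
      (dl.const_sub 1).log h2.ne'
    have e4 : HasDerivAt (fun x : ℝ => Real.log (D * x)) (D / (D * x)) x := dl.log hDx.ne'
    exact ((((e1.sub e2).const_mul (a - 1)).sub
      (((e3.sub e4).mul_const D).const_mul f)).sub_const _).hasDerivWithinAt
  · intro x hx
    obtain ⟨h0, h1, h2, h3⟩ := hbd x hx
    have e : (a - 1) * (-1 / (1 - x) - 1 / x) - f * ((-D / (1 - D * x) - D / (D * x)) * D) =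
        -((a - 1) * (1 - D * x) - f * D * (1 - x)) / (x * (1 - x) * (1 - D * x)) := by
      have h2' : 1 - x * D ≠ 0 := by rw [mul_comm]; exact h2.ne'
      field_simp
      ring
    have hpos : 0 ≤ (a - 1) * (1 - D * x) - f * D * (1 - x) := by
      have h4 : f * D ^ 2 * (1 - D * x) ≤ (a - 1) * (1 - D * x) :=
        mul_le_mul_of_nonneg_right (by linarith) h2.le
      have h5 : 0 ≤ f * D * (D * (1 - D * x) - (1 - x)) := by
        refine mul_nonneg (by positivity) ?_
        nlinarith [mul_nonneg (sub_nonneg.2 hD) (sub_nonneg.2 h3.le)]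
      nlinarith
    show (a - 1) * (-1 / (1 - x) - 1 / x) - f * ((-D / (1 - D * x) - D / (D * x)) * D) ≤ 0
    rw [e]
    exact div_nonpos_of_nonpos_of_nonneg (by linarith) (by positivity)

/-- By concavity, the rate lies above its chord through the origin. -/
lemma exists_rate_ge {f D Δ a : ℝ} (hf : 0 < f) (hD : 1 ≤ D) (ha : a = f * Δ)
    (h1 : (1 + 1 / f) * (1 - D * binEnt (1 / D) / ((D + 1) * binEnt (1 / (D + 1))))⁻¹ < Δ)
    (h2 : f * D ^ 2 + 1 < a) :
    ∃ c > 0, ∀ x, 0 ≤ x → x * (D + 1) ≤ 1 → c * x ≤ rate a f D x := by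
  have hD1 : 0 < D + 1 := by linarith
  have hpos := rate_endpoint_pos hf hD ha h1
  obtain ⟨-, hconc⟩ := rate_concaveOn hf hD h2
  refine ⟨(D + 1) * rate a f D (1 / (D + 1)), by positivity, fun x hx hx1 => ?_⟩
  have hy : 1 / (D + 1) ∈ Set.Icc (0 : ℝ) (1 / (D + 1)) := ⟨by positivity, le_rfl⟩
  have hz : (0 : ℝ) ∈ Set.Icc (0 : ℝ) (1 / (D + 1)) := ⟨le_rfl, by positivity⟩
  have hl : 0 ≤ x * (D + 1) := by positivity
  have h := hconc hy hz hl (sub_nonneg.2 hx1) (by ring)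
  have h0 : rate a f D 0 = 0 := by simp [rate]
  have e : x * (D + 1) * (1 / (D + 1)) = x := by field_simp
  simp only [smul_eq_mul, h0, mul_zero, add_zero, e] at h
  linarith

/-! ### Estimates for the terms of the union bound -/

/-- A geometrically decaying bound on the terms of the union bound, uniform in `n`. -/
lemma pairTerm_le {n r a Δ : ℕ} {f D c : ℝ} (hf : 0 < f) (hD : 1 ≤ D) (ha : (a : ℝ) = f * Δ)
    (ha0 : 0 < a) (hr : (r : ℝ) = f * n)
    (hc : ∀ x, 0 ≤ x → x * (D + 1) ≤ 1 → c * x ≤ rate a f D x) (s : ℕ) :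
    pairTerm n r a Δ f D s ≤ D * Real.exp 1 * a * (s * Real.exp (-c) ^ s) := by
  have hD0 : 0 < D := by linarith
  have hD1 : 0 < D + 1 := by linarith
  unfold pairTerm
  split_ifs with hs
  swap
  · positivity
  obtain ⟨hs1, hsD⟩ := hs
  set t := maxNbhd f D s with ht
  have hs0 : (0 : ℝ) < s := by exact_mod_cast hs1
  have ha0' : (0 : ℝ) < a := by exact_mod_cast ha0
  have hsn' : (s : ℝ) < n := by nlinarith
  have hsn : s < n := by exact_mod_cast hsn'
  have hn : (0 : ℝ) < n := hs0.trans hsn'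
  have htl : (t : ℝ) < f * D * s := maxNbhd_lt (by positivity)
  have htu : f * D * s ≤ t + 1 := le_maxNbhd_add_one
  -- If `T` has fewer sockets than `S`, then `N(S) ⊆ T` is impossible and the term vanishes.
  by_cases hA : a * s ≤ Δ * t
  swap
  · rw [Nat.choose_eq_zero_of_lt (not_le.1 hA)]
    simp only [Nat.cast_zero, mul_zero, zero_div]
    positivity
  set x : ℝ := (s : ℝ) / n with hx
  have hx0 : 0 < x := div_pos hs0 hn
  have hx1 : x * (D + 1) ≤ 1 := by
    rw [hx, div_mul_eq_mul_div, div_le_one hn]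
    exact hsD
  have hxn : x * n = s := div_mul_cancel₀ _ hn.ne'
  have b1 : Real.log (n.choose s) ≤ n * Real.binEntropy x := log_choose_le_binEntropy hs1 hsn
  have b2 : Real.log (r.choose t) ≤ r * Real.binEntropy (D * x) + Real.log D := by
    have e : D * x * r = f * D * s := by rw [hr, ← hxn]; ring
    refine log_choose_le_binEntropy_of_near (by positivity) (by nlinarith) hD ?_ ?_ ?_
    · nlinarith
    · rw [e]; exact htl.le
    · rw [e]; exact htu
  have b3 : Real.log ((Δ * t).choose (a * s)) ≤
      D * (a * s) * Real.binEntropy (1 / D) := by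
    have h := log_choose_le_mul_binEntropy_inv (D := D) hD hA (by
      push_cast
      rw [ha]
      have : (Δ : ℝ) * t ≤ Δ * (f * D * s) :=
        mul_le_mul_of_nonneg_left htl.le (Nat.cast_nonneg _)
      linarith)
    push_cast at h
    exact h
  have has : a * s < n * a := by rw [mul_comm n]; exact Nat.mul_lt_mul_of_pos_left hsn ha0
  have b4 : (n * a) * Real.binEntropy x - Real.log (a * s) - 1 ≤
      Real.log ((n * a).choose (a * s)) := by
    have h := le_log_choose (Nat.mul_pos ha0 hs1) has
    push_cast at h
    have e : (a : ℝ) * s / (n * a) = x := by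
      rw [hx]
      field_simp
    rw [e] at h
    exact h
  have htr : t ≤ r := by
    have : (t : ℝ) ≤ r := by
      rw [hr]
      refine htl.le.trans ?_
      rw [mul_assoc]
      exact mul_le_mul_of_nonneg_left (by nlinarith) hf.le
    exact_mod_cast this
  have p1 : (0 : ℝ) < n.choose s := by exact_mod_cast Nat.choose_pos hsn.le
  have p2 : (0 : ℝ) < r.choose t := by exact_mod_cast Nat.choose_pos htr
  have p3 : (0 : ℝ) < (Δ * t).choose (a * s) := by exact_mod_cast Nat.choose_pos hA
  have p4 : (0 : ℝ) < (n * a).choose (a * s) := by exact_mod_cast Nat.choose_pos has.le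
  -- The entropy terms of `b1`, ..., `b4` add up to exactly `-n * rate a f D x`.
  have hrate := mul_le_mul_of_nonneg_left (hc x hx0.le hx1) hn.le
  have e1 : (n : ℝ) * (c * x) = c * s := by rw [← hxn]; ring
  have e2 : (n : ℝ) * rate a f D x = (n * a) * Real.binEntropy x - n * Real.binEntropy x -
      r * Real.binEntropy (D * x) - D * (a * s) * Real.binEntropy (1 / D) := by
    rw [rate, hr, ← hxn]
    ring
  rw [e1, e2] at hrate
  rw [← Real.log_le_log_iff (by positivity) (by positivity),
    Real.log_div (by positivity) p4.ne', Real.log_mul (by positivity) p3.ne',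
    Real.log_mul p1.ne' p2.ne', Real.log_mul (by positivity) (by positivity),
    Real.log_mul (by positivity) (by positivity), Real.log_mul (by positivity) (by positivity),
    Real.log_mul (by positivity) (by positivity), Real.log_pow, Real.log_exp, Real.log_exp]
  rw [Real.log_mul ha0'.ne' hs0.ne'] at b4
  linarith

/-- For fixed `s` the term is `O(1 / n)`, because `s + maxNbhd f D s < a * s`. -/
lemma pairTerm_le_div {n r a Δ : ℕ} {f D : ℝ} (hf : 0 < f) (hD : 1 ≤ D)
    (ha0 : 0 < a) (hr : (r : ℝ) = f * n) (haD : f * D ^ 2 + 1 < a) (s : ℕ)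
    (hn : 2 * (a * s) + 1 ≤ n) :
    pairTerm n r a Δ f D s ≤
      (f ^ (maxNbhd f D s) * ((Δ * maxNbhd f D s).choose (a * s)) * 2 ^ (a * s) *
        (Nat.factorial (a * s))) / n := by
  have hD0 : 0 < D := by linarith
  unfold pairTerm
  split_ifs with hs
  swap
  · positivity
  obtain ⟨hs1, hsD⟩ := hs
  set t := maxNbhd f D s with ht
  set m := a * s with hm
  have hs0 : (0 : ℝ) < s := by exact_mod_cast hs1
  have htl : (t : ℝ) < f * D * s := maxNbhd_lt (by positivity)
  have hn0 : (1 : ℝ) ≤ n := by exact_mod_cast (by omega : 1 ≤ n)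
  have hstm : s + t + 1 ≤ m := by
    have h1 : f * D ≤ f * D ^ 2 := mul_le_mul_of_nonneg_left (by nlinarith) hf.le
    have : (s : ℝ) + t < m := by
      rw [hm]
      push_cast
      nlinarith
    exact_mod_cast this
  have b1 : (n.choose s : ℝ) ≤ (n : ℝ) ^ s := by exact_mod_cast Nat.choose_le_pow n s
  have b2 : (r.choose t : ℝ) ≤ (f * n) ^ t := by
    rw [← hr]
    exact_mod_cast Nat.choose_le_pow r t
  have b3 : ((n : ℝ) / 2) ^ m / (Nat.factorial m) ≤ (n * a).choose m := by
    refine le_trans ?_ (Nat.pow_le_choose (α := ℝ) m (n * a))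
    refine div_le_div_of_nonneg_right (pow_le_pow_left₀ (by positivity) ?_ m) (by positivity)
    have h1 : n ≤ n * a := Nat.le_mul_of_pos_right n ha0
    have h2 : n ≤ 2 * (n * a + 1 - m) := by omega
    have h3 : (n : ℝ) ≤ 2 * ((n * a + 1 - m : ℕ) : ℝ) := by exact_mod_cast h2
    linarith
  have hpos : 0 < ((n : ℝ) / 2) ^ m / (Nat.factorial m) := by positivity
  calc (n.choose s : ℝ) * (r.choose t) * ((Δ * t).choose m) / ((n * a).choose m)
      ≤ (n : ℝ) ^ s * (f * n) ^ t * ((Δ * t).choose m) /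
          (((n : ℝ) / 2) ^ m / (Nat.factorial m)) := by gcongr
    _ = f ^ t * ((Δ * t).choose m) * 2 ^ m * (Nat.factorial m) * (n ^ (s + t) / n ^ m) := by
        rw [mul_pow, div_pow, pow_add]
        field_simp
    _ ≤ f ^ t * ((Δ * t).choose m) * 2 ^ m * (Nat.factorial m) * (1 / n) := by
        refine mul_le_mul_of_nonneg_left ?_ (by positivity)
        rw [div_le_div_iff₀ (by positivity) (by positivity), one_mul, ← pow_succ]
        exact pow_le_pow_right₀ hn0 hstm
    _ = _ := by rw [mul_one_div]

/-! ### The limit -/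

/-- **Random bipartite graphs are expanders (left to right).**  Let `f > 0` be rational and
`Δ` a positive integer with `fΔ = a ∈ ℕ`.  For `n` with `fn ∈ ℕ` (i.e. `r n = fn`), consider
the uniformly random socket bijection between the `fΔn` left sockets and the `fΔn` right
sockets.  If `D ≥ 1` and
`Δ > max{(1 + 1/f)·(1 − D·h(1/D)/((D+1)·h(1/(D+1))))⁻¹, D² + 1/f}`, then the probability
that the resulting multigraph is not `D`-good from left to right tends to `0`
(the total number of bijections being `(fΔn)! = (n·a)!`). -/
theorem random_bipartite_graph_DGoodLR
    (f : ℚ) (hf : 0 < f) (Δ : ℕ) (hΔ : 0 < Δ) (a : ℕ) (ha : (a : ℚ) = f * Δ)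
    (D : ℝ) (hD : 1 ≤ D)
    (hΔbig : (Δ : ℝ) >
      max ((1 + 1 / (f : ℝ)) *
            (1 - D * binEnt (1 / D) / ((D + 1) * binEnt (1 / (D + 1))))⁻¹)
          (D ^ 2 + 1 / (f : ℝ)))
    (r : ℕ → ℕ) :
    Tendsto
      (fun n : ℕ =>
        (Set.ncard {π : Fin (n * a) ≃ Fin (r n * Δ) |
            ¬ DGoodLR n (r n) a Δ (f : ℝ) D π} : ℝ) / (Nat.factorial (n * a)))
      (atTop ⊓ Filter.principal {n : ℕ | (r n : ℚ) = f * n}) (nhds 0) := by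
  have hfR : (0 : ℝ) < f := by exact_mod_cast hf
  have haR : (a : ℝ) = (f : ℝ) * Δ := by exact_mod_cast ha
  have hΔR : (0 : ℝ) < Δ := by exact_mod_cast hΔ
  have ha0 : 0 < a := by
    have : (0 : ℝ) < a := by rw [haR]; positivity
    exact_mod_cast this
  have h1 := (le_max_left _ _).trans_lt hΔbig
  have haD : (f : ℝ) * D ^ 2 + 1 < a := by
    have h2 := mul_lt_mul_of_pos_left ((le_max_right _ _).trans_lt hΔbig) hfR
    rw [mul_add, mul_one_div, div_self hfR.ne'] at h2
    rw [haR]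
    exact h2
  obtain ⟨c, hc0, hc⟩ := exists_rate_ge hfR hD haR h1 haD
  have hev : ∀ᶠ n : ℕ in atTop ⊓ Filter.principal {n : ℕ | (r n : ℚ) = f * n},
      (r n : ℝ) = (f : ℝ) * n := by
    filter_upwards [mem_inf_of_right (mem_principal_self _)] with n hn
    have hn : (r n : ℚ) = f * n := hn
    exact_mod_cast hn
  -- Dominated convergence for series over `s`: each term tends to zero as `n` grows, and all are
  -- below a summable sequence not depending on `n`.
  have hsum : Summable fun s : ℕ => D * Real.exp 1 * a * (s * Real.exp (-c) ^ s) := by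
    refine Summable.mul_left _ ?_
    have := summable_pow_mul_geometric_of_norm_lt_one 1 (r := Real.exp (-c)) (by
      rw [Real.norm_eq_abs, abs_of_pos (Real.exp_pos _)]
      rw [← Real.exp_zero]
      exact Real.exp_lt_exp.2 (by linarith))
    simpa using this
  have hterm : Tendsto (fun n : ℕ => ∑' s, pairTerm n (r n) a Δ f D s)
      (atTop ⊓ Filter.principal {n : ℕ | (r n : ℚ) = f * n}) (nhds (∑' _ : ℕ, (0 : ℝ))) := by
    refine tendsto_tsum_of_dominated_convergence hsum (fun s => ?_) ?_
    · refine squeeze_zero' (Eventually.of_forall fun n => pairTerm_nonneg _ _ _ _ _ _ _) ?_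
        ((tendsto_const_div_atTop_nhds_zero_nat (((f : ℝ) ^ (maxNbhd f D s) *
          ((Δ * maxNbhd f D s).choose (a * s)) * 2 ^ (a * s) *
            (Nat.factorial (a * s))))).mono_left inf_le_left)
      filter_upwards [hev, mem_inf_of_left (eventually_ge_atTop (2 * (a * s) + 1))] with n hr hn
      exact pairTerm_le_div hfR hD ha0 hr haD s hn
    · filter_upwards [hev] with n hr s
      rw [Real.norm_eq_abs, abs_of_nonneg (pairTerm_nonneg _ _ _ _ _ _ _)]
      exact pairTerm_le hfR hD haR ha0 hr hc s
  rw [tsum_zero] at hterm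
  refine squeeze_zero' (Eventually.of_forall fun n => by positivity) ?_ hterm
  filter_upwards [hev] with n hr
  have hN : n * a = r n * Δ := by
    have : (n : ℝ) * a = r n * Δ := by rw [hr, haR]; ring
    exact_mod_cast this
  refine (bad_prob_le hfR hD ha0 hΔ hr hN).trans ?_
  have hS : Summable fun s => pairTerm n (r n) a Δ f D s :=
    hsum.of_nonneg_of_le (fun s => pairTerm_nonneg _ _ _ _ _ _ _)
      fun s => pairTerm_le hfR hD haR ha0 hr hc s
  exact hS.sum_le_tsum _ fun s _ => pairTerm_nonneg _ _ _ _ _ _ _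
end
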